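/- arXiv:1106.3098 — 4 statements merged into one kernel-verified Lean document; each statement's English description precedes it below -/
import Mathlib

section
/- For every integer r ≥ 2 there exists a constant c > 0 such that the following holds: for all integers n ≥ 2 and d with 1 ≤ d and d < n/(log n)^{3r²}, every (r+1)-graph H on n vertices with maximum r-degree at most d satisfies α(H) ≥ c·((n/d)·log(n/d))^{1/r}. -/
open Finset
open scoped Classical

/-- `Z` is an independent set of the hypergraph `H`: it contains no edge. -/
def IsIndep {V : Type*} [DecidableEq V] (H : Finset (Finset V)) (Z : Finset V) : Prop :=
  ∀ e ∈ H, ¬ e ⊆ Z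

/-- The independence number of a hypergraph on a finite vertex type. -/
noncomputable def indepNum {V : Type*} [Fintype V] [DecidableEq V]
    (H : Finset (Finset V)) : ℕ :=
  ((Finset.univ : Finset V).powerset.filter (fun Z => IsIndep H Z)).sup Finset.card

/-- `H` has maximum `r`-degree at most `d`: every `r`-element vertex set is
contained in at most `d` edges. -/
def maxDegLe {V : Type*} [DecidableEq V] (r : ℕ) (H : Finset (Finset V)) (d : ℕ) : Prop :=
  ∀ S : Finset V, S.card = r → (H.filter (fun e => S ⊆ e)).card ≤ d


/-- Averages over a Boolean cube. -/
lemma kmv_bool_cube {V ι : Type*} [DecidableEq V] [DecidableEq ι] (r K : ℕ) (hr : 1 ≤ r)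
    (E : Finset ι) (l : ι → Finset V) (hl : ∀ e ∈ E, (l e).card = r) (Y : Finset V) :
    (K : ℝ) / 2 ^ r * 2 ^ Y.card ≤ ∑ T ∈ Y.powerset,
      (((E.filter (fun e => l e ⊆ T)).card : ℝ) +
        K * 2 ^ K * (if (E.filter (fun e => l e ⊆ T)).card = 0 then 1 else 0)) := by
  set E' := E.filter (fun e => l e ⊆ Y) with hE'
  have h2r : (1 : ℝ) ≤ 2 ^ r := one_le_pow₀ (by norm_num)
  by_cases hK : E'.card ≤ K
  · have hne : ∀ e ∈ E', ∃ x, x ∈ l e := by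
      intro e he
      have : (l e).card = r := hl e (Finset.mem_filter.1 he).1
      exact Finset.card_pos.1 (by omega)
    choose x hx using hne
    set X := E'.attach.image (fun e => x e.1 e.2) with hX
    have hXc : X.card ≤ K := le_trans Finset.card_image_le (by rw [Finset.card_attach]; exact hK)
    have key : ∀ T ∈ (Y \ X).powerset, (E.filter (fun e => l e ⊆ T)).card = 0 := by
      intro T hT
      rw [Finset.card_eq_zero, Finset.filter_eq_empty_iff]
      intro e he hle
      have hTY := Finset.mem_powerset.1 hT
      have heE : e ∈ E' :=
        Finset.mem_filter.2 ⟨he, (hle.trans hTY).trans Finset.sdiff_subset⟩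
      have h1 := hTY (hle (hx e heE))
      exact (Finset.mem_sdiff.1 h1).2 (Finset.mem_image_of_mem (fun e : E' => x e.1 e.2)
        (Finset.mem_attach _ ⟨e, heE⟩))
    calc (K : ℝ) / 2 ^ r * 2 ^ Y.card ≤ K * 2 ^ Y.card := by
          gcongr
          exact div_le_self (by positivity) h2r
      _ ≤ K * (2 ^ (K + (Y \ X).card)) := by
          gcongr
          · norm_num
          · have := Finset.le_card_sdiff X Y
            omega
      _ = ∑ T ∈ (Y \ X).powerset, (K : ℝ) * 2 ^ K := by
          rw [Finset.sum_const, Finset.card_powerset, nsmul_eq_mul]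
          push_cast
          ring
      _ ≤ ∑ T ∈ (Y \ X).powerset, (((E.filter (fun e => l e ⊆ T)).card : ℝ) +
        K * 2 ^ K * (if (E.filter (fun e => l e ⊆ T)).card = 0 then 1 else 0)) := by
          apply Finset.sum_le_sum
          intro T hT
          rw [key T hT]
          simp
      _ ≤ _ := by
          apply Finset.sum_le_sum_of_subset_of_nonneg
          · exact Finset.powerset_mono.2 Finset.sdiff_subset
          · intro T _ _
            positivity
  · push Not at hK
    calc (K : ℝ) / 2 ^ r * 2 ^ Y.card ≤ E'.card / 2 ^ r * 2 ^ Y.card := by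
          gcongr
      _ = ∑ e ∈ E', (2 : ℝ) ^ Y.card / 2 ^ r := by
          rw [Finset.sum_const, nsmul_eq_mul]; ring
      _ = ∑ e ∈ E', ∑ T ∈ Y.powerset, (if l e ⊆ T then (1 : ℝ) else 0) := by
          apply Finset.sum_congr rfl
          intro e he
          have h1 := Finset.mem_filter.1 he
          rw [Finset.sum_boole]
          have : Y.powerset.filter (fun T => l e ⊆ T) = Finset.Icc (l e) Y := by
            ext T; simp [and_comm]
          rw [this, Finset.card_Icc_finset h1.2, hl e h1.1]
          have h2 := Finset.card_le_card h1.2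
          rw [hl e h1.1] at h2
          push_cast
          rw [div_eq_iff (by positivity), ← pow_add]
          congr 1; omega
      _ = ∑ T ∈ Y.powerset, ∑ e ∈ E', (if l e ⊆ T then (1 : ℝ) else 0) := Finset.sum_comm
      _ ≤ _ := by
          apply Finset.sum_le_sum
          intro T hT
          rw [Finset.sum_boole]
          have h1 : (E'.filter (fun e => l e ⊆ T)).card ≤ (E.filter (fun e => l e ⊆ T)).card := by
            apply Finset.card_le_card
            exact Finset.filter_subset_filter _ (Finset.filter_subset _ _)
          have h2 : ((E'.filter (fun e => l e ⊆ T)).card : ℝ) ≤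
            (E.filter (fun e => l e ⊆ T)).card := by exact_mod_cast h1
          have h3 : (0 : ℝ) ≤ K * 2 ^ K *
            (if (E.filter (fun e => l e ⊆ T)).card = 0 then 1 else 0) := by positivity
          linarith

/-- number of edges at `v` completed by `Z`. -/
noncomputable def kmvWt {V : Type*} [DecidableEq V] (H : Finset (Finset V)) (Z : Finset V)
    (v : V) : ℕ :=
  (H.filter (fun e => v ∈ e ∧ e.erase v ⊆ Z)).card

/-- the independent subsets of `M`. -/
noncomputable def kmvInd {V : Type*} [DecidableEq V] (H : Finset (Finset V)) (M : Finset V) :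
    Finset (Finset V) :=
  M.powerset.filter (fun Z => IsIndep H Z)

/-- neighbourhood of `v` in `insert v M`. -/
noncomputable def kmvNbr {V : Type*} [DecidableEq V] (H : Finset (Finset V)) (M : Finset V)
    (v : V) : Finset V :=
  (H.filter (fun e => v ∈ e ∧ e.erase v ⊆ M)).biUnion (fun e => e.erase v)

lemma kmv_mem_ind {V : Type*} [DecidableEq V] {H : Finset (Finset V)} {M Z : Finset V} :
    Z ∈ kmvInd H M ↔ Z ⊆ M ∧ IsIndep H Z := by
  simp [kmvInd]

lemma kmv_indep_mono {V : Type*} [DecidableEq V] {H : Finset (Finset V)} {Z Z' : Finset V}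
    (h : IsIndep H Z) (hs : Z' ⊆ Z) : IsIndep H Z' :=
  fun e he hh => h e he (hh.trans hs)

lemma kmv_local {V : Type*} [DecidableEq V] (r K : ℕ) (hr : 1 ≤ r)
    (H : Finset (Finset V)) (hH : ∀ e ∈ H, e.card = r + 1) (M : Finset V) (v : V)
    (hgood : ∀ f ∈ H, f ⊆ M → (f ∩ kmvNbr H M v).card ≤ 1) :
    (K : ℝ) / 2 ^ r * (kmvInd H M).card ≤ ∑ Z ∈ kmvInd H M,
      ((kmvWt H Z v : ℝ) + K * 2 ^ K * (if kmvWt H Z v = 0 then 1 else 0)) := by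
  set N := kmvNbr H M v with hN
  have hNM : N ⊆ M := by
    intro x hx
    simp only [hN, kmvNbr, Finset.mem_biUnion, Finset.mem_filter] at hx
    obtain ⟨e, he, hxe⟩ := hx
    exact he.2.2 hxe
  set φ : Finset V → Finset V := fun Z => Z \ N with hφ
  have hmaps : ∀ Z ∈ kmvInd H M, φ Z ∈ (kmvInd H M).image φ :=
    fun Z hZ => Finset.mem_image_of_mem _ hZ
  have hcard : ((kmvInd H M).card : ℝ) = ∑ Z ∈ kmvInd H M, (1 : ℝ) := by simp
  rw [hcard, ← Finset.sum_fiberwise_of_maps_to hmaps, ← Finset.sum_fiberwise_of_maps_to hmaps,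
    Finset.mul_sum]
  apply Finset.sum_le_sum
  intro Z' hZ'
  obtain ⟨Z0, hZ0, rfl⟩ := Finset.mem_image.1 hZ'
  obtain ⟨hZ0M, hZ0I⟩ := kmv_mem_ind.1 hZ0
  set Z' := φ Z0 with hZ'def
  have hZ'M : Z' ⊆ M := Finset.sdiff_subset.trans hZ0M
  have hZ'N : Disjoint Z' N := Finset.sdiff_disjoint
  have hZ'I : IsIndep H Z' := kmv_indep_mono hZ0I Finset.sdiff_subset
  set Y := N.filter (fun u => IsIndep H (insert u Z')) with hY
  have hfib : (kmvInd H M).filter (fun Z => φ Z = Z') = Y.powerset.image (fun T => Z' ∪ T) := by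
    ext Z
    simp only [Finset.mem_filter, Finset.mem_image, Finset.mem_powerset, kmv_mem_ind]
    constructor
    · rintro ⟨⟨hZM, hZI⟩, hZ⟩
      refine ⟨Z ∩ N, ?_, ?_⟩
      · intro u hu
        rw [hY, Finset.mem_filter]
        refine ⟨(Finset.mem_inter.1 hu).2, kmv_indep_mono hZI ?_⟩
        intro y hy
        rcases Finset.mem_insert.1 hy with rfl | hy
        · exact (Finset.mem_inter.1 hu).1
        · rw [← hZ] at hy
          exact (Finset.mem_sdiff.1 hy).1
      · rw [← hZ]
        exact Finset.sdiff_union_inter Z N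
    · rintro ⟨T, hT, rfl⟩
      have hTN : T ⊆ N := hT.trans (Finset.filter_subset _ _)
      have hUM : Z' ∪ T ⊆ M := Finset.union_subset hZ'M (hTN.trans hNM)
      refine ⟨⟨hUM, ?_⟩, ?_⟩
      · intro f hf hfs
        have h1 := hgood f hf (hfs.trans hUM)
        by_cases hfe : ∃ u, u ∈ f ∩ N
        · obtain ⟨u, hu⟩ := hfe
          obtain ⟨huf, huN⟩ := Finset.mem_inter.1 hu
          have huT : u ∈ T := by
            rcases Finset.mem_union.1 (hfs huf) with h | h
            · exact absurd huN (Finset.disjoint_left.1 hZ'N h)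
            · exact h
          have huY := (Finset.mem_filter.1 (hT huT)).2
          refine huY f hf ?_
          intro y hy
          rcases Finset.mem_union.1 (hfs hy) with h | h
          · exact Finset.mem_insert_of_mem h
          · have : y = u := Finset.card_le_one.1 h1 y (Finset.mem_inter.2 ⟨hy, hTN h⟩) u hu
            rw [this]; exact Finset.mem_insert_self _ _
        · refine hZ'I f hf ?_
          intro y hy
          rcases Finset.mem_union.1 (hfs hy) with h | h
          · exact h
          · exact absurd ⟨y, Finset.mem_inter.2 ⟨hy, hTN h⟩⟩ hfe
      · simp only [hφ]
        rw [Finset.union_sdiff_distrib, Finset.sdiff_eq_empty_iff_subset.2 hTN,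
          Finset.union_empty]
        exact Finset.sdiff_eq_self_of_disjoint hZ'N
  have hinj : Set.InjOn (fun T => Z' ∪ T) (Y.powerset : Set (Finset V)) := by
    intro T1 h1 T2 h2 h
    have e1 : T1 ⊆ N := (Finset.mem_powerset.1 h1).trans (Finset.filter_subset _ _)
    have e2 : T2 ⊆ N := (Finset.mem_powerset.1 h2).trans (Finset.filter_subset _ _)
    have := congrArg (fun S => S ∩ N) h
    simp only [Finset.union_inter_distrib_right, Finset.disjoint_iff_inter_eq_empty.1 hZ'N,
      Finset.empty_union, Finset.inter_eq_left.2 e1, Finset.inter_eq_left.2 e2] at this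
    exact this
  rw [hfib, Finset.sum_image hinj, Finset.sum_image hinj]
  set E := H.filter (fun e => v ∈ e ∧ e.erase v ⊆ M) with hE
  have hwt : ∀ T ∈ Y.powerset, kmvWt H (Z' ∪ T) v =
      (E.filter (fun e => e.erase v ⊆ T)).card := by
    intro T hT
    have hTN : T ⊆ N := (Finset.mem_powerset.1 hT).trans (Finset.filter_subset _ _)
    unfold kmvWt
    congr 1
    ext e
    simp only [hE, Finset.mem_filter]
    constructor
    · rintro ⟨he, hve, hs⟩
      have hsM : e.erase v ⊆ M := hs.trans (Finset.union_subset hZ'M (hTN.trans hNM))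
      refine ⟨⟨he, hve, hsM⟩, ?_⟩
      intro y hy
      have hyN : y ∈ N := by
        simp only [hN, kmvNbr, Finset.mem_biUnion, Finset.mem_filter]
        exact ⟨e, ⟨he, hve, hsM⟩, hy⟩
      rcases Finset.mem_union.1 (hs hy) with h | h
      · exact absurd hyN (Finset.disjoint_left.1 hZ'N h)
      · exact h
    · rintro ⟨⟨he, hve, _⟩, hs⟩
      exact ⟨he, hve, hs.trans Finset.subset_union_right⟩
  have hb := kmv_bool_cube r K hr E (fun e => e.erase v) (by
    intro e he
    have h1 := Finset.mem_filter.1 he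
    rw [Finset.card_erase_of_mem h1.2.1, hH e h1.1]; rfl) Y
  calc (K : ℝ) / 2 ^ r * ∑ T ∈ Y.powerset, (1 : ℝ) = (K : ℝ) / 2 ^ r * 2 ^ Y.card := by
        simp [Finset.card_powerset]
    _ ≤ _ := hb
    _ = _ := by
        apply Finset.sum_congr rfl
        intro T hT
        rw [hwt T hT]

/-- Weight of `M` in the binomial random subset model. -/
noncomputable def kmvMu {V : Type*} [Fintype V] (p : ℝ) (M : Finset V) : ℝ :=
  p ^ M.card * (1 - p) ^ (Fintype.card V - M.card)

lemma kmv_mu_nonneg {V : Type*} [Fintype V] {p : ℝ} (hp : 0 ≤ p) (hp1 : p ≤ 1) (M : Finset V) :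
    0 ≤ kmvMu p M :=
  mul_nonneg (pow_nonneg hp _) (pow_nonneg (by linarith) _)

lemma kmv_mu_sum {V : Type*} [Fintype V] [DecidableEq V] (p : ℝ) (Q : Finset V) :
    ∑ M ∈ (Finset.univ : Finset (Finset V)).filter (fun M => Q ⊆ M), kmvMu p M = p ^ Q.card := by
  have h1 : (Finset.univ : Finset (Finset V)).filter (fun M => Q ⊆ M) =
      (Qᶜ).powerset.image (fun T => Q ∪ T) := by
    ext M
    simp only [Finset.mem_filter, Finset.mem_univ, true_and, Finset.mem_image,
      Finset.mem_powerset]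
    constructor
    · intro h
      refine ⟨M \ Q, ?_, Finset.union_sdiff_of_subset h⟩
      intro x hx
      exact Finset.mem_compl.2 (Finset.mem_sdiff.1 hx).2
    · rintro ⟨T, _, rfl⟩
      exact Finset.subset_union_left
  have hd : ∀ T ∈ (Qᶜ).powerset, Disjoint Q T := by
    intro T hT
    rw [Finset.disjoint_left]
    intro x hx hxT
    exact (Finset.mem_compl.1 (Finset.mem_powerset.1 hT hxT)) hx
  rw [h1, Finset.sum_image]
  · have h2 : ∀ T ∈ (Qᶜ).powerset, kmvMu p (Q ∪ T) =
        p ^ Q.card * (p ^ T.card * (1 - p) ^ ((Qᶜ).card - T.card)) := by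
      intro T hT
      unfold kmvMu
      rw [Finset.card_union_of_disjoint (hd T hT), Finset.card_compl, pow_add, Nat.sub_sub]
      ring
    rw [Finset.sum_congr rfl h2, ← Finset.mul_sum, Finset.sum_pow_mul_eq_add_pow]
    simp
  · intro T1 hT1 T2 hT2 h
    have := congrArg (fun S => S \ Q) h
    simp only [Finset.union_sdiff_cancel_left (hd T1 hT1),
      Finset.union_sdiff_cancel_left (hd T2 hT2)] at this
    exact this

lemma kmv_mu_total {V : Type*} [Fintype V] [DecidableEq V] (p : ℝ) :
    ∑ M : Finset V, kmvMu p M = 1 := by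
  have := kmv_mu_sum (V := V) p ∅
  simpa using this

lemma kmv_mu_erase {V : Type*} [Fintype V] [DecidableEq V] {p : ℝ} (hp : 0 ≤ p)
    (hp1 : p ≤ 1 / 2)
    (M : Finset V) (v : V) (hv : v ∈ M) : kmvMu p M ≤ 2 * p * kmvMu p (M.erase v) := by
  unfold kmvMu
  have h1 := Finset.card_erase_add_one hv
  have h2 : M.card ≤ Fintype.card V := Finset.card_le_univ M
  have h3 : Fintype.card V - (M.erase v).card = Fintype.card V - M.card + 1 := by omega
  rw [h3, ← h1, pow_succ, pow_succ]
  have h4 : 0 ≤ p ^ (M.erase v).card * p * (1 - p) ^ (Fintype.card V - ((M.erase v).card + 1)) :=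
    mul_nonneg (mul_nonneg (pow_nonneg hp _) hp) (pow_nonneg (by linarith) _)
  nlinarith

lemma kmv_sum_wt {V : Type*} [Fintype V] [DecidableEq V] (r d t : ℕ)
    (H : Finset (Finset V)) (hH : ∀ e ∈ H, e.card = r + 1) (hd : maxDegLe r H d)
    (Z : Finset V) (hZ : Z.card ≤ t) : ∑ v : V, kmvWt H Z v ≤ t ^ r * d := by
  calc ∑ v : V, kmvWt H Z v
      = ∑ v : V, ∑ e ∈ H, (if v ∈ e ∧ e.erase v ⊆ Z then 1 else 0) := by
        apply Finset.sum_congr rfl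
        intro v _
        rw [kmvWt, Finset.card_filter]
    _ = ∑ e ∈ H, ∑ v : V, (if v ∈ e ∧ e.erase v ⊆ Z then 1 else 0) := Finset.sum_comm
    _ ≤ ∑ e ∈ H, ∑ S ∈ Z.powersetCard r, (if S ⊆ e then 1 else 0) := by
        apply Finset.sum_le_sum
        intro e he
        rw [← Finset.card_filter, ← Finset.card_filter]
        apply Finset.card_le_card_of_injOn (fun v => e.erase v)
        · intro v hv
          have hv' := (Finset.mem_filter.1 hv).2
          simp only [Finset.coe_filter, Set.mem_ofPred_eq, Finset.mem_powersetCard]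
          refine ⟨⟨hv'.2, ?_⟩, Finset.erase_subset _ _⟩
          rw [Finset.card_erase_of_mem hv'.1, hH e he]; rfl
        · intro v hv w hw h
          have hv' := (Finset.mem_filter.1 hv).2
          have hw' := (Finset.mem_filter.1 hw).2
          exact Finset.erase_injOn e hv'.1 hw'.1 h
    _ = ∑ S ∈ Z.powersetCard r, ∑ e ∈ H, (if S ⊆ e then 1 else 0) := Finset.sum_comm
    _ ≤ ∑ S ∈ Z.powersetCard r, d := by
        apply Finset.sum_le_sum
        intro S hS
        rw [← Finset.card_filter]
        exact hd S (Finset.mem_powersetCard.1 hS).2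
    _ = Z.card.choose r * d := by
        rw [Finset.sum_const, Finset.card_powersetCard, smul_eq_mul]
    _ ≤ t ^ r * d := by
        gcongr
        exact (Nat.choose_le_pow _ _).trans (Nat.pow_le_pow_left hZ r)

lemma kmv_ind_pos {V : Type*} [DecidableEq V] (r : ℕ) (H : Finset (Finset V))
    (hH : ∀ e ∈ H, e.card = r + 1) (M : Finset V) : 0 < (kmvInd H M).card := by
  apply Finset.card_pos.2
  refine ⟨∅, kmv_mem_ind.2 ⟨Finset.empty_subset _, ?_⟩⟩
  intro e he hs
  have := hH e he
  rw [Finset.subset_empty.1 hs] at this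
  simp at this

lemma kmv_ind_mono {V : Type*} [DecidableEq V] (H : Finset (Finset V))
    {M M' : Finset V} (h : M ⊆ M') : (kmvInd H M).card ≤ (kmvInd H M').card := by
  apply Finset.card_le_card
  intro Z hZ
  rw [kmv_mem_ind] at *
  exact ⟨hZ.1.trans h, hZ.2⟩

lemma kmv_ind_double {V : Type*} [DecidableEq V] (H : Finset (Finset V))
    (M : Finset V) (v : V) : (kmvInd H M).card ≤ 2 * (kmvInd H (M.erase v)).card := by
  have : kmvInd H M ⊆ kmvInd H (M.erase v) ∪ (kmvInd H (M.erase v)).image (insert v) := by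
    intro Z hZ
    obtain ⟨h1, h2⟩ := kmv_mem_ind.1 hZ
    by_cases hv : v ∈ Z
    · apply Finset.mem_union_right
      refine Finset.mem_image.2 ⟨Z.erase v, kmv_mem_ind.2 ⟨Finset.erase_subset_erase _ h1,
        kmv_indep_mono h2 (Finset.erase_subset _ _)⟩, Finset.insert_erase hv⟩
    · apply Finset.mem_union_left
      exact kmv_mem_ind.2 ⟨Finset.subset_erase.2 ⟨h1, hv⟩, h2⟩
  calc (kmvInd H M).card
      ≤ (kmvInd H (M.erase v) ∪ (kmvInd H (M.erase v)).image (insert v)).card :=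
        Finset.card_le_card this
    _ ≤ (kmvInd H (M.erase v)).card + ((kmvInd H (M.erase v)).image (insert v)).card :=
        Finset.card_union_le _ _
    _ ≤ (kmvInd H (M.erase v)).card + (kmvInd H (M.erase v)).card := by
        apply Nat.add_le_add_left
        exact Finset.card_image_le (s := kmvInd H (M.erase v)) (f := insert v)
    _ = _ := by ring

lemma kmv_ind_ext {V : Type*} [DecidableEq V] (H : Finset (Finset V))
    (M : Finset V) (v : V) (hv : v ∈ M) :
    ((kmvInd H (M.erase v)).filter (fun Z => kmvWt H Z v = 0)).card ≤
      ((kmvInd H M).filter (fun Z => v ∈ Z)).card := by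
  apply Finset.card_le_card_of_injOn (insert v)
  · intro Z hZ
    obtain ⟨h1, h2⟩ := Finset.mem_filter.1 hZ
    obtain ⟨h3, h4⟩ := kmv_mem_ind.1 h1
    refine Finset.mem_coe.2 (Finset.mem_filter.2 ⟨kmv_mem_ind.2 ⟨?_, ?_⟩,
      Finset.mem_insert_self _ _⟩)
    · exact Finset.insert_subset hv (h3.trans (Finset.erase_subset _ _))
    · intro e he hs
      by_cases hve : v ∈ e
      · unfold kmvWt at h2
        rw [Finset.card_eq_zero, Finset.filter_eq_empty_iff] at h2
        refine h2 he ⟨hve, fun x hx => ?_⟩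
        rcases Finset.mem_insert.1 (hs (Finset.mem_of_mem_erase hx)) with h' | h'
        · exact absurd h' (Finset.ne_of_mem_erase hx)
        · exact h'
      · refine h4 e he ?_
        intro x hx
        rcases Finset.mem_insert.1 (hs hx) with rfl | h'
        · exact absurd hx hve
        · exact h'
  · intro Z1 h1 Z2 h2 h
    have a1 : v ∉ Z1 := fun hh => Finset.notMem_erase v M
      ((kmv_mem_ind.1 (Finset.mem_filter.1 h1).1).1 hh)
    have a2 : v ∉ Z2 := fun hh => Finset.notMem_erase v M
      ((kmv_mem_ind.1 (Finset.mem_filter.1 h2).1).1 hh)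
    have := congrArg (fun S => S.erase v) h
    simpa [Finset.erase_insert a1, Finset.erase_insert a2] using this

/-- `v` is good in `M`. -/
def KmvGood {V : Type*} [DecidableEq V] (H : Finset (Finset V)) (M : Finset V) (v : V) : Prop :=
  ∀ f ∈ H, f ⊆ M.erase v → (f ∩ kmvNbr H (M.erase v) v).card ≤ 1

lemma kmv_average {V : Type*} [Fintype V] [DecidableEq V] (r d t K : ℕ) (hr : 1 ≤ r)
    (H : Finset (Finset V)) (hH : ∀ e ∈ H, e.card = r + 1) (hd : maxDegLe r H d)
    (ht : ∀ Z, IsIndep H Z → Z.card ≤ t) (p : ℝ) (hp : 0 ≤ p) (hp1 : p ≤ 1 / 2) :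
    (K : ℝ) / 2 ^ (r + 1) * ∑ v : V, ∑ M ∈ (Finset.univ : Finset (Finset V)).filter
      (fun M => v ∈ M ∧ KmvGood H M v), kmvMu p M ≤ K * 2 ^ K * t + 2 * p * (t ^ r * d) := by
  have hmu : ∀ M : Finset V, 0 ≤ kmvMu p M := kmv_mu_nonneg hp (by linarith)
  have hipos : ∀ M : Finset V, (0 : ℝ) < (kmvInd H M).card := by
    intro M
    exact_mod_cast kmv_ind_pos r H hH M
  -- step 1
  have step1 : (K : ℝ) / 2 ^ (r + 1) * ∑ v : V, ∑ M ∈ (Finset.univ : Finset (Finset V)).filter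
      (fun M => v ∈ M ∧ KmvGood H M v), kmvMu p M ≤
      ∑ v : V, ∑ M ∈ (Finset.univ : Finset (Finset V)).filter (fun M => v ∈ M),
        kmvMu p M / (kmvInd H M).card * ∑ Z ∈ kmvInd H (M.erase v),
          ((kmvWt H Z v : ℝ) + K * 2 ^ K * (if kmvWt H Z v = 0 then 1 else 0)) := by
    rw [Finset.mul_sum]
    apply Finset.sum_le_sum
    intro v _
    rw [Finset.mul_sum]
    calc _ ≤ ∑ M ∈ (Finset.univ : Finset (Finset V)).filter (fun M => v ∈ M ∧ KmvGood H M v),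
        kmvMu p M / (kmvInd H M).card * ∑ Z ∈ kmvInd H (M.erase v),
          ((kmvWt H Z v : ℝ) + K * 2 ^ K * (if kmvWt H Z v = 0 then 1 else 0)) := by
          apply Finset.sum_le_sum
          intro M hM
          obtain ⟨_, hvM, hg⟩ := Finset.mem_filter.1 hM
          have h1 := kmv_local r K hr H hH (M.erase v) v hg
          have h2 : ((kmvInd H M).card : ℝ) ≤ 2 * (kmvInd H (M.erase v)).card := by
            exact_mod_cast kmv_ind_double H M v
          calc (K : ℝ) / 2 ^ (r + 1) * kmvMu p M
              = kmvMu p M / (kmvInd H M).card * ((K : ℝ) / 2 ^ r * ((kmvInd H M).card / 2)) := by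
                have := (hipos M).ne'
                rw [pow_succ]
                field_simp
            _ ≤ kmvMu p M / (kmvInd H M).card *
                ((K : ℝ) / 2 ^ r * (kmvInd H (M.erase v)).card) := by
                apply mul_le_mul_of_nonneg_left _ (div_nonneg (hmu M) (hipos M).le)
                apply mul_le_mul_of_nonneg_left _ (by positivity)
                linarith
            _ ≤ _ := mul_le_mul_of_nonneg_left h1 (div_nonneg (hmu M) (hipos M).le)
      _ ≤ _ := by
          apply Finset.sum_le_sum_of_subset_of_nonneg
          · intro M hM
            simp only [Finset.mem_filter, Finset.mem_univ, true_and] at *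
            exact hM.1
          · intro M _ _
            apply mul_nonneg (div_nonneg (hmu M) (hipos M).le)
            apply Finset.sum_nonneg
            intro Z _
            positivity
  refine step1.trans ?_
  simp only [Finset.sum_add_distrib, mul_add]
  rw [add_comm]
  apply add_le_add
  · -- part 2
    calc _ ≤ ∑ v : V, ∑ M ∈ (Finset.univ : Finset (Finset V)).filter (fun M => v ∈ M),
          kmvMu p M / (kmvInd H M).card * (K * 2 ^ K *
            ∑ Z ∈ kmvInd H M, if v ∈ Z then (1 : ℝ) else 0) := by
          apply Finset.sum_le_sum
          intro v _
          apply Finset.sum_le_sum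
          intro M hM
          apply mul_le_mul_of_nonneg_left _ (div_nonneg (hmu M) (hipos M).le)
          rw [← Finset.mul_sum]
          apply mul_le_mul_of_nonneg_left _ (by positivity)
          rw [Finset.sum_boole, Finset.sum_boole]
          exact_mod_cast kmv_ind_ext H M v (Finset.mem_filter.1 hM).2
      _ ≤ ∑ v : V, ∑ M : Finset V, kmvMu p M / (kmvInd H M).card * (K * 2 ^ K *
            ∑ Z ∈ kmvInd H M, if v ∈ Z then (1 : ℝ) else 0) := by
          apply Finset.sum_le_sum
          intro v _
          apply Finset.sum_le_sum_of_subset_of_nonneg (Finset.filter_subset _ _)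
          intro M _ _
          apply mul_nonneg (div_nonneg (hmu M) (hipos M).le)
          apply mul_nonneg (by positivity)
          apply Finset.sum_nonneg
          intro Z _
          positivity
      _ = ∑ M : Finset V, kmvMu p M / (kmvInd H M).card * (K * 2 ^ K *
            ∑ Z ∈ kmvInd H M, (Z.card : ℝ)) := by
          rw [Finset.sum_comm]
          apply Finset.sum_congr rfl
          intro M _
          rw [← Finset.mul_sum, ← Finset.mul_sum, Finset.sum_comm]
          congr 2
          apply Finset.sum_congr rfl
          intro Z _
          simp
      _ ≤ ∑ M : Finset V, kmvMu p M / (kmvInd H M).card * (K * 2 ^ K *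
            ((kmvInd H M).card * t)) := by
          apply Finset.sum_le_sum
          intro M _
          apply mul_le_mul_of_nonneg_left _ (div_nonneg (hmu M) (hipos M).le)
          apply mul_le_mul_of_nonneg_left _ (by positivity)
          rw [← nsmul_eq_mul]
          apply Finset.sum_le_card_nsmul
          intro Z hZ
          exact_mod_cast ht Z (kmv_mem_ind.1 hZ).2
      _ = ∑ M : Finset V, kmvMu p M * (K * 2 ^ K * t) := by
          apply Finset.sum_congr rfl
          intro M _
          have := (hipos M).ne'
          field_simp
      _ = K * 2 ^ K * t := by
          rw [← Finset.sum_mul, kmv_mu_total, one_mul]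
  · -- part 1
    set φ : V → Finset V → ℝ := fun v M => 2 * p * (kmvMu p M / (kmvInd H M).card *
      ∑ Z ∈ kmvInd H M, (kmvWt H Z v : ℝ)) with hφ
    have hφ0 : ∀ v M, 0 ≤ φ v M := by
      intro v M
      simp only [hφ]
      apply mul_nonneg (by linarith)
      apply mul_nonneg (div_nonneg (hmu M) (hipos M).le)
      exact Finset.sum_nonneg (fun Z _ => by positivity)
    calc _ ≤ ∑ v : V, ∑ M ∈ (Finset.univ : Finset (Finset V)).filter (fun M => v ∈ M),
          φ v (M.erase v) := by
          apply Finset.sum_le_sum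
          intro v _
          apply Finset.sum_le_sum
          intro M hM
          simp only [hφ]
          rw [← mul_assoc]
          apply mul_le_mul_of_nonneg_right _ (Finset.sum_nonneg (fun Z _ => by positivity))
          have h1 := kmv_mu_erase hp hp1 M v (Finset.mem_filter.1 hM).2
          have h2 : ((kmvInd H (M.erase v)).card : ℝ) ≤ (kmvInd H M).card := by
            exact_mod_cast kmv_ind_mono H (Finset.erase_subset v M)
          calc kmvMu p M / (kmvInd H M).card ≤ (2 * p * kmvMu p (M.erase v)) /
              (kmvInd H (M.erase v)).card :=
                div_le_div₀ ((hmu M).trans h1) h1 (hipos _) h2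
            _ = _ := by ring
      _ ≤ ∑ v : V, ∑ M : Finset V, φ v M := by
          apply Finset.sum_le_sum
          intro v _
          have hinj : Set.InjOn (fun M : Finset V => M.erase v)
              (((Finset.univ : Finset (Finset V)).filter (fun M => v ∈ M)) :
                Set (Finset V)) := by
            intro M1 h1 M2 h2 h
            have a1 := (Finset.mem_filter.1 h1).2
            have a2 := (Finset.mem_filter.1 h2).2
            have := congrArg (insert v) h
            simpa [Finset.insert_erase a1, Finset.insert_erase a2] using this
          rw [← Finset.sum_image (f := φ v) hinj]
          exact Finset.sum_le_sum_of_subset_of_nonneg (Finset.subset_univ _)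
            (fun M _ _ => hφ0 v M)
      _ = ∑ M : Finset V, 2 * p * (kmvMu p M / (kmvInd H M).card *
            ∑ Z ∈ kmvInd H M, ∑ v : V, (kmvWt H Z v : ℝ)) := by
          rw [Finset.sum_comm]
          apply Finset.sum_congr rfl
          intro M _
          simp only [hφ]
          rw [← Finset.mul_sum, ← Finset.mul_sum, Finset.sum_comm]
      _ ≤ ∑ M : Finset V, 2 * p * (kmvMu p M / (kmvInd H M).card *
            ((kmvInd H M).card * (t ^ r * d))) := by
          apply Finset.sum_le_sum
          intro M _
          apply mul_le_mul_of_nonneg_left _ (by linarith)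
          apply mul_le_mul_of_nonneg_left _ (div_nonneg (hmu M) (hipos M).le)
          rw [← nsmul_eq_mul]
          apply Finset.sum_le_card_nsmul
          intro Z hZ
          exact_mod_cast kmv_sum_wt r d t H hH hd Z (ht Z (kmv_mem_ind.1 hZ).2)
      _ = ∑ M : Finset V, kmvMu p M * (2 * p * (t ^ r * d)) := by
          apply Finset.sum_congr rfl
          intro M _
          have := (hipos M).ne'
          field_simp
      _ = 2 * p * (t ^ r * d) := by
          rw [← Finset.sum_mul, kmv_mu_total, one_mul]

lemma kmv_deg {V : Type*} [Fintype V] [DecidableEq V] (r d : ℕ)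
    (H : Finset (Finset V)) (hH : ∀ e ∈ H, e.card = r + 1) (hd : maxDegLe r H d) (k : ℕ) :
    ∀ J : Finset V, J.card + k = r →
      (H.filter (fun e => J ⊆ e)).card ≤ Fintype.card V ^ k * d := by
  induction k with
  | zero =>
    intro J hJ
    simpa using hd J (by simpa using hJ)
  | succ k ih =>
    intro J hJ
    have hsub : H.filter (fun e => J ⊆ e) ⊆
        (Jᶜ).biUnion (fun x => H.filter (fun e => insert x J ⊆ e)) := by
      intro e he
      obtain ⟨h1, h2⟩ := Finset.mem_filter.1 he
      have hlt : J.card < e.card := by rw [hH e h1]; omega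
      obtain ⟨x, hx, hxJ⟩ := Finset.exists_mem_notMem_of_card_lt_card hlt
      rw [Finset.mem_biUnion]
      exact ⟨x, Finset.mem_compl.2 hxJ, Finset.mem_filter.2 ⟨h1, Finset.insert_subset hx h2⟩⟩
    calc (H.filter (fun e => J ⊆ e)).card ≤ _ := Finset.card_le_card hsub
      _ ≤ ∑ x ∈ Jᶜ, (H.filter (fun e => insert x J ⊆ e)).card := Finset.card_biUnion_le
      _ ≤ ∑ x ∈ Jᶜ, Fintype.card V ^ k * d := by
          apply Finset.sum_le_sum
          intro x hx
          apply ih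
          rw [Finset.card_insert_of_notMem (Finset.mem_compl.1 hx)]
          omega
      _ = (Jᶜ).card * (Fintype.card V ^ k * d) := by rw [Finset.sum_const, smul_eq_mul]
      _ ≤ Fintype.card V * (Fintype.card V ^ k * d) := by
          gcongr
          exact Finset.card_le_univ _
      _ = _ := by ring

lemma kmv_ext_sum {V : Type*} [Fintype V] [DecidableEq V] (r d j : ℕ)
    (H : Finset (Finset V)) (hH : ∀ e ∈ H, e.card = r + 1) (hd : maxDegLe r H d)
    (p : ℝ) (hp : 0 ≤ p) (hn : 0 < Fintype.card V) (hm : 1 ≤ (Fintype.card V : ℝ) * p)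
    (U J : Finset V) (hj : j ≤ J.card) (hJ : J.card ≤ r) :
    ∑ e ∈ H.filter (fun e => e ∩ U = J), p ^ (e \ U).card ≤
      ((Fintype.card V : ℝ) * p) ^ (r + 1 - j) * (d / Fintype.card V) := by
  have h1 : ∀ e ∈ H.filter (fun e => e ∩ U = J), p ^ (e \ U).card = p ^ (r + 1 - J.card) := by
    intro e he
    obtain ⟨a, b⟩ := Finset.mem_filter.1 he
    have := Finset.card_sdiff_add_card_inter e U
    rw [b, hH e a] at this
    congr 1
    omega
  rw [Finset.sum_congr rfl h1, Finset.sum_const, nsmul_eq_mul]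
  have h2 : (H.filter (fun e => e ∩ U = J)).card ≤ Fintype.card V ^ (r - J.card) * d := by
    refine le_trans (Finset.card_le_card ?_) (kmv_deg r d H hH hd (r - J.card) J (by omega))
    intro e he
    obtain ⟨a, b⟩ := Finset.mem_filter.1 he
    exact Finset.mem_filter.2 ⟨a, b ▸ Finset.inter_subset_left⟩
  have h2' : ((H.filter (fun e => e ∩ U = J)).card : ℝ) ≤
      (Fintype.card V : ℝ) ^ (r - J.card) * d := by exact_mod_cast h2
  have hn' : (0 : ℝ) < Fintype.card V := by exact_mod_cast hn
  calc _ ≤ (Fintype.card V : ℝ) ^ (r - J.card) * d * p ^ (r + 1 - J.card) := by gcongr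
    _ = ((Fintype.card V : ℝ) * p) ^ (r + 1 - J.card) * (d / Fintype.card V) := by
        have : r + 1 - J.card = (r - J.card) + 1 := by omega
        rw [this, mul_pow, pow_succ, pow_succ]
        field_simp
    _ ≤ _ := by
        gcongr

lemma kmv_sum_e {V : Type*} [Fintype V] [DecidableEq V] (r d : ℕ)
    (H : Finset (Finset V)) (hH : ∀ e ∈ H, e.card = r + 1) (hd : maxDegLe r H d)
    (p : ℝ) (hp : 0 ≤ p) (hn : 0 < Fintype.card V) (hm : 1 ≤ (Fintype.card V : ℝ) * p)
    (hD : 1 ≤ ((Fintype.card V : ℝ) * p) ^ r * (d / Fintype.card V))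
    (U : Finset V) (v : V) (hv : v ∈ U) :
    ∑ e ∈ H.filter (fun e => v ∈ e), p ^ (e \ U).card ≤
      2 ^ U.card * (((Fintype.card V : ℝ) * p) ^ r * (d / Fintype.card V)) := by
  have hmaps : ∀ e ∈ H.filter (fun e => v ∈ e), e ∩ U ∈ U.powerset :=
    fun e _ => Finset.mem_powerset.2 Finset.inter_subset_right
  rw [← Finset.sum_fiberwise_of_maps_to hmaps]
  calc _ ≤ ∑ J ∈ U.powerset, (((Fintype.card V : ℝ) * p) ^ r * (d / Fintype.card V)) := by
        apply Finset.sum_le_sum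
        intro J _
        rw [Finset.filter_filter]
        by_cases hvJ : v ∈ J
        · by_cases hJ : J.card ≤ r
          · refine le_trans ?_ (kmv_ext_sum r d 1 H hH hd p hp hn hm U J
              (Finset.card_pos.2 ⟨v, hvJ⟩) hJ)
            apply Finset.sum_le_sum_of_subset_of_nonneg
            · intro e he
              simp only [Finset.mem_filter] at *
              exact ⟨he.1, he.2.2⟩
            · intro e _ _
              positivity
          · refine le_trans ?_ hD
            calc _ ≤ ∑ e ∈ ({J} : Finset (Finset V)), p ^ (e \ U).card := by
                  apply Finset.sum_le_sum_of_subset_of_nonneg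
                  · intro e he
                    simp only [Finset.mem_filter] at he
                    rw [Finset.mem_singleton]
                    symm
                    apply Finset.eq_of_subset_of_card_le
                    · rw [← he.2.2]; exact Finset.inter_subset_left
                    · rw [hH e he.1]; omega
                  · intro e _ _
                    positivity
              _ ≤ 1 := by
                  rw [Finset.sum_singleton]
                  rename_i hJU
                  rw [Finset.sdiff_eq_empty_iff_subset.2 (Finset.mem_powerset.1 hJU)]
                  simp
        · rw [Finset.filter_false_of_mem]
          · simp only [Finset.sum_empty]
            linarith
          · intro e _ h
            exact hvJ (h.2 ▸ Finset.mem_inter.2 ⟨h.1, hv⟩)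
    _ = _ := by
        rw [Finset.sum_const, Finset.card_powerset, nsmul_eq_mul]
        push_cast
        ring

lemma kmv_sum_f {V : Type*} [Fintype V] [DecidableEq V] (r d : ℕ)
    (H : Finset (Finset V)) (hH : ∀ e ∈ H, e.card = r + 1) (hd : maxDegLe r H d)
    (p : ℝ) (hp : 0 ≤ p) (hn : 0 < Fintype.card V) (hm : 1 ≤ (Fintype.card V : ℝ) * p)
    (U : Finset V) :
    ∑ f ∈ H.filter (fun f => 2 ≤ (f ∩ U).card ∧ ¬ f ⊆ U), p ^ (f \ U).card ≤
      2 ^ U.card * (((Fintype.card V : ℝ) * p) ^ (r - 1) * (d / Fintype.card V)) := by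
  have hmaps : ∀ f ∈ H.filter (fun f => 2 ≤ (f ∩ U).card ∧ ¬ f ⊆ U), f ∩ U ∈ U.powerset :=
    fun e _ => Finset.mem_powerset.2 Finset.inter_subset_right
  have h0 : (0 : ℝ) ≤ (((Fintype.card V : ℝ) * p) ^ (r - 1) * (d / Fintype.card V)) := by
    positivity
  rw [← Finset.sum_fiberwise_of_maps_to hmaps]
  calc _ ≤ ∑ J ∈ U.powerset, (((Fintype.card V : ℝ) * p) ^ (r - 1) * (d / Fintype.card V)) := by
        apply Finset.sum_le_sum
        intro J _
        rw [Finset.filter_filter]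
        by_cases hJ : 2 ≤ J.card ∧ J.card ≤ r
        · refine le_trans ?_ (kmv_ext_sum r d 2 H hH hd p hp hn hm U J hJ.1 hJ.2)
          apply Finset.sum_le_sum_of_subset_of_nonneg
          · intro e he
            simp only [Finset.mem_filter] at *
            exact ⟨he.1, he.2.2⟩
          · intro e _ _
            positivity
        · rw [Finset.filter_false_of_mem]
          · simpa using h0
          · rintro e he ⟨⟨h1, h2⟩, rfl⟩
            apply hJ
            refine ⟨h1, ?_⟩
            by_contra hc
            push Not at hc
            apply h2
            rw [← Finset.inter_eq_left]
            apply Finset.eq_of_subset_of_card_le Finset.inter_subset_left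
            rw [hH e he]; omega
    _ = _ := by
        rw [Finset.sum_const, Finset.card_powerset, nsmul_eq_mul]
        push_cast
        ring

lemma kmv_bad_config {V : Type*} [DecidableEq V] (r : ℕ) (hr : 2 ≤ r)
    (H : Finset (Finset V)) (hH : ∀ e ∈ H, e.card = r + 1) (M : Finset V) (v : V)
    (hv : v ∈ M) (hbad : ¬ KmvGood H M v) :
    ∃ e₁ ∈ H.filter (fun e => v ∈ e), ∃ e₂ ∈ H.filter (fun e => v ∈ e),
      ∃ f ∈ H.filter (fun f => 2 ≤ (f ∩ (e₁ ∪ e₂)).card ∧ ¬ f ⊆ e₁ ∪ e₂),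
        e₁ ∪ e₂ ∪ f ⊆ M := by
  unfold KmvGood at hbad
  push Not at hbad
  obtain ⟨f, hf, hfM, hc⟩ := hbad
  have hvf : v ∉ f := fun h => Finset.notMem_erase v M (hfM h)
  have hfM' : f ⊆ M := hfM.trans (Finset.erase_subset _ _)
  obtain ⟨x, hx, y, hy, hxy⟩ := Finset.one_lt_card.1 hc
  obtain ⟨hxf, hxN⟩ := Finset.mem_inter.1 hx
  obtain ⟨hyf, hyN⟩ := Finset.mem_inter.1 hy
  simp only [kmvNbr, Finset.mem_biUnion, Finset.mem_filter] at hxN hyN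
  obtain ⟨e₁, ⟨he₁, hv₁, hs₁⟩, hx₁⟩ := hxN
  obtain ⟨e₂, ⟨he₂, hv₂, hs₂⟩, hy₂⟩ := hyN
  have hsub : ∀ e : Finset V, v ∈ e → e.erase v ⊆ M.erase v → e ⊆ M := by
    intro e _ hs z hz
    by_cases hzv : z = v
    · rw [hzv]; exact hv
    · exact Finset.mem_of_mem_erase (hs (Finset.mem_erase.2 ⟨hzv, hz⟩))
  have h1M := hsub e₁ hv₁ hs₁
  have h2M := hsub e₂ hv₂ hs₂
  have hself : ∀ e ∈ H, v ∈ e → e ⊆ M → 2 ≤ (f ∩ e).card →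
      ∃ e₁ ∈ H.filter (fun e => v ∈ e), ∃ e₂ ∈ H.filter (fun e => v ∈ e),
      ∃ f ∈ H.filter (fun f => 2 ≤ (f ∩ (e₁ ∪ e₂)).card ∧ ¬ f ⊆ e₁ ∪ e₂),
        e₁ ∪ e₂ ∪ f ⊆ M := by
    intro e he hve heM hcard
    refine ⟨e, Finset.mem_filter.2 ⟨he, hve⟩, e, Finset.mem_filter.2 ⟨he, hve⟩, f,
      Finset.mem_filter.2 ⟨hf, ?_, ?_⟩, ?_⟩
    · rwa [Finset.union_self]
    · rw [Finset.union_self]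
      intro hfe
      have := Finset.eq_of_subset_of_card_le hfe (by rw [hH e he, hH f hf])
      exact hvf (this ▸ hve)
    · rw [Finset.union_self]
      exact Finset.union_subset heM hfM'
  by_cases hfs : f ⊆ e₁ ∪ e₂
  · by_cases hc1 : 2 ≤ (f ∩ e₁).card
    · exact hself e₁ he₁ hv₁ h1M hc1
    · by_cases hc2 : 2 ≤ (f ∩ e₂).card
      · exact hself e₂ he₂ hv₂ h2M hc2
      · exfalso
        have h3 : f = (f ∩ e₁) ∪ (f ∩ e₂) := by
          rw [← Finset.inter_union_distrib_left]
          exact (Finset.inter_eq_left.2 hfs).symm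
        have h4 := Finset.card_union_le (f ∩ e₁) (f ∩ e₂)
        rw [← h3, hH f hf] at h4
        omega
  · refine ⟨e₁, Finset.mem_filter.2 ⟨he₁, hv₁⟩, e₂, Finset.mem_filter.2 ⟨he₂, hv₂⟩, f,
      Finset.mem_filter.2 ⟨hf, ?_, hfs⟩, ?_⟩
    · apply Finset.one_lt_card.2
      exact ⟨x, Finset.mem_inter.2 ⟨hxf, Finset.mem_union_left _ (Finset.mem_of_mem_erase hx₁)⟩,
        y, Finset.mem_inter.2 ⟨hyf, Finset.mem_union_right _ (Finset.mem_of_mem_erase hy₂)⟩, hxy⟩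
    · exact Finset.union_subset (Finset.union_subset h1M h2M) hfM'

lemma kmv_bad_prob {V : Type*} [Fintype V] [DecidableEq V] (r d : ℕ) (hr : 2 ≤ r)
    (H : Finset (Finset V)) (hH : ∀ e ∈ H, e.card = r + 1) (hd : maxDegLe r H d)
    (p : ℝ) (hp : 0 ≤ p) (hp1 : p ≤ 1) (hn : 0 < Fintype.card V)
    (hm : 1 ≤ (Fintype.card V : ℝ) * p) (D : ℝ)
    (hDdef : D = ((Fintype.card V : ℝ) * p) ^ r * (d / Fintype.card V))
    (hD : 1 ≤ D) (v : V) :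
    ∑ M ∈ (Finset.univ : Finset (Finset V)).filter (fun M => v ∈ M ∧ ¬ KmvGood H M v),
      kmvMu p M ≤ p * (2 ^ (3 * r + 4) * D ^ 3 / ((Fintype.card V : ℝ) * p)) := by
  have hmu : ∀ M : Finset V, 0 ≤ kmvMu p M := kmv_mu_nonneg hp hp1
  set Hv := H.filter (fun e => v ∈ e) with hHv
  set F : Finset V → Finset (Finset V) :=
    fun U => H.filter (fun f => 2 ≤ (f ∩ U).card ∧ ¬ f ⊆ U) with hF
  set m := (Fintype.card V : ℝ) * p with hmdef
  have hm0 : 0 < m := by linarith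
  have hDm : m ^ (r - 1) * (d / Fintype.card V) = D / m := by
    rw [hDdef, eq_div_iff hm0.ne']
    have : m ^ r = m ^ (r - 1) * m := by
      rw [← pow_succ]; congr 1; omega
    rw [this]; ring
  calc _ ≤ ∑ M ∈ (Finset.univ : Finset (Finset V)).filter (fun M => v ∈ M ∧ ¬ KmvGood H M v),
        ∑ e₁ ∈ Hv, ∑ e₂ ∈ Hv, ∑ f ∈ F (e₁ ∪ e₂),
          (if e₁ ∪ e₂ ∪ f ⊆ M then kmvMu p M else 0) := by
        apply Finset.sum_le_sum
        intro M hM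
        obtain ⟨_, hvM, hb⟩ := Finset.mem_filter.1 hM
        obtain ⟨e₁, h1, e₂, h2, f, hf, hs⟩ := kmv_bad_config r hr H hH M v hvM hb
        have hnn : ∀ e₁ e₂ f : Finset V,
            0 ≤ (if e₁ ∪ e₂ ∪ f ⊆ M then kmvMu p M else 0) := by
          intro a b c
          split_ifs
          · exact hmu M
          · exact le_rfl
        calc kmvMu p M = (if e₁ ∪ e₂ ∪ f ⊆ M then kmvMu p M else 0) := by rw [if_pos hs]
          _ ≤ ∑ f ∈ F (e₁ ∪ e₂), (if e₁ ∪ e₂ ∪ f ⊆ M then kmvMu p M else 0) :=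
              Finset.single_le_sum (f := fun f => (if e₁ ∪ e₂ ∪ f ⊆ M then kmvMu p M else 0))
                (fun f _ => hnn e₁ e₂ f) hf
          _ ≤ ∑ e₂ ∈ Hv, ∑ f ∈ F (e₁ ∪ e₂), (if e₁ ∪ e₂ ∪ f ⊆ M then kmvMu p M else 0) :=
              Finset.single_le_sum
                (f := fun e₂ => ∑ f ∈ F (e₁ ∪ e₂), (if e₁ ∪ e₂ ∪ f ⊆ M then kmvMu p M else 0))
                (fun e₂ _ => Finset.sum_nonneg (fun f _ => hnn e₁ e₂ f)) h2
          _ ≤ _ :=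
              Finset.single_le_sum
                (f := fun e₁ => ∑ e₂ ∈ Hv, ∑ f ∈ F (e₁ ∪ e₂),
                  (if e₁ ∪ e₂ ∪ f ⊆ M then kmvMu p M else 0))
                (fun e₁ _ => Finset.sum_nonneg (fun e₂ _ =>
                  Finset.sum_nonneg (fun f _ => hnn e₁ e₂ f))) h1
    _ ≤ ∑ M : Finset V, ∑ e₁ ∈ Hv, ∑ e₂ ∈ Hv, ∑ f ∈ F (e₁ ∪ e₂),
          (if e₁ ∪ e₂ ∪ f ⊆ M then kmvMu p M else 0) := by
        apply Finset.sum_le_sum_of_subset_of_nonneg (Finset.filter_subset _ _)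
        intro M _ _
        refine Finset.sum_nonneg (fun e₁ _ => Finset.sum_nonneg (fun e₂ _ =>
          Finset.sum_nonneg (fun f _ => ?_)))
        split_ifs
        · exact hmu M
        · exact le_rfl
    _ = ∑ e₁ ∈ Hv, ∑ e₂ ∈ Hv, ∑ f ∈ F (e₁ ∪ e₂), p ^ (e₁ ∪ e₂ ∪ f).card := by
        rw [Finset.sum_comm]
        apply Finset.sum_congr rfl
        intro e₁ _
        rw [Finset.sum_comm]
        apply Finset.sum_congr rfl
        intro e₂ _
        rw [Finset.sum_comm]
        apply Finset.sum_congr rfl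
        intro f _
        rw [← kmv_mu_sum, Finset.sum_filter]
    _ = ∑ e₁ ∈ Hv, p * (p ^ (e₁ \ {v}).card * ∑ e₂ ∈ Hv, (p ^ (e₂ \ e₁).card *
          ∑ f ∈ F (e₁ ∪ e₂), p ^ (f \ (e₁ ∪ e₂)).card)) := by
        apply Finset.sum_congr rfl
        intro e₁ h1
        have hv1 := (Finset.mem_filter.1 h1).2
        have hpe : p * p ^ (e₁ \ {v}).card = p ^ e₁.card := by
          rw [← Finset.erase_eq, ← pow_succ', Finset.card_erase_add_one hv1]
        rw [← mul_assoc, hpe, Finset.mul_sum]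
        apply Finset.sum_congr rfl
        intro e₂ _
        rw [← mul_assoc, Finset.mul_sum]
        apply Finset.sum_congr rfl
        intro f _
        rw [← pow_add, ← pow_add]
        congr 1
        have a1 := Finset.card_sdiff_add_card e₂ e₁
        have a2 := Finset.card_sdiff_add_card f (e₁ ∪ e₂)
        rw [Finset.union_comm e₂ e₁] at a1
        rw [Finset.union_comm f] at a2
        omega
    _ ≤ ∑ e₁ ∈ Hv, p * (p ^ (e₁ \ {v}).card * ∑ e₂ ∈ Hv, (p ^ (e₂ \ e₁).card *
          (2 ^ (2 * r + 2) * (D / m)))) := by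
        apply Finset.sum_le_sum
        intro e₁ h1
        apply mul_le_mul_of_nonneg_left _ hp
        apply mul_le_mul_of_nonneg_left _ (by positivity)
        apply Finset.sum_le_sum
        intro e₂ h2
        apply mul_le_mul_of_nonneg_left _ (by positivity)
        refine (kmv_sum_f r d H hH hd p hp hn hm (e₁ ∪ e₂)).trans ?_
        rw [hDm]
        have hc : (e₁ ∪ e₂).card ≤ 2 * r + 2 := by
          refine (Finset.card_union_le _ _).trans ?_
          rw [hH _ (Finset.mem_filter.1 h1).1, hH _ (Finset.mem_filter.1 h2).1]
          omega
        gcongr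
        norm_num
    _ ≤ ∑ e₁ ∈ Hv, p * (p ^ (e₁ \ {v}).card * ((2 ^ (r + 1) * D) *
          (2 ^ (2 * r + 2) * (D / m)))) := by
        apply Finset.sum_le_sum
        intro e₁ h1
        apply mul_le_mul_of_nonneg_left _ hp
        apply mul_le_mul_of_nonneg_left _ (by positivity)
        rw [← Finset.sum_mul]
        apply mul_le_mul_of_nonneg_right _ (by positivity)
        have := kmv_sum_e r d H hH hd p hp hn hm (by rw [← hmdef, ← hDdef]; exact hD) e₁ v
          (Finset.mem_filter.1 h1).2
        rw [hH _ (Finset.mem_filter.1 h1).1, ← hmdef, ← hDdef] at this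
        exact this
    _ = p * ((∑ e₁ ∈ Hv, p ^ (e₁ \ {v}).card) * ((2 ^ (r + 1) * D) *
          (2 ^ (2 * r + 2) * (D / m)))) := by
        rw [Finset.sum_mul, Finset.mul_sum]
    _ ≤ p * ((2 * D) * ((2 ^ (r + 1) * D) * (2 ^ (2 * r + 2) * (D / m)))) := by
        apply mul_le_mul_of_nonneg_left _ hp
        apply mul_le_mul_of_nonneg_right _ (by positivity)
        have := kmv_sum_e r d H hH hd p hp hn hm (by rw [← hmdef, ← hDdef]; exact hD) {v} v
          (Finset.mem_singleton_self v)
        rw [Finset.card_singleton, ← hmdef, ← hDdef, pow_one] at this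
        exact this
    _ = _ := by
        have : (2 : ℝ) ^ (3 * r + 4) = 2 * 2 ^ (r + 1) * 2 ^ (2 * r + 2) := by
          rw [← pow_succ', ← pow_add]; congr 1; omega
        rw [this]; ring

lemma kmv_main_ineq {V : Type*} [Fintype V] [DecidableEq V] (r d t K : ℕ) (hr : 2 ≤ r)
    (H : Finset (Finset V)) (hH : ∀ e ∈ H, e.card = r + 1) (hd : maxDegLe r H d)
    (ht : ∀ Z, IsIndep H Z → Z.card ≤ t)
    (p : ℝ) (hp : 0 ≤ p) (hp1 : p ≤ 1 / 2) (hn : 0 < Fintype.card V)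
    (hm : 1 ≤ (Fintype.card V : ℝ) * p) (D : ℝ)
    (hDdef : D = ((Fintype.card V : ℝ) * p) ^ r * (d / Fintype.card V))
    (hD : 1 ≤ D) (hDm : 2 ^ (3 * r + 5) * D ^ 3 ≤ (Fintype.card V : ℝ) * p) :
    (K : ℝ) / 2 ^ (r + 2) * ((Fintype.card V : ℝ) * p) ≤
      K * 2 ^ K * t + 2 * p * (t ^ r * d) := by
  refine le_trans ?_ (kmv_average r d t K (by omega) H hH hd ht p hp hp1)
  have hm0 : 0 < (Fintype.card V : ℝ) * p := by linarith
  have h1 : ∀ v : V, p / 2 ≤ ∑ M ∈ (Finset.univ : Finset (Finset V)).filter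
      (fun M => v ∈ M ∧ KmvGood H M v), kmvMu p M := by
    intro v
    have a1 := kmv_bad_prob r d hr H hH hd p hp (by linarith) hn hm D hDdef hD v
    have a2 := kmv_mu_sum p ({v} : Finset V)
    simp only [Finset.singleton_subset_iff, Finset.card_singleton, pow_one] at a2
    rw [← Finset.sum_filter_add_sum_filter_not _ (fun M => KmvGood H M v),
      Finset.filter_filter, Finset.filter_filter] at a2
    have a3 : 2 ^ (3 * r + 4) * D ^ 3 / ((Fintype.card V : ℝ) * p) ≤ 1 / 2 := by
      rw [div_le_iff₀ hm0]
      rw [pow_succ] at hDm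
      linarith
    have a4 := mul_le_mul_of_nonneg_left a3 hp
    linarith
  calc (K : ℝ) / 2 ^ (r + 2) * ((Fintype.card V : ℝ) * p)
      = (K : ℝ) / 2 ^ (r + 1) * ∑ v : V, p / 2 := by
        rw [Finset.sum_const, nsmul_eq_mul, Finset.card_univ, pow_succ 2 (r + 1)]
        field_simp
    _ ≤ _ := by
        apply mul_le_mul_of_nonneg_left _ (by positivity)
        exact Finset.sum_le_sum (fun v _ => h1 v)

lemma kmv_card_le {V : Type*} [Fintype V] [DecidableEq V] (H : Finset (Finset V))
    (Z : Finset V) (hZ : IsIndep H Z) : Z.card ≤ indepNum H := by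
  unfold indepNum
  apply Finset.le_sup (f := Finset.card)
  simp [hZ]

lemma kmv_one_le {V : Type*} [Fintype V] [DecidableEq V] (r : ℕ) (hr : 2 ≤ r)
    (H : Finset (Finset V)) (hH : ∀ e ∈ H, e.card = r + 1) (hn : 0 < Fintype.card V) :
    1 ≤ indepNum H := by
  obtain ⟨v⟩ := Fintype.card_pos_iff.1 hn
  have := kmv_card_le H {v} (by
    intro e he hs
    have h1 := Finset.card_le_card hs
    rw [hH e he, Finset.card_singleton] at h1
    omega)
  simpa using this

/-- The power form of the bound for large `n / d`. -/
lemma kmv_large {V : Type*} [Fintype V] [DecidableEq V] (r n d : ℕ) (hr : 2 ≤ r)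
    (H : Finset (Finset V)) (hV : Fintype.card V = n) (hn : 0 < n) (hd1 : 1 ≤ d)
    (hH : ∀ e ∈ H, e.card = r + 1) (hd : maxDegLe r H d)
    (L : ℝ) (hL : L = Real.log ((n : ℝ) / d))
    (hL1 : 16 * (r : ℝ) ^ 2 ≤ L) (hL2 : 4 * (r : ℝ) * (3 * r + 5) ≤ L) :
    min (1 / (2 ^ (r + 4) * (16 * (r : ℝ) ^ 2))) (1 / (2 ^ ((r + 3) * r) * (8 * (r : ℝ)))) *
      ((n : ℝ) / d * L) ≤ (indepNum H : ℝ) ^ r := by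
  set t := indepNum H with ht
  have hn' : (0 : ℝ) < n := by exact_mod_cast hn
  have hd' : (1 : ℝ) ≤ d := by exact_mod_cast hd1
  have hd0 : (0 : ℝ) < d := by linarith
  have hr' : (2 : ℝ) ≤ r := by exact_mod_cast hr
  have hr0 : (0 : ℝ) < r := by linarith
  set x := (n : ℝ) / d with hx
  have hx0 : 0 < x := div_pos hn' hd0
  have hxL : x = Real.exp L := by rw [hL, Real.exp_log hx0]
  have hxn : x ≤ n := div_le_self hn'.le hd'
  have hL0 : 0 < L := by nlinarith
  set D := Real.exp (L / (4 * r)) with hD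
  set m := Real.exp (L / r + L / (4 * r ^ 2)) with hm
  have hmr : m ^ r = x * D := by
    rw [hm, ← Real.exp_nat_mul, hxL, hD, ← Real.exp_add]
    congr 1
    field_simp
  have hD1 : 1 ≤ D := Real.one_le_exp (by positivity)
  have hm1 : 1 ≤ m := Real.one_le_exp (by positivity)
  have hm0 : 0 < m := by linarith
  have hDbig : (2 : ℝ) ^ (3 * r + 5) ≤ D := by
    have h1 : (2 : ℝ) ^ (3 * r + 5) ≤ (Real.exp 1) ^ (3 * r + 5) := by
      gcongr
      have := Real.add_one_le_exp (1 : ℝ)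
      linarith
    refine h1.trans ?_
    rw [← Real.exp_nat_mul, hD]
    apply Real.exp_le_exp.2
    rw [le_div_iff₀ (by positivity)]
    push_cast
    linarith
  have hD2 : 2 ≤ D := by
    refine le_trans ?_ hDbig
    calc (2 : ℝ) = 2 ^ 1 := by norm_num
      _ ≤ 2 ^ (3 * r + 5) := pow_le_pow_right₀ (by norm_num) (by omega)
  have hD4 : D ^ 4 ≤ m := by
    rw [hD, hm, ← Real.exp_nat_mul]
    apply Real.exp_le_exp.2
    have h1 : ((4 : ℕ) : ℝ) * (L / (4 * r)) = L / r := by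
      push_cast
      field_simp
    rw [h1]
    have : 0 ≤ L / (4 * (r : ℝ) ^ 2) := by positivity
    linarith
  have hmx : m * D ≤ x := by
    rw [hm, hD, hxL, ← Real.exp_add]
    apply Real.exp_le_exp.2
    have h1 : L / r + L / (4 * r ^ 2) + L / (4 * r) = L * ((5 * r + 1) / (4 * r ^ 2)) := by
      field_simp
      ring
    rw [h1]
    have h2 : (5 * (r : ℝ) + 1) / (4 * r ^ 2) ≤ 1 := by
      rw [div_le_one (by positivity)]
      nlinarith
    nlinarith
  set p := m / n with hp
  have hnp : (Fintype.card V : ℝ) * p = m := by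
    rw [hV, hp]; field_simp
  have hp0 : 0 < p := div_pos hm0 hn'
  have hp1 : p ≤ 1 / 2 := by
    rw [hp, div_le_iff₀ hn']
    nlinarith
  set K := ⌊L / (8 * (r : ℝ) ^ 2)⌋₊ with hK
  have hy0 : 0 ≤ L / (8 * (r : ℝ) ^ 2) := by positivity
  have hy2 : 2 ≤ L / (8 * (r : ℝ) ^ 2) := by
    rw [le_div_iff₀ (by positivity)]; linarith
  have hKle : (K : ℝ) ≤ L / (8 * (r : ℝ) ^ 2) := Nat.floor_le hy0
  have hKge : L / (16 * (r : ℝ) ^ 2) ≤ K := by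
    have h1 := Nat.lt_floor_add_one (L / (8 * (r : ℝ) ^ 2))
    have h2 : L / (16 * (r : ℝ) ^ 2) = L / (8 * (r : ℝ) ^ 2) / 2 := by
      field_simp
      norm_num
    rw [h2]
    rw [← hK] at h1
    linarith
  have hKpos : (0 : ℝ) < K := lt_of_lt_of_le (by positivity) hKge
  have main := kmv_main_ineq r d t K hr H hH hd (kmv_card_le H) p hp0.le hp1
    (by rw [hV]; exact hn) (by rw [hnp]; exact hm1) D (by
      rw [hnp, hmr, hV]
      rw [hx]
      field_simp) hD1 (by
      rw [hnp]
      refine le_trans ?_ hD4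
      calc (2 : ℝ) ^ (3 * r + 5) * D ^ 3 ≤ D * D ^ 3 := by gcongr
        _ = D ^ 4 := by ring)
  rw [hnp] at main
  have hpd : 2 * p * ((t : ℝ) ^ r * d) = 2 * m * (t : ℝ) ^ r / x := by
    rw [hp, hx]
    field_simp
  rw [hpd] at main
  have hxLn : 0 ≤ x * L := by positivity
  by_cases hcase : (2 : ℝ) ^ K * t ≤ m / 2 ^ (r + 3)
  · refine le_trans (mul_le_mul_of_nonneg_right (min_le_left _ _) hxLn) ?_
    have h1 : (K : ℝ) * 2 ^ K * t ≤ K * (m / 2 ^ (r + 3)) := by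
      rw [mul_assoc]
      exact mul_le_mul_of_nonneg_left hcase hKpos.le
    have h2 : (K : ℝ) / 2 ^ (r + 2) * m = 2 * (K * (m / 2 ^ (r + 3))) := by
      rw [pow_succ 2 (r + 2)]
      field_simp
    have h3 : K * (m / 2 ^ (r + 3)) ≤ 2 * m * (t : ℝ) ^ r / x := by linarith
    rw [le_div_iff₀ hx0] at h3
    have h4 : m * (K * x / 2 ^ (r + 4)) ≤ m * (t : ℝ) ^ r := by
      have : m * (K * x / 2 ^ (r + 4)) = K * (m / 2 ^ (r + 3)) * x / 2 := by
        rw [pow_succ 2 (r + 3)]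
        field_simp
      rw [this]
      linarith
    have h5 := le_of_mul_le_mul_left h4 hm0
    refine le_trans ?_ h5
    have h6 : 1 / (2 ^ (r + 4) * (16 * (r : ℝ) ^ 2)) * (x * L) =
        L / (16 * (r : ℝ) ^ 2) * x / 2 ^ (r + 4) := by
      field_simp
    rw [h6]
    gcongr
  · refine le_trans (mul_le_mul_of_nonneg_right (min_le_right _ _) hxLn) ?_
    push Not at hcase
    have h1 : (2 : ℝ) ^ K ≤ Real.exp (L / (8 * (r : ℝ) ^ 2)) := by
      calc (2 : ℝ) ^ K ≤ (Real.exp 1) ^ K := by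
            gcongr
            have := Real.add_one_le_exp (1 : ℝ)
            linarith
        _ = Real.exp K := by rw [← Real.exp_nat_mul, mul_one]
        _ ≤ _ := Real.exp_le_exp.2 hKle
    have h2 : m = Real.exp (L / (8 * (r : ℝ) ^ 2)) * Real.exp (L / r + L / (8 * (r : ℝ) ^ 2)) := by
      rw [hm, ← Real.exp_add]
      congr 1
      field_simp
      ring
    set q := Real.exp (L / r + L / (8 * (r : ℝ) ^ 2)) with hq
    have hq0 : 0 < q := Real.exp_pos _
    have h3 : q / 2 ^ (r + 3) ≤ t := by
      have h4 : Real.exp (L / (8 * (r : ℝ) ^ 2)) * (q / 2 ^ (r + 3)) ≤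
          Real.exp (L / (8 * (r : ℝ) ^ 2)) * t := by
        calc _ = m / 2 ^ (r + 3) := by rw [h2]; ring
          _ ≤ 2 ^ K * t := hcase.le
          _ ≤ _ := by gcongr
      exact le_of_mul_le_mul_left h4 (Real.exp_pos _)
    have h5 : q ^ r = x * Real.exp (L / (8 * r)) := by
      rw [hq, ← Real.exp_nat_mul, hxL, ← Real.exp_add]
      congr 1
      field_simp
    have h6 : L / (8 * r) ≤ Real.exp (L / (8 * r)) := by
      have := Real.add_one_le_exp (L / (8 * r))
      linarith
    calc 1 / (2 ^ ((r + 3) * r) * (8 * (r : ℝ))) * (x * L)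
        = x * (L / (8 * r)) / 2 ^ ((r + 3) * r) := by field_simp
      _ ≤ x * Real.exp (L / (8 * r)) / 2 ^ ((r + 3) * r) := by gcongr
      _ = (q / 2 ^ (r + 3)) ^ r := by rw [div_pow, h5, ← pow_mul]
      _ ≤ (t : ℝ) ^ r := by gcongr

/-- For every integer `r ≥ 2` there exists a constant `c > 0` such that
for all integers `n ≥ 2` and `d` with `1 ≤ d` and `d < n/(log n)^(3r²)`, every
`(r+1)`-graph `H` on `n` vertices with maximum `r`-degree at most `d` satisfies
`α(H) ≥ c·((n/d)·log(n/d))^(1/r)`. -/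
theorem stmt0 (r : ℕ) (hr : 2 ≤ r) :
    ∃ c : ℝ, 0 < c ∧
      ∀ (V : Type) [Fintype V] [DecidableEq V], ∀ (n d : ℕ) (H : Finset (Finset V)),
        Fintype.card V = n → 2 ≤ n → 1 ≤ d →
        (d : ℝ) < (n : ℝ) / (Real.log n) ^ (3 * r ^ 2) →
        (∀ e ∈ H, e.card = r + 1) →
        maxDegLe r H d →
        c * (((n : ℝ) / d) * Real.log ((n : ℝ) / d)) ^ ((1 : ℝ) / r) ≤ (indepNum H : ℝ) := by

  set c₁ : ℝ := min (1 / (2 ^ (r + 4) * (16 * (r : ℝ) ^ 2)))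
    (1 / (2 ^ ((r + 3) * r) * (8 * (r : ℝ)))) with hc₁
  set B : ℝ := 16 * (r : ℝ) ^ 2 + 4 * (r : ℝ) * (3 * r + 5) with hB
  set G : ℝ := Real.exp B * B + 1 with hG
  have hr' : (2 : ℝ) ≤ r := by exact_mod_cast hr
  have hr0 : (0 : ℝ) < r := by linarith
  have hB0 : 0 < B := by positivity
  have hG1 : 1 ≤ G := by
    have : 0 < Real.exp B * B := by positivity
    linarith
  have hc₁0 : 0 < c₁ := lt_min (by positivity) (by positivity)
  have hinv : (1 : ℝ) / r ≤ 1 := by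
    rw [div_le_one hr0]; linarith
  have hinv0 : (0 : ℝ) ≤ 1 / r := by positivity
  refine ⟨min (min c₁ 1) (1 / G), lt_min (lt_min hc₁0 one_pos) (by positivity), ?_⟩
  intro V _ _ n d H hV hn hd1 _ hH hd
  have hn0 : 0 < n := by omega
  have hn' : (0 : ℝ) < n := by exact_mod_cast hn0
  have hd0 : (0 : ℝ) < d := by exact_mod_cast hd1
  have hx0 : (0 : ℝ) < (n : ℝ) / d := div_pos hn' hd0
  set x := (n : ℝ) / d with hx
  by_cases hL : B ≤ Real.log x
  · have hlog : 0 < Real.log x := by linarith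
    have h1 := kmv_large r n d hr H hV hn0 hd1 hH hd (Real.log x) rfl
      (by have : 0 ≤ 4 * (r : ℝ) * (3 * r + 5) := by positivity
          linarith)
      (by have : 0 ≤ 16 * (r : ℝ) ^ 2 := by positivity
          linarith)
    rw [← hc₁, ← hx] at h1
    have hxl : 0 ≤ x * Real.log x := by positivity
    set c := min (min c₁ 1) (1 / G) with hc
    have hc0 : 0 < c := lt_min (lt_min hc₁0 one_pos) (by positivity)
    have hcc : c ≤ c₁ := (min_le_left _ _).trans (min_le_left _ _)
    have hc1 : c ≤ 1 := (min_le_left _ _).trans (min_le_right _ _)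
    have h2 : (c * (x * Real.log x) ^ ((1 : ℝ) / r)) ^ r ≤ (indepNum H : ℝ) ^ r := by
      rw [mul_pow, one_div, Real.rpow_inv_natCast_pow hxl (by omega)]
      refine le_trans ?_ h1
      apply mul_le_mul_of_nonneg_right _ hxl
      exact (pow_le_of_le_one hc0.le hc1 (by omega)).trans hcc
    exact le_of_pow_le_pow_left₀ (by omega) (by positivity) h2
  · push Not at hL
    have h1 : (1 : ℝ) ≤ indepNum H := by
      exact_mod_cast kmv_one_le r hr H hH (by rw [hV]; exact hn0)
    refine le_trans ?_ h1
    have habs : |x * Real.log x| ≤ G := by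
      by_cases hx1 : x ≤ 1
      · have := Real.abs_log_mul_self_lt x hx0 hx1
        rw [mul_comm]
        linarith
      · push Not at hx1
        have hl0 : 0 ≤ Real.log x := Real.log_nonneg hx1.le
        rw [abs_of_nonneg (by positivity)]
        have hxB : x ≤ Real.exp B := by
          rw [← Real.exp_log hx0]
          exact Real.exp_le_exp.2 hL.le
        have : x * Real.log x ≤ Real.exp B * B :=
          mul_le_mul hxB hL.le hl0 (Real.exp_pos _).le
        linarith
    have h2 : (x * Real.log x) ^ ((1 : ℝ) / r) ≤ G := by
      calc (x * Real.log x) ^ ((1 : ℝ) / r) ≤ |(x * Real.log x) ^ ((1 : ℝ) / r)| := le_abs_self _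
        _ ≤ |x * Real.log x| ^ ((1 : ℝ) / r) := Real.abs_rpow_le_abs_rpow _ _
        _ ≤ G ^ ((1 : ℝ) / r) := Real.rpow_le_rpow (abs_nonneg _) habs hinv0
        _ ≤ G ^ (1 : ℝ) := Real.rpow_le_rpow_of_exponent_le hG1 hinv
        _ = G := Real.rpow_one G
    set c := min (min c₁ 1) (1 / G) with hc
    have hc0 : 0 < c := lt_min (lt_min hc₁0 one_pos) (by positivity)
    have hcG : c ≤ 1 / G := min_le_right _ _
    calc c * (x * Real.log x) ^ ((1 : ℝ) / r) ≤ c * G := mul_le_mul_of_nonneg_left h2 hc0.le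
      _ ≤ 1 / G * G := by gcongr
      _ = 1 := by field_simp
end

section
/- Let c_r = (r! / (r·(3r−1)·2^r·(−log(1−2^{−r}))))^{1/r}. For every integer r ≥ 2 and every real ε > 0 there exists n₀ such that for all integers n ≥ n₀ and all integers d with 1 ≤ d ≤ n/(log n)^{3r²}, every (r+1)-graph H on n vertices with maximum r-degree at most d satisfies α(H) ≥ (1−ε)·c_r·((n/d)·log(n/d))^{1/r}. -/
open Finset
open scoped Classical

/-- Independent subsets of `W`. -/
noncomputable def indSets {V : Type} [DecidableEq V] (H : Finset (Finset V)) (W : Finset V) :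
    Finset (Finset V) := W.powerset.filter (fun Z => IsIndep H Z)

/-- The `r`-subsets `S` of `Z` such that `S ∪ {v}` is an edge. -/
noncomputable def lnk {V : Type} [DecidableEq V] (r : ℕ) (H : Finset (Finset V)) (v : V)
    (Z : Finset V) : Finset (Finset V) := (Z.powersetCard r).filter (fun S => insert v S ∈ H)

lemma mem_lnk {V : Type} [DecidableEq V] {r : ℕ} {H : Finset (Finset V)} {v : V}
    {Z S : Finset V} : S ∈ lnk r H v Z ↔ S ⊆ Z ∧ S.card = r ∧ insert v S ∈ H := by
  simp [lnk, mem_powersetCard, and_assoc]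

lemma mem_indSets {V : Type} [DecidableEq V] {H : Finset (Finset V)}
    {Z W : Finset V} : Z ∈ indSets H W ↔ Z ⊆ W ∧ IsIndep H Z := by
  simp [indSets]

lemma disj_count {V : Type} [DecidableEq V] (r : ℕ) (F : Finset (Finset V)) :
    ∀ A : Finset V, (∀ S ∈ F, S ⊆ A) → (∀ S ∈ F, S.card = r) →
      (∀ S ∈ F, ∀ S' ∈ F, S ≠ S' → Disjoint S S') →
      (2 : ℝ) ^ A.card * (1 - 1 / 2 ^ r) ^ F.card ≤
        ((A.powerset.filter (fun B => ∀ S ∈ F, ¬ S ⊆ B)).card : ℝ) := by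
  induction F using Finset.induction_on with
  | empty => intro A _ _ _; simp
  | insert S F hS ih =>
    intro A hA hr hd
    have hSA := hA S (mem_insert_self _ _)
    have hSr := hr S (mem_insert_self _ _)
    have hdis : ∀ S' ∈ F, Disjoint S' S := fun S' h' =>
      hd S' (mem_insert_of_mem h') S (mem_insert_self _ _) (by rintro rfl; exact hS h')
    have h1 := ih (A \ S)
      (fun S' h' => subset_sdiff.2 ⟨hA S' (mem_insert_of_mem h'), hdis S' h'⟩)
      (fun S' h' => hr S' (mem_insert_of_mem h'))
      (fun S' h' S'' h'' => hd S' (mem_insert_of_mem h') S'' (mem_insert_of_mem h''))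
    have h2 : (S.powerset.erase S ×ˢ
        ((A \ S).powerset.filter (fun B => ∀ S ∈ F, ¬ S ⊆ B))).card ≤
        (A.powerset.filter (fun B => ∀ S' ∈ insert S F, ¬ S' ⊆ B)).card := by
      apply Finset.card_le_card_of_injOn (fun x => x.1 ∪ x.2)
      · rintro ⟨B1, B2⟩ hB
        simp only [coe_product, Set.mem_prod, mem_coe, mem_erase, mem_powerset, mem_filter] at hB
        obtain ⟨⟨hne, hB1⟩, hB2, hF⟩ := hB
        simp only [mem_coe, mem_filter, mem_powerset]
        refine ⟨union_subset (hB1.trans hSA) (hB2.trans sdiff_subset), ?_⟩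
        intro S' h' hsub
        rcases mem_insert.1 h' with rfl | h'
        · apply hne
          apply Subset.antisymm hB1
          intro x hx
          rcases mem_union.1 (hsub hx) with h | h
          · exact h
          · exact absurd hx (mem_sdiff.1 (hB2 h)).2
        · apply hF S' h'
          intro x hx
          rcases mem_union.1 (hsub hx) with h | h
          · exact absurd (hB1 h) (disjoint_left.1 (hdis S' h') hx)
          · exact h
      · rintro ⟨B1, B2⟩ hB ⟨C1, C2⟩ hC heq
        simp only [coe_product, Set.mem_prod, mem_coe, mem_erase, mem_powerset, mem_filter] at hB hC heq
        have e1 : ∀ B1 B2 : Finset V, B1 ⊆ S → B2 ⊆ A \ S → (B1 ∪ B2) ∩ S = B1 := by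
          intro B1 B2 h1 h2
          ext x
          have := @h1 x
          have := @h2 x
          simp only [mem_inter, mem_union, mem_sdiff] at *
          tauto
        have e2 : ∀ B1 B2 : Finset V, B1 ⊆ S → B2 ⊆ A \ S → (B1 ∪ B2) \ S = B2 := by
          intro B1 B2 h1 h2
          ext x
          have := @h1 x
          have := @h2 x
          simp only [mem_union, mem_sdiff] at *
          tauto
        ext1
        · show B1 = C1
          rw [← e1 B1 B2 hB.1.2 hB.2.1, heq, e1 C1 C2 hC.1.2 hC.2.1]
        · show B2 = C2
          rw [← e2 B1 B2 hB.1.2 hB.2.1, heq, e2 C1 C2 hC.1.2 hC.2.1]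
    rw [card_product, card_erase_of_mem (by simp), card_powerset, hSr] at h2
    have h3 : (A \ S).card + r = A.card := by
      rw [← hSr]; exact card_sdiff_add_card_eq_card hSA
    rw [card_insert_of_notMem hS, ← h3]
    have h4 : (((2 ^ r - 1 : ℕ)) : ℝ) = 2 ^ r - 1 := by
      rw [Nat.cast_sub Nat.one_le_two_pow]; simp
    calc (2 : ℝ) ^ ((A \ S).card + r) * (1 - 1 / 2 ^ r) ^ (F.card + 1)
        = (2 ^ r - 1) * (2 ^ (A \ S).card * (1 - 1 / 2 ^ r) ^ F.card) := by
          have : (2 : ℝ) ^ r ≠ 0 := by positivity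
          have h5 : (2 : ℝ) ^ r * (1 - 1 / 2 ^ r) = 2 ^ r - 1 := by field_simp
          rw [← h5, pow_add, pow_succ]; ring
      _ ≤ (2 ^ r - 1) * ((((A \ S).powerset.filter (fun B => ∀ S ∈ F, ¬ S ⊆ B)).card : ℕ) : ℝ) := by
          apply mul_le_mul_of_nonneg_left h1
          have : (1 : ℝ) ≤ 2 ^ r := one_le_pow₀ (by norm_num)
          linarith
      _ ≤ _ := by rw [← h4]; exact_mod_cast h2

lemma sum_count {V : Type} [DecidableEq V] (r : ℕ) (F : Finset (Finset V)) (A : Finset V)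
    (hA : ∀ S ∈ F, S ⊆ A) (hr : ∀ S ∈ F, S.card = r) :
    ∑ B ∈ A.powerset, ((F.filter (fun S => S ⊆ B)).card : ℝ) = F.card * (2 ^ A.card / 2 ^ r) := by
  have h : ∀ S ∈ F, ((A.powerset.filter (fun B => S ⊆ B)).card : ℝ) = 2 ^ A.card / 2 ^ r := by
    intro S hS
    have : A.powerset.filter (fun B => S ⊆ B) = Finset.Icc S A := by
      ext B; simp [and_comm]
    rw [this, card_Icc_finset (hA S hS), hr S hS]
    have := card_le_card (hA S hS)
    rw [hr S hS] at this
    rw [eq_div_iff (by positivity)]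
    push_cast
    rw [← pow_add, Nat.sub_add_cancel this]
  have h2 : ∑ B ∈ A.powerset, ((F.filter (fun S => S ⊆ B)).card) =
     ∑ S ∈ F, (A.powerset.filter (fun B => S ⊆ B)).card := by
    simp only [card_filter]
    rw [sum_comm]
  rw [← Nat.cast_sum, h2, Nat.cast_sum, sum_congr rfl h]
  simp

/-- The good local structure. -/
def Nice {V : Type} [DecidableEq V] (r : ℕ) (H : Finset (Finset V)) (v : V) (W : Finset V) : Prop :=
  (∀ S ∈ lnk r H v W, ∀ S' ∈ lnk r H v W, S ≠ S' → Disjoint S S') ∧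
  (∀ e ∈ H, e ⊆ W → (e ∩ (lnk r H v W).biUnion id).card ≤ 1)

lemma fiber_eq {V : Type} [DecidableEq V] (H : Finset (Finset V))
    (W N Y : Finset V) (hNW : N ⊆ W)
    (hN : ∀ e ∈ H, e ⊆ W → (e ∩ N).card ≤ 1) (hY : Y ⊆ W \ N) (hYi : IsIndep H Y) :
    (indSets H W).filter (fun Z => Z \ N = Y) =
      ((N.filter (fun u => ∀ e ∈ H, u ∈ e → ¬ e ⊆ insert u Y)).powerset).image (fun B => Y ∪ B) := by
  ext Z
  simp only [mem_filter, mem_indSets, mem_image, mem_powerset]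
  constructor
  · rintro ⟨⟨hZW, hZ⟩, rfl⟩
    refine ⟨Z ∩ N, ?_, ?_⟩
    · intro u hu
      rw [mem_inter] at hu
      refine mem_filter.2 ⟨hu.2, fun e he _ hsub => hZ e he (hsub.trans ?_)⟩
      exact insert_subset hu.1 sdiff_subset
    · exact sdiff_union_inter Z N
  · rintro ⟨B, hB, rfl⟩
    have hBN : B ⊆ N := hB.trans (filter_subset _ _)
    have hYW : Y ⊆ W := hY.trans sdiff_subset
    have hYN : ∀ x ∈ Y, x ∉ N := fun x hx => (mem_sdiff.1 (hY hx)).2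
    refine ⟨⟨union_subset hYW (hBN.trans hNW), ?_⟩, ?_⟩
    · intro e he hsub
      have hcard := hN e he (hsub.trans (union_subset hYW (hBN.trans hNW)))
      by_cases hex : ∃ u ∈ e, u ∈ B
      · obtain ⟨u, hue, huB⟩ := hex
        refine (mem_filter.1 (hB huB)).2 e he hue ?_
        intro w hw
        rcases mem_union.1 (hsub hw) with h | h
        · exact mem_insert_of_mem h
        · have := card_le_one.1 hcard w (mem_inter.2 ⟨hw, hBN h⟩) u (mem_inter.2 ⟨hue, hBN huB⟩)
          rw [this]; exact mem_insert_self _ _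
      · push Not at hex
        apply hYi e he
        intro w hw
        rcases mem_union.1 (hsub hw) with h | h
        · exact h
        · exact absurd h (hex w hw)
    · ext x
      have := @hBN x
      have := hYN x
      simp only [mem_sdiff, mem_union]
      tauto

lemma nice_ineq {V : Type} [DecidableEq V] (r : ℕ) (hr : 1 ≤ r) (H : Finset (Finset V))
    (v : V) (W : Finset V) (hn : Nice r H v W) (t : ℝ) :
    Real.exp (-t) * ((1 + t) * ((indSets H W).card : ℝ) -
      (-Real.log (1 - 1 / 2 ^ r)) * 2 ^ r * ∑ Z ∈ indSets H W, ((lnk r H v Z).card : ℝ)) ≤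
      (((indSets H W).filter (fun Z => lnk r H v Z = ∅)).card : ℝ) := by
  obtain ⟨hdis, hN⟩ := hn
  set N := (lnk r H v W).biUnion id with hNdef
  set x := -Real.log (1 - 1 / 2 ^ r) with hx
  have hNW : N ⊆ W := by
    intro u hu
    rw [hNdef, mem_biUnion] at hu
    obtain ⟨S, hS, hu⟩ := hu
    exact (mem_lnk.1 hS).1 hu
  suffices h : 0 ≤ ∑ Z ∈ indSets H W, ((if lnk r H v Z = ∅ then (1 : ℝ) else 0) -
      Real.exp (-t) * ((1 + t) - x * 2 ^ r * ((lnk r H v Z).card : ℝ))) by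
    rw [sum_sub_distrib, ← mul_sum, sum_sub_distrib, ← mul_sum, sum_const, nsmul_eq_mul,
      ← sum_filter, sum_const, nsmul_eq_mul] at h
    linarith
  rw [← sum_fiberwise_of_maps_to (g := fun Z => Z \ N) (t := (indSets H W).image (fun Z => Z \ N))
    (fun Z hZ => mem_image_of_mem _ hZ)]
  apply sum_nonneg
  intro Y hY
  obtain ⟨Z0, hZ0, rfl⟩ := mem_image.1 hY
  rw [mem_indSets] at hZ0
  set Y := Z0 \ N with hYdef
  have hYW : Y ⊆ W \ N := sdiff_subset_sdiff hZ0.1 le_rfl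
  have hYi : IsIndep H Y := fun e he hs => hZ0.2 e he (hs.trans sdiff_subset)
  rw [fiber_eq H W N Y hNW hN hYW hYi]
  set A := N.filter (fun u => ∀ e ∈ H, u ∈ e → ¬ e ⊆ insert u Y) with hA
  have hYN : ∀ x ∈ Y, x ∉ N := fun x hx => (mem_sdiff.1 (hYW hx)).2
  have hAN : A ⊆ N := filter_subset _ _
  rw [sum_image]
  swap
  · intro B hB C hC heq
    simp only [coe_powerset, Set.mem_preimage, Set.mem_powerset_iff, coe_subset] at hB hC
    ext u
    have h1 := @hB u
    have h2 := @hC u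
    have h3 := hYN u
    have h4 := @hAN u
    have h5 := Finset.ext_iff.1 heq u
    simp only [mem_union] at h5
    tauto
  set F := (lnk r H v W).filter (fun S => S ⊆ A) with hF
  have hFA : ∀ S ∈ F, S ⊆ A := fun S hS => (mem_filter.1 hS).2
  have hFr : ∀ S ∈ F, S.card = r := fun S hS => (mem_lnk.1 (mem_filter.1 hS).1).2.1
  have hlnk : ∀ B ∈ A.powerset, lnk r H v (Y ∪ B) = F.filter (fun S => S ⊆ B) := by
    intro B hB
    rw [mem_powerset] at hB
    ext S
    simp only [hF, mem_filter, mem_lnk]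
    constructor
    · rintro ⟨h1, h2, h3⟩
      have h4 : S ⊆ W := h1.trans (union_subset (hYW.trans sdiff_subset)
        (hB.trans (hAN.trans hNW)))
      have h5 : S ⊆ N := by
        intro u hu
        rw [hNdef, mem_biUnion]
        exact ⟨S, mem_lnk.2 ⟨h4, h2, h3⟩, hu⟩
      have h6 : S ⊆ B := by
        intro u hu
        rcases mem_union.1 (h1 hu) with h | h
        · exact absurd (h5 hu) (hYN u h)
        · exact h
      exact ⟨⟨⟨h4, h2, h3⟩, h6.trans hB⟩, h6⟩
    · rintro ⟨⟨⟨h1, h2, h3⟩, h4⟩, h5⟩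
      exact ⟨h5.trans subset_union_right, h2, h3⟩
  have hsum : ∑ B ∈ A.powerset, ((if lnk r H v (Y ∪ B) = ∅ then (1 : ℝ) else 0) -
      Real.exp (-t) * ((1 + t) - x * 2 ^ r * ((lnk r H v (Y ∪ B)).card : ℝ))) =
      ((A.powerset.filter (fun B => ∀ S ∈ F, ¬ S ⊆ B)).card : ℝ) -
      Real.exp (-t) * ((1 + t) * 2 ^ A.card - x * 2 ^ r * (F.card * (2 ^ A.card / 2 ^ r))) := by
    rw [← sum_count r F A hFA hFr, sum_sub_distrib, ← mul_sum, sum_sub_distrib, ← mul_sum,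
      sum_const, nsmul_eq_mul, card_powerset]
    congr 1
    · rw [← sum_filter, sum_const, nsmul_eq_mul, mul_one]
      congr 2
      apply filter_congr
      intro B hB
      rw [hlnk B hB, filter_eq_empty_iff]
    · push_cast
      rw [mul_comm ((2 : ℝ) ^ A.card)]
      congr 3
      apply sum_congr rfl
      intro B hB
      rw [hlnk B hB]
  rw [hsum]
  have h1 := disj_count r F A hFA hFr (fun S hS S' hS' => hdis S (mem_filter.1 hS).1 S' (mem_filter.1 hS').1)
  have hq : (0 : ℝ) < 1 - 1 / 2 ^ r := by
    have h2 : (2 : ℝ) ≤ 2 ^ r := by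
      calc (2 : ℝ) = 2 ^ 1 := by norm_num
        _ ≤ 2 ^ r := pow_le_pow_right₀ (by norm_num) hr
    have : (1 : ℝ) / 2 ^ r ≤ 1 / 2 := one_div_le_one_div_of_le (by norm_num) h2
    linarith
  have h2 : (1 - 1 / 2 ^ r : ℝ) ^ F.card = Real.exp (-t) * Real.exp (t - x * F.card) := by
    rw [← Real.exp_add, hx]
    nth_rewrite 1 [← Real.exp_log hq]
    rw [← Real.exp_nat_mul]
    congr 1
    ring
  have h3 := Real.add_one_le_exp (t - x * F.card)
  rw [h2] at h1
  have h4 : x * 2 ^ r * (F.card * (2 ^ A.card / 2 ^ r)) = 2 ^ A.card * (x * F.card) := by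
    field_simp
  rw [h4]
  have h5 : (2 : ℝ) ^ A.card * (Real.exp (-t) * (t - x * F.card + 1)) ≤
     2 ^ A.card * (Real.exp (-t) * Real.exp (t - x * F.card)) := by gcongr
  linarith

lemma deg_count {V : Type} [Fintype V] [DecidableEq V] (r d : ℕ) (H : Finset (Finset V))
    (hH : ∀ e ∈ H, e.card = r + 1) (hd : maxDegLe r H d) (I : Finset V) (hI : I.card ≤ r) :
    (H.filter (fun e => I ⊆ e)).card ≤ Fintype.card V ^ (r - I.card) * d := by
  have h1 : H.filter (fun e => I ⊆ e) ⊆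
      (((univ : Finset V).powersetCard (r - I.card)).filter (fun R => (I ∪ R).card = r)).biUnion
        (fun R => H.filter (fun e => I ∪ R ⊆ e)) := by
    intro e he
    rw [mem_filter] at he
    obtain ⟨S, h1, h2, h3⟩ := Finset.exists_subsuperset_card_eq he.2 hI
      (by rw [hH e he.1]; omega)
    simp only [mem_biUnion, mem_filter, mem_powersetCard]
    refine ⟨S \ I, ⟨⟨subset_univ _, ?_⟩, ?_⟩, he.1, ?_⟩
    · rw [card_sdiff_of_subset h1, h3]
    · rw [union_sdiff_of_subset h1, h3]
    · rw [union_sdiff_of_subset h1]; exact h2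
  refine (card_le_card h1).trans ((card_biUnion_le_card_mul _ _ d ?_).trans ?_)
  · intro R hR
    exact hd _ (mem_filter.1 hR).2
  · apply Nat.mul_le_mul_right
    refine (card_filter_le _ _).trans ?_
    rw [card_powersetCard, card_univ]
    exact Nat.choose_le_pow _ _

lemma sup_count {V : Type} [DecidableEq V] (U : Finset V) : ∀ (A : Finset V) (m : ℕ), U ⊆ A →
    ((A.powersetCard m).filter (fun W => U ⊆ W)).card * A.card ^ U.card ≤
      A.card.choose m * m ^ U.card := by
  induction U using Finset.induction_on with
  | empty => intro A m _; simp
  | insert u U hu ih =>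
    intro A m hUA
    have huA : u ∈ A := hUA (mem_insert_self _ _)
    by_cases hm : m ≤ A.card
    swap
    · rw [powersetCard_eq_empty.2 (by omega)]; simp
    rcases Nat.eq_zero_or_pos m with rfl | hm0
    · have : ((A.powersetCard 0).filter (fun W => insert u U ⊆ W)) = ∅ := by
        rw [filter_eq_empty_iff]
        intro W hW hs
        rw [powersetCard_zero, mem_singleton] at hW
        subst hW
        exact absurd (hs (mem_insert_self u U)) (notMem_empty _)
      rw [this]; simp
    obtain ⟨m, rfl⟩ : ∃ k, m = k + 1 := ⟨m - 1, by omega⟩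
    obtain ⟨a, ha⟩ : ∃ a, A.card = a + 1 := ⟨A.card - 1, by omega⟩
    have hea : (A.erase u).card = a := by rw [card_erase_of_mem huA, ha]; rfl
    have hUe : U ⊆ A.erase u := by
      intro w hw
      exact mem_erase.2 ⟨by rintro rfl; exact hu hw, hUA (mem_insert_of_mem hw)⟩
    have h1 := ih (A.erase u) m hUe
    rw [hea] at h1
    have h2 : ((A.powersetCard (m + 1)).filter (fun W => insert u U ⊆ W)).card ≤
        (((A.erase u).powersetCard m).filter (fun W => U ⊆ W)).card := by
      apply card_le_card_of_injOn (fun W => W.erase u)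
      · intro W hW
        simp only [mem_coe, mem_filter, mem_powersetCard] at hW ⊢
        have huW := hW.2 (mem_insert_self u U)
        refine ⟨⟨erase_subset_erase _ hW.1.1, ?_⟩, ?_⟩
        · rw [card_erase_of_mem huW, hW.1.2]; rfl
        · intro w hw
          exact mem_erase.2 ⟨by rintro rfl; exact hu hw, hW.2 (mem_insert_of_mem hw)⟩
      · intro W hW W' hW' heq
        simp only [mem_coe, mem_filter, mem_powersetCard] at hW hW'
        have huW := hW.2 (mem_insert_self u U)
        have huW' := hW'.2 (mem_insert_self u U)
        simp only at heq
        rw [← insert_erase huW, heq, insert_erase huW']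
    set c := (((A.erase u).powersetCard m).filter (fun W => U ⊆ W)).card
    rw [card_insert_of_notMem hu, ha]
    set k := U.card with hk
    have h3 : c * (a + 1) ^ k ≤ a.choose m * (m + 1) ^ k := by
      rcases Nat.eq_zero_or_pos a with ha0 | ha0
      · have : k = 0 := by
          have := card_le_card hUe
          omega
        rw [this] at h1 ⊢
        simpa using h1
      · have h4 : 0 < a ^ k := pow_pos ha0 k
        refine Nat.le_of_mul_le_mul_right ?_ h4
        calc c * (a + 1) ^ k * a ^ k = c * a ^ k * (a + 1) ^ k := by ring
          _ ≤ a.choose m * m ^ k * (a + 1) ^ k := Nat.mul_le_mul_right _ h1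
          _ = a.choose m * (m * (a + 1)) ^ k := by rw [mul_pow]; ring
          _ ≤ a.choose m * ((m + 1) * a) ^ k := by
            apply Nat.mul_le_mul_left
            apply Nat.pow_le_pow_left
            nlinarith
          _ = _ := by rw [mul_pow]; ring
    calc _ ≤ c * (a + 1) ^ (k + 1) := Nat.mul_le_mul_right _ h2
      _ = (c * (a + 1) ^ k) * (a + 1) := by ring
      _ ≤ (a.choose m * (m + 1) ^ k) * (a + 1) := Nat.mul_le_mul_right _ h3
      _ = ((a + 1) * a.choose m) * (m + 1) ^ k := by ring
      _ = ((a + 1).choose (m + 1) * (m + 1)) * (m + 1) ^ k := by rw [Nat.add_one_mul_choose_eq]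
      _ = _ := by ring

/-- `m`-subsets avoiding `v` and containing `U`. -/
noncomputable def wset {V : Type} [Fintype V] [DecidableEq V] (v : V) (m : ℕ) (U : Finset V) :
    Finset (Finset V) := (((univ : Finset V).erase v).powersetCard m).filter (fun W => U ⊆ W)

lemma wset_card {V : Type} [Fintype V] [DecidableEq V] (v : V) (m : ℕ) (U : Finset V)
    (hv : v ∉ U) (hn : 2 ≤ Fintype.card V) :
    ((wset v m U).card : ℝ) ≤ ((Fintype.card V - 1).choose m : ℝ) *
      (2 * m / Fintype.card V) ^ U.card := by
  have h := sup_count U ((univ : Finset V).erase v) m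
    (fun w hw => mem_erase.2 ⟨by rintro rfl; exact hv hw, mem_univ _⟩)
  rw [card_erase_of_mem (mem_univ v), card_univ] at h
  have h' : ((wset v m U).card : ℝ) * ((Fintype.card V - 1 : ℕ) : ℝ) ^ U.card ≤
     ((Fintype.card V - 1).choose m : ℝ) * (m : ℝ) ^ U.card := by exact_mod_cast h
  have h2 : ((Fintype.card V - 1 : ℕ) : ℝ) = (Fintype.card V : ℝ) - 1 := by
    rw [Nat.cast_sub (by omega)]; simp
  have hn' : (2 : ℝ) ≤ Fintype.card V := by exact_mod_cast hn
  rw [h2] at h'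
  have hpos : (0 : ℝ) < ((Fintype.card V : ℝ) - 1) ^ U.card := by
    apply pow_pos; linarith
  rw [← le_div_iff₀ hpos, mul_div_assoc, ← div_pow] at h'
  refine h'.trans ?_
  gcongr ?_ * ?_ ^ _
  · apply div_nonneg (by positivity); linarith
  rw [div_le_div_iff₀ (by linarith) (by linarith)]
  have : (0 : ℝ) ≤ m := by positivity
  nlinarith

lemma not_nice {V : Type} [DecidableEq V] (r : ℕ) (H : Finset (Finset V))
    (hH : ∀ e ∈ H, e.card = r + 1) (v : V) (W : Finset V) (hv : v ∉ W) (hn : ¬ Nice r H v W) :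
    (∃ f ∈ H, v ∈ f ∧ ∃ e ∈ H, e ≠ f ∧ 2 ≤ (e ∩ f).card ∧ (f ∪ e).erase v ⊆ W) ∨
    (∃ f ∈ H, v ∈ f ∧ ∃ g ∈ H, v ∈ g ∧ ∃ x ∈ f, ∃ y ∈ g, x ≠ y ∧ ∃ e ∈ H, x ∈ e ∧ y ∈ e ∧
      ((f ∪ g ∪ e).erase v).card + 1 = 3 * r ∧ (f ∪ g ∪ e).erase v ⊆ W) := by
  by_contra hcon
  push Not at hcon
  obtain ⟨hA, hB⟩ := hcon
  have er : ∀ S : Finset V, S ⊆ W → (insert v S).erase v = S := fun S hS =>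
    erase_insert (fun h => hv (hS h))
  have key : ∀ f ∈ H, v ∈ f → ∀ e ∈ H, e ≠ f → f.erase v ⊆ W → e.erase v ⊆ W →
      (e ∩ f).card ≤ 1 := by
    intro f hf hvf e he hne h1 h2
    by_contra h
    refine hA f hf hvf e he hne (by omega) ?_
    rw [erase_union_distrib]
    exact union_subset h1 h2
  have hdisj : ∀ S ∈ lnk r H v W, ∀ S' ∈ lnk r H v W, S ≠ S' → Disjoint S S' := by
    intro S hS S' hS' hne
    rw [mem_lnk] at hS hS'
    rw [disjoint_left]
    intro x hx hx'
    have h := key _ hS.2.2 (mem_insert_self _ _) _ hS'.2.2 (by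
      intro h
      apply hne
      rw [← er S hS.1, ← er S' hS'.1, h]) (by rw [er S hS.1]; exact hS.1)
        (by rw [er S' hS'.1]; exact hS'.1)
    have := card_le_one.1 h v (by simp) x (by simp [hx, hx'])
    subst this
    exact hv (hS.1 hx)
  apply hn
  refine ⟨hdisj, ?_⟩
  intro e he heW
  have hve : v ∉ e := fun h => hv (heW h)
  have hee : e.erase v ⊆ W := (erase_subset _ _).trans heW
  rw [card_le_one]
  intro x hx y hy
  by_contra hxy
  simp only [mem_inter, mem_biUnion, id] at hx hy
  obtain ⟨hxe, S, hS, hxS⟩ := hx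
  obtain ⟨hye, S', hS', hyS'⟩ := hy
  have hkS : ∀ S ∈ lnk r H v W, (e ∩ insert v S).card ≤ 1 := by
    intro S hS
    rw [mem_lnk] at hS
    refine key _ hS.2.2 (mem_insert_self _ _) e he ?_ (by rw [er S hS.1]; exact hS.1) hee
    intro h
    exact hve (h ▸ mem_insert_self _ _)
  by_cases hSS : S = S'
  · subst hSS
    exact hxy (card_le_one.1 (hkS S hS) x (by simp [hxe, hxS]) y (by simp [hye, hyS']))
  have hdS := hdisj S hS S' hS' hSS
  have h1 := hkS S hS
  have h2 := hkS S' hS'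
  rw [mem_lnk] at hS hS'
  have hU : (insert v S ∪ insert v S' ∪ e).erase v = S ∪ S' ∪ e := by
    rw [erase_union_distrib, erase_union_distrib, er S hS.1, er S' hS'.1, erase_eq_of_notMem hve]
  refine hB _ hS.2.2 (mem_insert_self _ _) _ hS'.2.2 (mem_insert_self _ _) x
    (mem_insert_of_mem hxS) y (mem_insert_of_mem hyS') hxy e he hxe hye ?_ ?_
  · rw [hU]
    have c1 : (S ∪ S').card = 2 * r := by rw [card_union_of_disjoint hdS, hS.2.1, hS'.2.1]; ring
    have c2 : (S ∪ S') ∩ e = {x, y} := by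
      ext z
      simp only [mem_inter, mem_union, mem_insert, mem_singleton]
      constructor
      · rintro ⟨hz | hz, hze⟩
        · left; exact card_le_one.1 h1 z (by simp [hz, hze]) x (by simp [hxe, hxS])
        · right; exact card_le_one.1 h2 z (by simp [hz, hze]) y (by simp [hye, hyS'])
      · rintro (rfl | rfl)
        · exact ⟨Or.inl hxS, hxe⟩
        · exact ⟨Or.inr hyS', hye⟩
    have c3 := card_union_add_card_inter (S ∪ S') e
    rw [c2, c1, hH e he, card_pair hxy] at c3
    omega
  · rw [hU]
    exact union_subset (union_subset hS.1 hS'.1) heW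

lemma sum_le_bd {ι : Type} (s : Finset ι) (f : ι → ℝ) (K B : ℝ) (hs : (s.card : ℝ) ≤ K)
    (hB : 0 ≤ B) (hf : ∀ i ∈ s, f i ≤ B) : ∑ i ∈ s, f i ≤ K * B := by
  calc ∑ i ∈ s, f i ≤ s.card • B := sum_le_card_nsmul s f B hf
    _ = s.card * B := by rw [nsmul_eq_mul]
    _ ≤ K * B := by gcongr

lemma bad_count {V : Type} [Fintype V] [DecidableEq V] (r d m : ℕ) (hr : 2 ≤ r)
    (H : Finset (Finset V)) (hH : ∀ e ∈ H, e.card = r + 1) (hd : maxDegLe r H d) (v : V)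
    (hm : 1 ≤ m) (hn : 2 ≤ Fintype.card V) :
    (((((univ : Finset V).erase v).powersetCard m).filter (fun W => ¬ Nice r H v W)).card : ℝ) ≤
      ((Fintype.card V - 1).choose m : ℝ) *
      (2 ^ (r + 1) * (2 * m : ℝ) ^ (2 * r - 1) * ((d : ℝ) / Fintype.card V) ^ 2 +
       (r + 1) ^ 2 * (2 * m : ℝ) ^ (3 * r - 1) * ((d : ℝ) / Fintype.card V) ^ 3) := by
  set n := Fintype.card V with hndef
  set C := ((n - 1).choose m : ℝ) with hC
  have hC0 : 0 ≤ C := by positivity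
  set Hv := H.filter (fun e => {v} ⊆ e) with hHv
  have hn0 : (0 : ℝ) < n := by exact_mod_cast (by omega : 0 < n)
  have hHvc : (Hv.card : ℝ) ≤ (n : ℝ) ^ (r - 1) * d := by
    have := deg_count r d H hH hd {v} (by simp; omega)
    rw [card_singleton] at this
    exact_mod_cast this
  have hmemHv : ∀ f, f ∈ Hv ↔ f ∈ H ∧ v ∈ f := by intro f; simp [hHv]
  have hmn : (0 : ℝ) ≤ 2 * m / n := by positivity
  have hm1 : (1 : ℝ) ≤ 2 * m := by
    have : (1 : ℝ) ≤ m := by exact_mod_cast hm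
    linarith
  -- the two families
  set P : Finset V → Finset (Finset V) := fun f => f.powerset.filter (fun I => 2 ≤ I.card ∧ I.card ≤ r) with hP
  set E1 : Finset V → Finset V → Finset (Finset V) := fun f I => H.filter (fun e => e ∩ f = I) with hE1
  set E2 : Finset V → Finset V → V → V → Finset (Finset V) := fun f g x y =>
    H.filter (fun e => x ≠ y ∧ x ∈ e ∧ y ∈ e ∧ ((f ∪ g ∪ e).erase v).card + 1 = 3 * r) with hE2
  have hsub : (((univ : Finset V).erase v).powersetCard m).filter (fun W => ¬ Nice r H v W) ⊆
      (Hv.biUnion fun f => (P f).biUnion fun I => (E1 f I).biUnion fun e =>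
        wset v m ((f ∪ e).erase v)) ∪
      (Hv.biUnion fun f => Hv.biUnion fun g => f.biUnion fun x => g.biUnion fun y =>
        (E2 f g x y).biUnion fun e => wset v m ((f ∪ g ∪ e).erase v)) := by
    intro W hW
    rw [mem_filter] at hW
    have hvW : v ∉ W := fun h => by
      have := (mem_powersetCard.1 hW.1).1 h
      simp at this
    rw [mem_union]
    rcases not_nice r H hH v W hvW hW.2 with h | h
    · left
      obtain ⟨f, hf, hvf, e, he, hne, h2, hs⟩ := h
      simp only [mem_biUnion]
      refine ⟨f, (hmemHv f).2 ⟨hf, hvf⟩, e ∩ f, ?_, e, ?_, ?_⟩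
      · simp only [hP, mem_filter, mem_powerset]
        refine ⟨inter_subset_right, h2, ?_⟩
        by_contra hlt
        have h3 : (e ∩ f).card = r + 1 := by
          have := card_le_card (inter_subset_right : e ∩ f ⊆ f)
          rw [hH f hf] at this
          omega
        have h4 : e ∩ f = e := eq_of_subset_of_card_le inter_subset_left (by rw [hH e he, h3])
        have h5 : e ∩ f = f := eq_of_subset_of_card_le inter_subset_right (by rw [hH f hf, h3])
        exact hne (h4.symm.trans h5)
      · simp only [hE1, mem_filter]
        exact ⟨he, trivial⟩
      · exact mem_filter.2 ⟨hW.1, hs⟩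
    · right
      obtain ⟨f, hf, hvf, g, hg, hvg, x, hx, y, hy, hxy, e, he, hxe, hye, hc, hs⟩ := h
      simp only [mem_biUnion]
      refine ⟨f, (hmemHv f).2 ⟨hf, hvf⟩, g, (hmemHv g).2 ⟨hg, hvg⟩, x, hx, y, hy, e, ?_, ?_⟩
      · simp only [hE2, mem_filter]
        exact ⟨he, hxy, hxe, hye, hc⟩
      · exact mem_filter.2 ⟨hW.1, hs⟩
  have hle1 : ((Hv.biUnion fun f => (P f).biUnion fun I => (E1 f I).biUnion fun e =>
        wset v m ((f ∪ e).erase v)).card : ℝ) ≤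
      ∑ f ∈ Hv, ∑ I ∈ P f, ∑ e ∈ E1 f I, ((wset v m ((f ∪ e).erase v)).card : ℝ) := by
    exact_mod_cast card_biUnion_le.trans (sum_le_sum fun f _ => card_biUnion_le.trans
      (sum_le_sum fun I _ => card_biUnion_le))
  have hle2 : ((Hv.biUnion fun f => Hv.biUnion fun g => f.biUnion fun x => g.biUnion fun y =>
        (E2 f g x y).biUnion fun e => wset v m ((f ∪ g ∪ e).erase v)).card : ℝ) ≤
      ∑ f ∈ Hv, ∑ g ∈ Hv, ∑ x ∈ f, ∑ y ∈ g, ∑ e ∈ E2 f g x y,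
        ((wset v m ((f ∪ g ∪ e).erase v)).card : ℝ) := by
    exact_mod_cast card_biUnion_le.trans (sum_le_sum fun f _ => card_biUnion_le.trans
      (sum_le_sum fun g _ => card_biUnion_le.trans (sum_le_sum fun x _ => card_biUnion_le.trans
      (sum_le_sum fun y _ => card_biUnion_le))))
  have hb1 : ∑ f ∈ Hv, ∑ I ∈ P f, ∑ e ∈ E1 f I, ((wset v m ((f ∪ e).erase v)).card : ℝ) ≤
      ((n : ℝ) ^ (r - 1) * d) * (2 ^ (r + 1) *
        (C * ((2 * m : ℝ) ^ (2 * r - 1) * d / (n : ℝ) ^ (r + 1)))) := by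
    apply sum_le_bd _ _ _ _ hHvc (by positivity)
    intro f hf
    rw [hmemHv] at hf
    apply sum_le_bd _ _ _ _ _ (by positivity)
    · intro I hI
      simp only [hP, mem_filter, mem_powerset] at hI
      obtain ⟨hIf, hI2, hIr⟩ := hI
      have hEc : ((E1 f I).card : ℝ) ≤ (n : ℝ) ^ (r - I.card) * d := by
        have h1 := deg_count r d H hH hd I hIr
        have h2 : (E1 f I).card ≤ (H.filter (fun e => I ⊆ e)).card := by
          apply card_le_card
          intro e he
          simp only [hE1, mem_filter] at he ⊢
          exact ⟨he.1, by rw [← he.2]; exact inter_subset_left⟩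
        exact_mod_cast h2.trans h1
      have h1 : ∑ e ∈ E1 f I, ((wset v m ((f ∪ e).erase v)).card : ℝ) ≤
          ((n : ℝ) ^ (r - I.card) * d) * (C * (2 * m / n) ^ (2 * r + 1 - I.card)) := by
        apply sum_le_bd _ _ _ _ hEc (by positivity)
        intro e he
        simp only [hE1, mem_filter] at he
        have h1 := wset_card v m ((f ∪ e).erase v) (notMem_erase _ _) hn
        have h2 : ((f ∪ e).erase v).card = 2 * r + 1 - I.card := by
          rw [card_erase_of_mem (mem_union_left _ hf.2)]
          have := card_union_add_card_inter e f
          rw [he.2, hH e he.1, hH f hf.1, union_comm] at this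
          omega
        rw [h2] at h1
        exact h1
      refine h1.trans ?_
      have h3 : ((n : ℝ) ^ (r - I.card) * d) * (C * (2 * m / n) ^ (2 * r + 1 - I.card)) =
         C * ((2 * m : ℝ) ^ (2 * r + 1 - I.card) * d / (n : ℝ) ^ (r + 1)) := by
        have : 2 * r + 1 - I.card = (r - I.card) + (r + 1) := by omega
        rw [this, div_pow, pow_add (n : ℝ)]
        field_simp
      rw [h3]
      have h4 : (2 * m : ℝ) ^ (2 * r + 1 - I.card) ≤ (2 * m : ℝ) ^ (2 * r - 1) :=
        pow_le_pow_right₀ hm1 (by omega)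
      gcongr
    · have : (P f).card ≤ 2 ^ (r + 1) := by
        refine (card_filter_le _ _).trans ?_
        rw [card_powerset, hH f hf.1]
      exact_mod_cast this
  have hb2 : ∑ f ∈ Hv, ∑ g ∈ Hv, ∑ x ∈ f, ∑ y ∈ g, ∑ e ∈ E2 f g x y,
        ((wset v m ((f ∪ g ∪ e).erase v)).card : ℝ) ≤
      ((n : ℝ) ^ (r - 1) * d) * (((n : ℝ) ^ (r - 1) * d) * ((r + 1 : ℝ) * ((r + 1 : ℝ) *
        (((n : ℝ) ^ (r - 2) * d) * (C * (2 * m / n) ^ (3 * r - 1)))))) := by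
    apply sum_le_bd _ _ _ _ hHvc (by positivity)
    intro f hf
    apply sum_le_bd _ _ _ _ hHvc (by positivity)
    intro g hg
    rw [hmemHv] at hf hg
    apply sum_le_bd _ _ _ _ (by rw [hH f hf.1]; push_cast; rfl) (by positivity)
    intro x hx
    apply sum_le_bd _ _ _ _ (by rw [hH g hg.1]; push_cast; rfl) (by positivity)
    intro y hy
    apply sum_le_bd _ _ _ _ _ (by positivity)
    · intro e he
      simp only [hE2, mem_filter] at he
      have h1 := wset_card v m ((f ∪ g ∪ e).erase v) (notMem_erase _ _) hn
      have h2 : ((f ∪ g ∪ e).erase v).card = 3 * r - 1 := by omega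
      rw [h2] at h1
      exact h1
    · by_cases hxy : x = y
      · have : E2 f g x y = ∅ := by simp [hE2, hxy]
        rw [this, card_empty, Nat.cast_zero]; positivity
      · have h1 := deg_count r d H hH hd {x, y} (by rw [card_pair hxy]; exact hr)
        rw [card_pair hxy] at h1
        have h2 : (E2 f g x y).card ≤ (H.filter (fun e => {x, y} ⊆ e)).card := by
          apply card_le_card
          intro e he
          simp only [hE2, mem_filter] at he ⊢
          refine ⟨he.1, ?_⟩
          intro z hz
          rw [mem_insert, mem_singleton] at hz
          rcases hz with rfl | rfl
          · exact he.2.2.1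
          · exact he.2.2.2.1
        exact_mod_cast h2.trans h1
  have hcard := card_le_card hsub
  have hcard2 := hcard.trans (card_union_le _ _)
  have hcard3 := (Nat.cast_le (α := ℝ)).2 hcard2
  rw [Nat.cast_add] at hcard3
  refine hcard3.trans ?_
  refine (add_le_add (hle1.trans hb1) (hle2.trans hb2)).trans (le_of_eq ?_)
  rw [mul_add]
  obtain ⟨s, rfl⟩ : ∃ s, r = s + 2 := ⟨r - 2, by omega⟩
  have e1 : s + 2 - 1 = s + 1 := by omega
  have e2 : 2 * (s + 2) - 1 = 2 * s + 3 := by omega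
  have e3 : 3 * (s + 2) - 1 = 3 * s + 5 := by omega
  have e4 : s + 2 - 2 = s := by omega
  rw [e1, e2, e3, e4, div_pow (2 * (m : ℝ)), div_pow, div_pow]
  congr 1
  · field_simp
    ring
  · field_simp
    ring

lemma indSets_pos {V : Type} [DecidableEq V] (r : ℕ) (H : Finset (Finset V))
    (hH : ∀ e ∈ H, e.card = r + 1) (W : Finset V) : 0 < (indSets H W).card := by
  apply card_pos.2
  refine ⟨∅, mem_indSets.2 ⟨empty_subset _, ?_⟩⟩
  intro e he hs
  have := hH e he
  rw [subset_empty.1 hs] at this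
  simp at this

lemma card_le_indepNum {V : Type} [Fintype V] [DecidableEq V] (H : Finset (Finset V))
    (W Z : Finset V) (hZ : Z ∈ indSets H W) : Z.card ≤ indepNum H := by
  unfold indepNum
  apply Finset.le_sup (f := Finset.card)
  simp [(mem_indSets.1 hZ).2]

lemma exch_count {V : Type} [DecidableEq V] (r : ℕ) (H : Finset (Finset V))
    (hH : ∀ e ∈ H, e.card = r + 1) (v : V) (W : Finset V) (hv : v ∉ W) :
    ((indSets H (insert v W)).filter (fun Z => v ∈ Z)).card =
      ((indSets H W).filter (fun Z => lnk r H v Z = ∅)).card ∧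
    (indSets H (insert v W)).card = (indSets H W).card +
      ((indSets H W).filter (fun Z => lnk r H v Z = ∅)).card := by
  have h1 : ((indSets H (insert v W)).filter (fun Z => v ∈ Z)).card =
      ((indSets H W).filter (fun Z => lnk r H v Z = ∅)).card := by
    symm
    apply card_bij (fun Z _ => insert v Z)
    · intro Z hZ
      simp only [mem_filter, mem_indSets] at hZ ⊢
      obtain ⟨⟨h1, h2⟩, h3⟩ := hZ
      have hvZ : v ∉ Z := fun h => hv (h1 h)
      refine ⟨⟨insert_subset_insert _ h1, ?_⟩, mem_insert_self _ _⟩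
      intro e he hs
      by_cases hve : v ∈ e
      · have : e.erase v ∈ lnk r H v Z := by
          rw [mem_lnk]
          refine ⟨?_, ?_, ?_⟩
          · intro w hw
            rw [mem_erase] at hw
            exact (mem_insert.1 (hs hw.2)).resolve_left hw.1
          · rw [card_erase_of_mem hve, hH e he]; rfl
          · rw [insert_erase hve]; exact he
        rw [h3] at this
        exact notMem_empty _ this
      · apply h2 e he
        intro w hw
        exact (mem_insert.1 (hs hw)).resolve_left (by rintro rfl; exact hve hw)
    · intro Z hZ Z' hZ' heq
      simp only [mem_filter, mem_indSets] at hZ hZ'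
      rw [← erase_insert (fun h => hv (hZ.1.1 h)), heq, erase_insert (fun h => hv (hZ'.1.1 h))]
    · intro Z hZ
      simp only [mem_filter, mem_indSets] at hZ
      obtain ⟨⟨h1, h2⟩, h3⟩ := hZ
      refine ⟨Z.erase v, ?_, insert_erase h3⟩
      simp only [mem_filter, mem_indSets]
      refine ⟨⟨?_, ?_⟩, ?_⟩
      · intro w hw
        rw [mem_erase] at hw
        exact (mem_insert.1 (h1 hw.2)).resolve_left hw.1
      · exact fun e he hs => h2 e he (hs.trans (erase_subset _ _))
      · rw [eq_empty_iff_forall_notMem]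
        intro S hS
        rw [mem_lnk] at hS
        exact h2 _ hS.2.2 (insert_subset h3 (hS.1.trans (erase_subset _ _)))
  refine ⟨h1, ?_⟩
  rw [← h1, ← card_filter_add_card_filter_not (s := indSets H (insert v W)) (fun Z => v ∈ Z), add_comm]
  congr 2
  ext Z
  simp only [mem_filter, mem_indSets]
  constructor
  · rintro ⟨⟨h1, h2⟩, h3⟩
    refine ⟨?_, h2⟩
    intro w hw
    exact (mem_insert.1 (h1 hw)).resolve_left (by rintro rfl; exact h3 hw)
  · rintro ⟨h1, h2⟩
    exact ⟨⟨h1.trans (subset_insert _ _), h2⟩, fun h => hv (h1 h)⟩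

/-- Probability that `v` can be added to a random independent subset of `W`. -/
noncomputable def pz {V : Type} [DecidableEq V] (r : ℕ) (H : Finset (Finset V)) (v : V)
    (W : Finset V) : ℝ :=
  (((indSets H W).filter (fun Z => lnk r H v Z = ∅)).card : ℝ) / ((indSets H W).card : ℝ)

/-- Expected number of link edges of `v` in a random independent subset of `W`. -/
noncomputable def et {V : Type} [DecidableEq V] (r : ℕ) (H : Finset (Finset V)) (v : V)
    (W : Finset V) : ℝ :=
  (∑ Z ∈ indSets H W, ((lnk r H v Z).card : ℝ)) / ((indSets H W).card : ℝ)

lemma pz_sum {V : Type} [Fintype V] [DecidableEq V] (r : ℕ) (H : Finset (Finset V))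
    (hH : ∀ e ∈ H, e.card = r + 1) (W : Finset V) :
    ∑ v ∈ W, pz r H v (W.erase v) ≤ 2 * indepNum H := by
  have hpos : (0 : ℝ) < (indSets H W).card := by exact_mod_cast indSets_pos r H hH W
  have h1 : ∀ v ∈ W, pz r H v (W.erase v) ≤
      2 * (((indSets H W).filter (fun Z => v ∈ Z)).card : ℝ) / (indSets H W).card := by
    intro v hv
    obtain ⟨e1, e2⟩ := exch_count r H hH v (W.erase v) (notMem_erase _ _)
    rw [insert_erase hv] at e1 e2
    have hb : (0 : ℝ) < (indSets H (W.erase v)).card := by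
      exact_mod_cast indSets_pos r H hH (W.erase v)
    rw [e1, e2]
    unfold pz
    have hab : (((indSets H (W.erase v)).filter (fun Z => lnk r H v Z = ∅)).card : ℝ) ≤
      (indSets H (W.erase v)).card := by exact_mod_cast card_filter_le _ _
    have ha : (0 : ℝ) ≤ (((indSets H (W.erase v)).filter (fun Z => lnk r H v Z = ∅)).card : ℝ) := by
      positivity
    push_cast
    rw [div_le_div_iff₀ hb (by linarith)]
    nlinarith
  refine (sum_le_sum h1).trans ?_
  rw [← sum_div, ← mul_sum, div_le_iff₀ hpos, mul_assoc]
  apply mul_le_mul_of_nonneg_left _ (by norm_num)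
  have h2 : ∑ v ∈ W, ((indSets H W).filter (fun Z => v ∈ Z)).card ≤
      indepNum H * (indSets H W).card := by
    simp only [card_filter]
    rw [sum_comm, mul_comm, ← smul_eq_mul]
    apply sum_le_card_nsmul
    intro Z hZ
    rw [← card_filter]
    refine le_trans (card_le_card ?_) (card_le_indepNum H W Z hZ)
    intro u hu
    exact (mem_filter.1 hu).2
  exact_mod_cast h2

lemma et_sum {V : Type} [Fintype V] [DecidableEq V] (r d : ℕ) (H : Finset (Finset V))
    (hH : ∀ e ∈ H, e.card = r + 1) (hd : maxDegLe r H d) (W : Finset V) :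
    ∑ v ∈ Wᶜ, et r H v W ≤ ((indepNum H).choose r : ℝ) * d := by
  have hpos : (0 : ℝ) < (indSets H W).card := by exact_mod_cast indSets_pos r H hH W
  unfold et
  rw [← sum_div, div_le_iff₀ hpos, sum_comm]
  have h : ∀ Z ∈ indSets H W, ∑ v ∈ Wᶜ, ((lnk r H v Z).card : ℝ) ≤
      ((indepNum H).choose r : ℝ) * d := by
    intro Z hZ
    have h1 : ∑ v ∈ Wᶜ, (lnk r H v Z).card ≤ (indepNum H).choose r * d := by
      simp only [lnk, card_filter]
      rw [sum_comm]
      calc _ ≤ ∑ S ∈ Z.powersetCard r, d := by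
            apply sum_le_sum
            intro S hS
            rw [mem_powersetCard] at hS
            rw [← card_filter]
            refine le_trans ?_ (hd S hS.2)
            have hSW : ∀ v ∈ Wᶜ, v ∉ S := fun v hv h =>
              (mem_compl.1 hv) ((mem_indSets.1 hZ).1 (hS.1 h))
            apply card_le_card_of_injOn (fun v => insert v S)
            · intro v hv
              simp only [mem_coe, mem_filter] at hv ⊢
              exact ⟨hv.2, subset_insert _ _⟩
            · intro v hv w hw heq
              simp only [mem_coe, mem_filter] at hv hw heq
              have : v ∈ insert w S := heq ▸ mem_insert_self v S
              exact (mem_insert.1 this).resolve_right (hSW v hv.1)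
        _ = Z.card.choose r * d := by rw [sum_const, card_powersetCard, smul_eq_mul]
        _ ≤ _ := Nat.mul_le_mul_right _ (Nat.choose_le_choose _ (card_le_indepNum H W Z hZ))
    exact_mod_cast h1
  calc _ ≤ (indSets H W).card • (((indepNum H).choose r : ℝ) * d) := sum_le_card_nsmul _ _ _ h
    _ = _ := by rw [nsmul_eq_mul, mul_comm]

lemma pairs1 {V : Type} [Fintype V] [DecidableEq V] (m : ℕ) (F : V → Finset V → ℝ) :
    ∑ v : V, ∑ W ∈ ((univ : Finset V).erase v).powersetCard m, F v W =
      ∑ W ∈ (univ : Finset V).powersetCard m, ∑ v ∈ Wᶜ, F v W := by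
  apply sum_comm'
  intro v W
  simp only [mem_univ, true_and, mem_powersetCard, mem_compl, subset_erase, subset_univ]

lemma pairs2 {V : Type} [Fintype V] [DecidableEq V] (m : ℕ) (F : V → Finset V → ℝ) :
    ∑ v : V, ∑ W ∈ ((univ : Finset V).erase v).powersetCard m, F v W =
      ∑ W ∈ (univ : Finset V).powersetCard (m + 1), ∑ v ∈ W, F v (W.erase v) := by
  have : ∑ W ∈ (univ : Finset V).powersetCard (m + 1), ∑ v ∈ W, F v (W.erase v) =
     ∑ v : V, ∑ W ∈ ((univ : Finset V).powersetCard (m + 1)).filter (fun W => v ∈ W),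
      F v (W.erase v) := by
    apply sum_comm'
    intro W v
    simp
  rw [this]
  apply sum_congr rfl
  intro v _
  apply sum_bij (fun W _ => insert v W)
  · intro W hW
    simp only [mem_powersetCard, subset_erase, subset_univ, true_and, mem_filter] at hW ⊢
    rw [card_insert_of_notMem hW.1, hW.2]
    simp
  · intro W hW W' hW' heq
    simp only [mem_powersetCard, subset_erase, subset_univ, true_and] at hW hW'
    rw [← erase_insert hW.1, heq, erase_insert hW'.1]
  · intro W hW
    simp only [mem_powersetCard, subset_univ, true_and, mem_filter] at hW
    refine ⟨W.erase v, ?_, insert_erase hW.2⟩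
    simp [mem_powersetCard, subset_erase, card_erase_of_mem hW.2, hW.1]
  · intro W hW
    simp only [mem_powersetCard, subset_erase, subset_univ, true_and] at hW
    rw [erase_insert hW.1]

lemma main_finite {V : Type} [Fintype V] [DecidableEq V] (r d m : ℕ) (hr : 2 ≤ r)
    (H : Finset (Finset V)) (hH : ∀ e ∈ H, e.card = r + 1) (hd : maxDegLe r H d)
    (hm : 1 ≤ m) (hmn : m < Fintype.card V) (t δ : ℝ) (ht : 0 ≤ t)
    (hδ : 2 ^ (r + 1) * (2 * m : ℝ) ^ (2 * r - 1) * ((d : ℝ) / Fintype.card V) ^ 2 +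
       (r + 1) ^ 2 * (2 * m : ℝ) ^ (3 * r - 1) * ((d : ℝ) / Fintype.card V) ^ 3 ≤ δ) :
    (1 + t) * (1 - δ) ≤ Real.exp t * (2 * indepNum H / (m + 1)) +
      (-Real.log (1 - 1 / 2 ^ r)) * 2 ^ r *
        (((indepNum H).choose r : ℝ) * d / ((Fintype.card V : ℝ) - m)) := by
  set n := Fintype.card V with hn
  set x := -Real.log (1 - 1 / 2 ^ r) with hx
  set α := indepNum H with hα
  have hx0 : 0 ≤ x := by
    rw [hx, neg_nonneg]
    apply Real.log_nonpos
    · rw [sub_nonneg, div_le_one (by positivity)]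
      exact one_le_pow₀ (by norm_num)
    · have : (0 : ℝ) ≤ 1 / 2 ^ r := by positivity
      linarith
  set C := ((n - 1).choose m : ℝ) with hC
  have hC0 : 0 < C := by
    rw [hC]; exact_mod_cast Nat.choose_pos (by omega)
  have hmn' : (m : ℝ) < n := by exact_mod_cast hmn
  have hn0 : (0 : ℝ) < n := by
    have : (0 : ℝ) ≤ m := by positivity
    linarith
  -- number of pairs
  have hP1 : (n : ℝ) * C = (n - m) * (n.choose m : ℝ) := by
    have h := Nat.add_one_mul_choose_eq (n - 1) m
    have h2 := Nat.choose_succ_right_eq n m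
    have e : n - 1 + 1 = n := by omega
    rw [e] at h
    have h3 : n * (n - 1).choose m = n.choose m * (n - m) := by rw [h, h2]
    have h4 : (n : ℝ) * C = (n.choose m : ℝ) * ((n - m : ℕ) : ℝ) := by
      rw [hC]; exact_mod_cast h3
    rw [h4, Nat.cast_sub hmn.le]; ring
  have hP2 : (n : ℝ) * C = (m + 1) * (n.choose (m + 1) : ℝ) := by
    have h := Nat.add_one_mul_choose_eq (n - 1) m
    have e : n - 1 + 1 = n := by omega
    rw [e] at h
    have h4 : (n : ℝ) * C = (n.choose (m + 1) : ℝ) * ((m + 1 : ℕ) : ℝ) := by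
      rw [hC]; exact_mod_cast h
    rw [h4]; push_cast; ring
  have hA : ∑ v : V, ∑ W ∈ ((univ : Finset V).erase v).powersetCard m, pz r H v W ≤
      n * C * (2 * α / (m + 1)) := by
    rw [pairs2 m (fun v W => pz r H v W)]
    calc _ ≤ ((univ : Finset V).powersetCard (m + 1)).card • (2 * α : ℝ) :=
          sum_le_card_nsmul _ _ _ (fun W _ => pz_sum r H hH W)
      _ = _ := by
        rw [card_powersetCard, card_univ, nsmul_eq_mul, hP2]
        field_simp
        rw [hn]
        ring
  have hB : ∑ v : V, ∑ W ∈ ((univ : Finset V).erase v).powersetCard m, et r H v W ≤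
      n * C * ((α.choose r : ℝ) * d / (n - m)) := by
    rw [pairs1 m (fun v W => et r H v W)]
    calc _ ≤ ((univ : Finset V).powersetCard m).card • ((α.choose r : ℝ) * d) :=
          sum_le_card_nsmul _ _ _ (fun W _ => et_sum r d H hH hd W)
      _ = _ := by
        rw [card_powersetCard, card_univ, nsmul_eq_mul, hP1]
        have : (n : ℝ) - m ≠ 0 := by linarith
        field_simp
        rw [hn]
        ring
  have hcore : ∀ v : V, ∑ W ∈ ((univ : Finset V).erase v).powersetCard m,
      Real.exp (-t) * ((1 + t) - x * 2 ^ r * et r H v W) - Real.exp (-t) * (1 + t) * (C * δ) ≤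
      ∑ W ∈ ((univ : Finset V).erase v).powersetCard m, pz r H v W := by
    intro v
    have hbad := bad_count r d m hr H hH hd v hm (by omega)
    have hbad2 := hbad.trans (mul_le_mul_of_nonneg_left hδ hC0.le)
    have hpt : ∀ W ∈ ((univ : Finset V).erase v).powersetCard m,
        Real.exp (-t) * ((1 + t) - x * 2 ^ r * et r H v W) ≤
        pz r H v W + (if ¬ Nice r H v W then Real.exp (-t) * (1 + t) else 0) := by
      intro W _
      have hpos : (0 : ℝ) < (indSets H W).card := by exact_mod_cast indSets_pos r H hH W
      by_cases hN : Nice r H v W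
      · have h1 := nice_ineq r (by omega) H v W hN t
        rw [if_neg (not_not.2 hN), add_zero]
        unfold pz et
        rw [le_div_iff₀ hpos]
        refine le_trans (le_of_eq ?_) h1
        rw [mul_assoc, sub_mul, mul_assoc (x * 2 ^ r), div_mul_cancel₀ _ hpos.ne']
      · rw [if_pos hN]
        have h1 : 0 ≤ pz r H v W := by unfold pz; positivity
        have h2 : 0 ≤ et r H v W := by
          unfold et
          exact div_nonneg (sum_nonneg fun _ _ => by positivity) hpos.le
        have h3 : Real.exp (-t) * ((1 + t) - x * 2 ^ r * et r H v W) ≤ Real.exp (-t) * (1 + t) := by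
          apply mul_le_mul_of_nonneg_left _ (Real.exp_pos _).le
          have : 0 ≤ x * 2 ^ r * et r H v W := by positivity
          linarith
        linarith
    have hs := sum_le_sum hpt
    rw [sum_add_distrib, ← sum_filter, sum_const, nsmul_eq_mul] at hs
    have h5 : ((((univ : Finset V).erase v).powersetCard m).filter
        (fun W => ¬ Nice r H v W)).card * (Real.exp (-t) * (1 + t)) ≤
        (C * δ) * (Real.exp (-t) * (1 + t)) := by
      apply mul_le_mul_of_nonneg_right hbad2
      have := (Real.exp_pos (-t)).le
      positivity
    linarith
  have hsum := sum_le_sum (s := (univ : Finset V)) (fun v _ => hcore v)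
  rw [sum_sub_distrib, sum_const, card_univ, nsmul_eq_mul, ← hn] at hsum
  have hev : ∑ v : V, ∑ W ∈ ((univ : Finset V).erase v).powersetCard m,
      Real.exp (-t) * ((1 + t) - x * 2 ^ r * et r H v W) =
      Real.exp (-t) * ((1 + t) * (n * C) - x * 2 ^ r *
        ∑ v : V, ∑ W ∈ ((univ : Finset V).erase v).powersetCard m, et r H v W) := by
    simp only [← mul_sum, sum_sub_distrib, sum_const, card_powersetCard, nsmul_eq_mul,
      card_erase_of_mem (mem_univ _), card_univ, ← hn]
    rw [hC]
    ring
  rw [hev] at hsum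
  have hfin := hsum.trans hA
  have h6 : x * 2 ^ r * ∑ v : V, ∑ W ∈ ((univ : Finset V).erase v).powersetCard m, et r H v W ≤
     x * 2 ^ r * (n * C * ((α.choose r : ℝ) * d / (n - m))) := by gcongr
  have h7 : Real.exp (-t) * (n * C * ((1 + t) * (1 - δ) -
      x * 2 ^ r * ((α.choose r : ℝ) * d / (n - m)))) ≤ n * C * (2 * α / (m + 1)) := by
    refine le_trans ?_ hfin
    have := mul_le_mul_of_nonneg_left h6 (Real.exp_pos (-t)).le
    linarith
  have h8 : (n * C) * ((1 + t) * (1 - δ) -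
      x * 2 ^ r * ((α.choose r : ℝ) * d / (n - m))) ≤ (n * C) * (Real.exp t * (2 * α / (m + 1))) := by
    have := mul_le_mul_of_nonneg_left h7 (Real.exp_pos t).le
    rw [← mul_assoc, ← Real.exp_add, add_neg_cancel, Real.exp_zero, one_mul] at this
    linarith
  have h9 := le_of_mul_le_mul_left h8 (by positivity)
  linarith

lemma asym (r : ℕ) (hr : 2 ≤ r) (ε c β η γ : ℝ) (hε : 0 < ε) (hc : 0 < c) (hη : 0 < η)
    (hβ : β = 1 / (r * (3 * r - 1))) (hγ : γ = 1 / r + β - η) :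
    ∀ᶠ N : ℝ in Filter.atTop, 3 ≤ N ∧
      2 ^ (r + 1) * (2 ^ (2 * r - 1) * (N ^ γ) ^ (2 * r - 1)) * (1 / N) ^ 2 +
       (r + 1) ^ 2 * (2 ^ (3 * r - 1) * (N ^ γ) ^ (3 * r - 1)) * (1 / N) ^ 3 ≤ ε / 4 ∧
      2 * c * Real.log N ^ ((1 : ℝ) / r) ≤ 1 / 2 * N ^ η ∧
      N ^ γ ≤ ε / 4 * N := by
  have hr' : (2 : ℝ) ≤ r := by exact_mod_cast hr
  have h3r : (0 : ℝ) < 3 * r - 1 := by linarith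
  have hγ2 : γ = 3 / (3 * r - 1) - η := by
    have h3 : (3 * (r : ℝ) - 1) ≠ 0 := h3r.ne'
    have h4 : (r : ℝ) ≠ 0 := by linarith
    have h5 : 1 / (r : ℝ) + 1 / (r * (3 * r - 1)) = 3 / (3 * r - 1) := by
      rw [div_add_div _ _ h4 (mul_ne_zero h4 h3), div_eq_div_iff (mul_ne_zero h4 (mul_ne_zero h4 h3)) h3]
      ring
    rw [hγ, hβ, h5]
  have hu1 : 0 < 2 - γ * (2 * r - 1) := by
    have h1 : γ * (2 * r - 1) = 3 / (3 * r - 1) * (2 * r - 1) - η * (2 * r - 1) := by rw [hγ2]; ring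
    have h2 : 3 / (3 * r - 1) * (2 * r - 1) < (2 : ℝ) := by
      rw [div_mul_eq_mul_div, div_lt_iff₀ h3r]; linarith
    have h3 : 0 < η * (2 * r - 1) := mul_pos hη (by linarith)
    linarith
  have hu2 : 0 < 3 - γ * (3 * r - 1) := by
    have h1 : γ * (3 * r - 1) = 3 - η * (3 * r - 1) := by
      rw [hγ2, sub_mul, div_mul_cancel₀ _ h3r.ne']
    have h3 : 0 < η * (3 * r - 1) := mul_pos hη h3r
    linarith
  have hγ1 : 0 < 1 - γ := by
    have : 3 / (3 * (r : ℝ) - 1) < 1 := by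
      rw [div_lt_one h3r]; linarith
    rw [hγ2]; linarith
  have t1 := tendsto_rpow_neg_atTop hu1
  have t2 := tendsto_rpow_neg_atTop hu2
  have t3 := tendsto_rpow_neg_atTop hγ1
  have T : Filter.Tendsto (fun N : ℝ => (2 ^ (r + 1) * 2 ^ (2 * r - 1) : ℝ) *
      N ^ (-(2 - γ * (2 * r - 1))) + ((r + 1) ^ 2 * 2 ^ (3 * r - 1) : ℝ) *
      N ^ (-(3 - γ * (3 * r - 1)))) Filter.atTop (nhds 0) := by
    have := (t1.const_mul (2 ^ (r + 1) * 2 ^ (2 * r - 1) : ℝ)).add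
      (t2.const_mul ((r + 1) ^ 2 * 2 ^ (3 * r - 1) : ℝ))
    simpa using this
  have E1 := T.eventually_lt_const (show (0 : ℝ) < ε / 4 by linarith)
  have E3 := t3.eventually_lt_const (show (0 : ℝ) < ε / 4 by linarith)
  have E2 := (isLittleO_log_rpow_rpow_atTop ((1 : ℝ) / r) hη).bound
    (show (0 : ℝ) < 1 / (4 * c) by positivity)
  filter_upwards [E1, E2, E3, Filter.eventually_ge_atTop (3 : ℝ)] with N e1 e2 e3 e4
  have hN : 0 < N := by linarith
  refine ⟨e4, ?_, ?_, ?_⟩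
  · refine le_trans (le_of_eq ?_) e1.le
    have a1 : (N ^ γ) ^ (2 * r - 1) * (1 / N) ^ 2 = N ^ (-(2 - γ * (2 * r - 1))) := by
      rw [← Real.rpow_natCast (N ^ γ), ← Real.rpow_mul hN.le, one_div, inv_pow,
        ← Real.rpow_natCast N, ← Real.rpow_neg hN.le, ← Real.rpow_add hN,
        Nat.cast_sub (by omega)]
      congr 1
      push_cast
      ring
    have a2 : (N ^ γ) ^ (3 * r - 1) * (1 / N) ^ 3 = N ^ (-(3 - γ * (3 * r - 1))) := by
      rw [← Real.rpow_natCast (N ^ γ), ← Real.rpow_mul hN.le, one_div, inv_pow,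
        ← Real.rpow_natCast N, ← Real.rpow_neg hN.le, ← Real.rpow_add hN,
        Nat.cast_sub (by omega)]
      congr 1
      push_cast
      ring
    rw [← a1, ← a2]
    ring
  · have hl : 0 ≤ Real.log N := Real.log_nonneg (by linarith)
    rw [Real.norm_of_nonneg (Real.rpow_nonneg hl _), Real.norm_of_nonneg (Real.rpow_nonneg hN.le _)] at e2
    calc 2 * c * Real.log N ^ ((1 : ℝ) / r) ≤ 2 * c * (1 / (4 * c) * N ^ η) := by gcongr
      _ = _ := by field_simp; norm_num
  · have : N ^ γ = N ^ (-(1 - γ)) * N := by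
      nth_rewrite 3 [← Real.rpow_one N]
      rw [← Real.rpow_add hN]
      congr 1; ring
    rw [this]
    gcongr

set_option maxHeartbeats 2000000 in
/-- With the explicit constant
`c_r = (r! / (r·(3r−1)·2^r·(−log(1−2^{−r}))))^(1/r)`, for every `r ≥ 2` and `ε > 0`
there exists `n₀` such that for all `n ≥ n₀` and `1 ≤ d ≤ n/(log n)^(3r²)`, every
`(r+1)`-graph on `n` vertices with maximum `r`-degree at most `d` has
`α(H) ≥ (1−ε)·c_r·((n/d)·log(n/d))^(1/r)`. -/
theorem stmt1 (r : ℕ) (hr : 2 ≤ r) (ε : ℝ) (hε : 0 < ε) :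
    ∃ n₀ : ℕ, ∀ (n d : ℕ), n₀ ≤ n → 1 ≤ d →
      (d : ℝ) ≤ (n : ℝ) / (Real.log n) ^ (3 * r ^ 2) →
      ∀ (V : Type) [Fintype V] [DecidableEq V], ∀ (H : Finset (Finset V)),
        Fintype.card V = n →
        (∀ e ∈ H, e.card = r + 1) →
        maxDegLe r H d →
        (1 - ε) *
            ((Nat.factorial r : ℝ) /
              ((r : ℝ) * (3 * (r : ℝ) - 1) * 2 ^ r * (-Real.log (1 - 1 / 2 ^ r)))) ^ ((1 : ℝ) / r) *
            (((n : ℝ) / d) * Real.log ((n : ℝ) / d)) ^ ((1 : ℝ) / r)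
          ≤ (indepNum H : ℝ) := by
  have hr' : (2 : ℝ) ≤ r := by exact_mod_cast hr
  have hr0 : (0 : ℝ) < r := by linarith
  have hrN : r ≠ 0 := by omega
  have h3r : (0 : ℝ) < 3 * r - 1 := by linarith
  set x : ℝ := -Real.log (1 - 1 / 2 ^ r) with hx
  have hx0 : 0 < x := by
    rw [hx, neg_pos]
    have h2 : (1 : ℝ) < 2 ^ r := one_lt_pow₀ (by norm_num) hrN
    apply Real.log_neg
    · rw [sub_pos, div_lt_one (by positivity)]; exact h2
    · have : (0 : ℝ) < 1 / 2 ^ r := by positivity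
      linarith
  set Q : ℝ := (Nat.factorial r : ℝ) / ((r : ℝ) * (3 * (r : ℝ) - 1) * 2 ^ r * x) with hQ
  have hfac : (0 : ℝ) < Nat.factorial r := by exact_mod_cast Nat.factorial_pos r
  have hQ0 : 0 < Q := by positivity
  set c := Q ^ ((1 : ℝ) / r) with hc
  have hc0 : 0 < c := Real.rpow_pos_of_pos hQ0 _
  by_cases hε1 : 1 ≤ ε
  · refine ⟨3, ?_⟩
    intro n d hn hd1 hd V _ _ H hV hH hdeg
    have h3 : 0 ≤ (((n : ℝ) / d) * Real.log ((n : ℝ) / d)) ^ ((1 : ℝ) / r) := by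
      by_cases h : (n : ℝ) / d ≤ 1
      · -- junk case: still a nonnegative bound is available from the degree hypothesis
        have hn3 : (3 : ℝ) ≤ n := by exact_mod_cast hn
        have hlog : 1 ≤ Real.log n := by
          rw [Real.le_log_iff_exp_le (by linarith)]
          linarith [Real.exp_one_lt_d9]
        have hL : (1 : ℝ) ≤ Real.log n ^ (3 * r ^ 2) := one_le_pow₀ hlog
        have hd0 : (0 : ℝ) < d := by exact_mod_cast hd1
        rw [le_div_iff₀ (by linarith)] at hd
        have : 1 ≤ (n : ℝ) / d := by
          rw [le_div_iff₀ hd0]; nlinarith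
        have : (n : ℝ) / d = 1 := le_antisymm h this
        rw [this, Real.log_one, mul_zero]
        exact Real.rpow_nonneg le_rfl _
      · push Not at h
        exact Real.rpow_nonneg (mul_nonneg (by linarith) (Real.log_nonneg h.le)) _
    have h4 : (1 - ε) * c * (((n : ℝ) / d) * Real.log ((n : ℝ) / d)) ^ ((1 : ℝ) / r) ≤ 0 := by
      apply mul_nonpos_of_nonpos_of_nonneg _ h3
      exact mul_nonpos_of_nonpos_of_nonneg (by linarith) hc0.le
    exact h4.trans (by positivity)
  push Not at hε1
  set β : ℝ := 1 / (r * (3 * r - 1)) with hβ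
  have hβ0 : 0 < β := by positivity
  set η : ℝ := ε * β / 8 with hη
  have hη0 : 0 < η := by positivity
  set γ : ℝ := 1 / r + β - η with hγ
  have hηβ : 2 * η < β := by rw [hη]; nlinarith
  have hγ0 : 0 < γ := by
    have : (0 : ℝ) < 1 / r := by positivity
    rw [hγ]; linarith
  obtain ⟨N₀, hN₀⟩ := Filter.eventually_atTop.1 (asym r hr ε c β η γ hε hc0 hη0 hβ hγ)
  have htend : Filter.Tendsto (fun n : ℕ => Real.log n ^ (3 * r ^ 2)) Filter.atTop Filter.atTop :=
    (Filter.tendsto_pow_atTop (by positivity)).comp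
      (Real.tendsto_log_atTop.comp tendsto_natCast_atTop_atTop)
  obtain ⟨n₀, hn₀⟩ := Filter.eventually_atTop.1 (htend.eventually_ge_atTop (max N₀ 1))
  refine ⟨n₀, ?_⟩
  intro n d hn hd1 hd V _ _ H hV hH hdeg
  have hL := hn₀ n hn
  have hL1 : (1 : ℝ) ≤ Real.log n ^ (3 * r ^ 2) := le_trans (le_max_right _ _) hL
  have hL2 : N₀ ≤ Real.log n ^ (3 * r ^ 2) := le_trans (le_max_left _ _) hL
  have hd0 : (0 : ℝ) < d := by exact_mod_cast hd1
  have hd1' : (1 : ℝ) ≤ d := by exact_mod_cast hd1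
  have hNL : Real.log n ^ (3 * r ^ 2) ≤ (n : ℝ) / d := by
    rw [le_div_iff₀ (by linarith)] at hd
    rw [le_div_iff₀ hd0]; linarith
  obtain ⟨g1, g2, g3, g4⟩ := hN₀ ((n : ℝ) / d) (hL2.trans hNL)
  have hdn : (d : ℝ) / n = 1 / ((n : ℝ) / d) := by rw [one_div_div]
  have hNn : (n : ℝ) / d ≤ n := by
    apply div_le_self (by positivity) hd1'
  have hnNd : (n : ℝ) = (n : ℝ) / d * d := by field_simp
  set N : ℝ := (n : ℝ) / d with hN
  have hN0 : 0 < N := by linarith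
  have hlN : 0 < Real.log N := Real.log_pos (by linarith)
  set m := ⌊N ^ γ⌋₊ with hm
  have hNγ1 : 1 ≤ N ^ γ := Real.one_le_rpow (by linarith) hγ0.le
  have hm1 : 1 ≤ m := (Nat.one_le_floor_iff _).2 hNγ1
  have hmle : (m : ℝ) ≤ N ^ γ := Nat.floor_le (by linarith)
  have hmlt : N ^ γ < m + 1 := Nat.lt_floor_add_one _
  have hn0 : (0 : ℝ) < n := by linarith
  have hmn4 : (m : ℝ) ≤ ε / 4 * n := hmle.trans (g4.trans (by gcongr))
  have hmn : m < n := by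
    have : (m : ℝ) < n := by nlinarith
    exact_mod_cast this
  by_contra hcon
  push Not at hcon
  set a : ℝ := (indepNum H : ℝ) with ha
  have ha0 : 0 ≤ a := by positivity
  set t : ℝ := (β - 2 * η) * Real.log N with ht
  have ht0 : 0 ≤ t := mul_nonneg (by linarith) hlN.le
  have hmain := main_finite r d m hr H hH hdeg hm1 (by rw [hV]; exact hmn) t (ε / 4) ht0 (by
    rw [hV, hdn]
    refine le_trans ?_ g2
    rw [mul_pow, mul_pow]
    gcongr)
  rw [hV, ← hx, ← ha] at hmain
  have hNlN : 0 < N * Real.log N := mul_pos hN0 hlN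
  -- first error term
  have hexp : Real.exp t = N ^ (β - 2 * η) := by
    rw [ht, Real.rpow_def_of_pos hN0, mul_comm]
  have ha1 : a ≤ c * (N * Real.log N) ^ ((1 : ℝ) / r) := by
    refine hcon.le.trans ?_
    have : (1 - ε) * c ≤ c := by nlinarith
    exact mul_le_mul_of_nonneg_right this (Real.rpow_nonneg hNlN.le _)
  have herr : Real.exp t * (2 * a / (m + 1)) ≤ 1 / 2 := by
    have hpow : N ^ (β - 2 * η) * (N ^ ((1 : ℝ) / r) * N ^ η) = N ^ γ := by
      rw [← Real.rpow_add hN0, ← Real.rpow_add hN0]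
      congr 1
      rw [hγ]; ring
    rw [hexp, mul_div_assoc', div_le_iff₀ (by positivity)]
    calc N ^ (β - 2 * η) * (2 * a)
        ≤ N ^ (β - 2 * η) * (2 * (c * (N * Real.log N) ^ ((1 : ℝ) / r))) := by gcongr
      _ = N ^ (β - 2 * η) * (N ^ ((1 : ℝ) / r) * (2 * c * Real.log N ^ ((1 : ℝ) / r))) := by
          rw [Real.mul_rpow hN0.le hlN.le]; ring
      _ ≤ N ^ (β - 2 * η) * (N ^ ((1 : ℝ) / r) * (1 / 2 * N ^ η)) := by gcongr
      _ = 1 / 2 * N ^ γ := by rw [← hpow]; ring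
      _ ≤ 1 / 2 * (m + 1) := by gcongr
  -- main term
  have har : a ^ r ≤ (1 - ε) * (Q * (N * Real.log N)) := by
    have h1 : a ^ r ≤ ((1 - ε) * c * (N * Real.log N) ^ ((1 : ℝ) / r)) ^ r :=
      pow_le_pow_left₀ ha0 hcon.le r
    refine h1.trans ?_
    rw [mul_pow, mul_pow, hc, ← Real.rpow_natCast (Q ^ _), ← Real.rpow_mul hQ0.le,
      ← Real.rpow_natCast ((N * Real.log N) ^ _), ← Real.rpow_mul hNlN.le,
      one_div_mul_cancel hr0.ne', Real.rpow_one, Real.rpow_one, mul_assoc]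
    apply mul_le_mul_of_nonneg_right _ (by positivity)
    exact pow_le_of_le_one (by linarith) (by linarith) hrN
  have hchoose : ((indepNum H).choose r : ℝ) ≤ a ^ r / Nat.factorial r :=
    Nat.choose_le_pow_div r (indepNum H)
  have hQx : x * 2 ^ r * (Q / Nat.factorial r) = β := by
    rw [hQ, hβ]; field_simp
  have hnm : (1 - ε / 4) * n ≤ n - m := by linarith
  have hnm0 : 0 < (1 - ε / 4) * (n : ℝ) := mul_pos (by linarith) hn0
  have hterm : x * 2 ^ r * (((indepNum H).choose r : ℝ) * d / ((n : ℝ) - m)) ≤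
      (1 - ε) / (1 - ε / 4) * (β * Real.log N) := by
    calc x * 2 ^ r * (((indepNum H).choose r : ℝ) * d / ((n : ℝ) - m))
        ≤ x * 2 ^ r * (((1 - ε) * (Q * (N * Real.log N)) / Nat.factorial r) * d /
            ((1 - ε / 4) * n)) := by
          gcongr
          exact hchoose.trans (by gcongr)
      _ = (x * 2 ^ r * (Q / Nat.factorial r)) * ((1 - ε) / (1 - ε / 4) * Real.log N) *
            (N * d / n) := by
          have : (1 - ε / 4) ≠ 0 := by linarith
          field_simp
      _ = _ := by
          rw [hQx, ← hnNd, div_self hn0.ne']; ring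
  have h10 : (1 + t) * (1 - ε / 4) ≤ 1 / 2 + (1 - ε) / (1 - ε / 4) * (β * Real.log N) :=
    hmain.trans (add_le_add herr hterm)
  have h11 : t = (1 - ε / 4) * (β * Real.log N) := by rw [ht, hη]; ring
  have hy : 0 < β * Real.log N := mul_pos hβ0 hlN
  have h12 : (1 - ε) / (1 - ε / 4) ≤ (1 - ε / 4) * (1 - ε / 4) := by
    rw [div_le_iff₀ (by linarith)]
    nlinarith [sq_nonneg ε, mul_pos hε hε, mul_pos (mul_pos hε hε) hε]
  have h13 := mul_le_mul_of_nonneg_right h12 hy.le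
  rw [h11] at h10
  nlinarith
end

section
/- For every integer r ≥ 2 there exists a constant b_r > 0 such that for every integer d ≥ 1 there are infinitely many integers n for which there exists an (r+1)-graph H on n vertices with maximum r-degree at most d and α(H) ≤ b_r·((n/d)·log(n/d))^{1/r}. -/
open Finset
open scoped Classical

/-- Weight of the outcome `H` for the binomial random subset of `E`. -/
noncomputable def wt {α : Type*} (p : ℝ) (E H : Finset α) : ℝ :=
  p ^ #H * (1 - p) ^ (#E - #H)

lemma wt_nonneg {α : Type*} {p : ℝ} (h0 : 0 ≤ p) (h1 : p ≤ 1) (E H : Finset α) :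
    0 ≤ wt p E H := by
  unfold wt
  have : 0 ≤ 1 - p := by linarith
  positivity

lemma sum_wt {α : Type*} (p : ℝ) (E : Finset α) : ∑ H ∈ E.powerset, wt p E H = 1 := by
  unfold wt
  rw [Finset.sum_pow_mul_eq_add_pow]
  simp

lemma sum_split {α : Type*} [DecidableEq α] {A B : Finset α} (h : Disjoint A B)
    (f : Finset α → ℝ) :
    ∑ H ∈ (A ∪ B).powerset, f H = ∑ U ∈ A.powerset, ∑ W ∈ B.powerset, f (U ∪ W) := by
  rw [← Finset.sum_product']
  refine Finset.sum_nbij' (fun H => (H ∩ A, H ∩ B)) (fun q => q.1 ∪ q.2) ?_ ?_ ?_ ?_ ?_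
  · intro H _
    simp
  · rintro ⟨U, W⟩ hq
    simp only [Finset.mem_product, Finset.mem_powerset] at hq ⊢
    exact Finset.union_subset_union hq.1 hq.2
  · intro H hH
    simp only [Finset.mem_powerset] at hH
    simp only
    rw [← Finset.inter_union_distrib_left]
    exact Finset.inter_eq_left.2 hH
  · rintro ⟨U, W⟩ hq
    simp only [Finset.mem_product, Finset.mem_powerset] at hq
    obtain ⟨hU, hW⟩ := hq
    rw [Finset.disjoint_left] at h
    ext x
    · simp only [Finset.mem_inter, Finset.mem_union]
      have := @hU x; have := @hW x; have := @h x
      tauto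
    · simp only [Finset.mem_inter, Finset.mem_union]
      have := @hU x; have := @hW x; have := @h x
      tauto
  · intro H hH
    simp only [Finset.mem_powerset] at hH
    simp only
    rw [← Finset.inter_union_distrib_left, Finset.inter_eq_left.2 hH]

lemma wt_union {α : Type*} [DecidableEq α] {A B U W : Finset α} (h : Disjoint A B)
    (hU : U ⊆ A) (hW : W ⊆ B) (p : ℝ) :
    wt p (A ∪ B) (U ∪ W) = wt p A U * wt p B W := by
  unfold wt
  have h2 : Disjoint U W := Finset.disjoint_of_subset_left hU (Finset.disjoint_of_subset_right hW h)
  rw [Finset.card_union_of_disjoint h, Finset.card_union_of_disjoint h2]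
  have := Finset.card_le_card hU
  have := Finset.card_le_card hW
  have e : #A + #B - (#U + #W) = (#A - #U) + (#B - #W) := by omega
  rw [e, pow_add, pow_add]
  ring

lemma sum_wt_split {α : Type*} [DecidableEq α] {A B : Finset α} (h : Disjoint A B)
    (p : ℝ) (f : Finset α → ℝ) :
    ∑ H ∈ (A ∪ B).powerset, wt p (A ∪ B) H * f H
      = ∑ U ∈ A.powerset, wt p A U * ∑ W ∈ B.powerset, wt p B W * f (U ∪ W) := by
  rw [sum_split h]
  refine Finset.sum_congr rfl fun U hU => ?_
  rw [Finset.mul_sum]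
  refine Finset.sum_congr rfl fun W hW => ?_
  rw [wt_union h (Finset.mem_powerset.1 hU) (Finset.mem_powerset.1 hW)]
  ring

lemma P_superset {α : Type*} [DecidableEq α] {A E : Finset α} (h : A ⊆ E) (p : ℝ) :
    ∑ H ∈ E.powerset, wt p E H * (if A ⊆ H then 1 else 0) = p ^ #A := by
  have hd : Disjoint A (E \ A) := Finset.disjoint_sdiff
  have hE : A ∪ (E \ A) = E := Finset.union_sdiff_of_subset h
  have := sum_wt_split hd p (fun H => if A ⊆ H then 1 else 0)
  rw [hE] at this
  rw [this, Finset.sum_eq_single A]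
  · have h1 : ∀ W, A ⊆ A ∪ W := fun W => Finset.subset_union_left
    simp only [h1, if_true, mul_one, sum_wt]
    simp [wt]
  · intro U hU hne
    rw [Finset.mem_powerset] at hU
    have : ∀ W ∈ (E \ A).powerset, wt p (E \ A) W * (if A ⊆ U ∪ W then (1:ℝ) else 0) = 0 := by
      intro W hW
      rw [if_neg, mul_zero]
      intro hs
      apply hne
      apply Finset.Subset.antisymm hU
      intro x hx
      rcases Finset.mem_union.1 (hs hx) with h1 | h1
      · exact h1
      · have := Finset.mem_powerset.1 hW h1
        simp [hx] at this
    rw [Finset.sum_eq_zero this, mul_zero]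
  · intro hA
    simp at hA

lemma P_avoid {α : Type*} [DecidableEq α] {A E : Finset α} (h : A ⊆ E) (p : ℝ) :
    ∑ H ∈ E.powerset, wt p E H * (if Disjoint H A then 1 else 0) = (1 - p) ^ #A := by
  have hd : Disjoint A (E \ A) := Finset.disjoint_sdiff
  have hE : A ∪ (E \ A) = E := Finset.union_sdiff_of_subset h
  have := sum_wt_split hd p (fun H => if Disjoint H A then 1 else 0)
  rw [hE] at this
  rw [this, Finset.sum_eq_single ∅]
  · have h1 : ∀ W ∈ (E \ A).powerset, wt p (E \ A) W * (if Disjoint (∅ ∪ W) A then (1:ℝ) else 0)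
        = wt p (E \ A) W := by
      intro W hW
      rw [if_pos, mul_one]
      rw [Finset.empty_union]
      exact Finset.disjoint_of_subset_left (Finset.mem_powerset.1 hW) hd.symm
    rw [Finset.sum_congr rfl h1, sum_wt]
    simp [wt]
  · intro U hU hne
    rw [Finset.mem_powerset] at hU
    have : ∀ W ∈ (E \ A).powerset, wt p (E \ A) W * (if Disjoint (U ∪ W) A then (1:ℝ) else 0)
        = 0 := by
      intro W hW
      rw [if_neg, mul_zero]
      intro hs
      rw [Finset.disjoint_union_left] at hs
      apply hne
      have := hs.1
      rw [Finset.disjoint_left] at this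
      apply Finset.eq_empty_of_forall_notMem
      intro x hx
      exact this hx (hU hx)
    rw [Finset.sum_eq_zero this, mul_zero]
  · intro hA
    simp at hA

lemma P_big {α : Type*} [DecidableEq α] {O E : Finset α} (h : O ⊆ E) {p : ℝ}
    (h0 : 0 ≤ p) (h1 : p ≤ 1) (L : ℕ) :
    ∑ H ∈ E.powerset, wt p E H * (if L ≤ #(H ∩ O) then 1 else 0) ≤ (#O).choose L * p ^ L := by
  calc _ ≤ ∑ H ∈ E.powerset, ∑ A ∈ O.powersetCard L, wt p E H * (if A ⊆ H then 1 else 0) := by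
        refine Finset.sum_le_sum fun H _ => ?_
        rw [← Finset.mul_sum]
        refine mul_le_mul_of_nonneg_left ?_ (wt_nonneg h0 h1 E H)
        split_ifs with hL
        · obtain ⟨A, hA, hc⟩ := Finset.exists_subset_card_eq hL
          have hAO : A ∈ O.powersetCard L :=
            Finset.mem_powersetCard.2 ⟨hA.trans Finset.inter_subset_right, hc⟩
          calc (1:ℝ) = if A ⊆ H then 1 else 0 := by
                rw [if_pos (hA.trans Finset.inter_subset_left)]
            _ ≤ _ := Finset.single_le_sum (f := fun A => if A ⊆ H then (1:ℝ) else 0)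
                (fun i _ => by positivity) hAO
        · exact Finset.sum_nonneg fun i _ => by positivity
    _ = ∑ A ∈ O.powersetCard L, p ^ L := by
        rw [Finset.sum_comm]
        refine Finset.sum_congr rfl fun A hA => ?_
        rw [Finset.mem_powersetCard] at hA
        rw [P_superset (hA.1.trans h), hA.2]
    _ = _ := by
        rw [Finset.sum_const, Finset.card_powersetCard, nsmul_eq_mul]

lemma P_cond {α : Type*} [DecidableEq α] {I E : Finset α} (h : I ⊆ E) {p : ℝ}
    (h0 : 0 ≤ p) (h1 : p ≤ 1) (a : ℕ) (g : Finset α → Finset α) (hg : ∀ U, g U ⊆ I) :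
    ∑ H ∈ E.powerset, wt p E H * (if a ≤ #(g (H \ I)) ∧ Disjoint H (g (H \ I)) then 1 else 0)
      ≤ (1 - p) ^ a := by
  have hd : Disjoint (E \ I) I := Finset.sdiff_disjoint
  have hE : (E \ I) ∪ I = E := Finset.sdiff_union_of_subset h
  have := sum_wt_split hd p
    (fun H => if a ≤ #(g (H \ I)) ∧ Disjoint H (g (H \ I)) then 1 else 0)
  rw [hE] at this
  rw [this]
  have hp : 0 ≤ 1 - p := by linarith
  calc _ ≤ ∑ U ∈ (E \ I).powerset, wt p (E \ I) U * (1 - p) ^ a := by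
        refine Finset.sum_le_sum fun U hU => ?_
        refine mul_le_mul_of_nonneg_left ?_ (wt_nonneg h0 h1 _ _)
        rw [Finset.mem_powerset] at hU
        have hUI : Disjoint U I := Finset.disjoint_of_subset_left hU hd
        have key : ∀ W ∈ I.powerset, (U ∪ W) \ I = U := by
          intro W hW
          rw [Finset.mem_powerset] at hW
          rw [Finset.union_sdiff_distrib, Finset.sdiff_eq_empty_iff_subset.2 hW,
            Finset.union_empty, Finset.sdiff_eq_self_of_disjoint hUI]
        by_cases ha : a ≤ #(g U)
        · calc _ = ∑ W ∈ I.powerset, wt p I W * (if Disjoint W (g U) then 1 else 0) := by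
                refine Finset.sum_congr rfl fun W hW => ?_
                rw [key W hW]
                congr 1
                have : Disjoint U (g U) := Finset.disjoint_of_subset_right (hg U) hUI
                simp [ha, Finset.disjoint_union_left, this]
            _ = (1 - p) ^ #(g U) := P_avoid (hg U) p
            _ ≤ _ := pow_le_pow_of_le_one hp (by linarith) ha
        · rw [Finset.sum_eq_zero]
          · positivity
          · intro W hW
            rw [key W hW]
            simp [ha]
    _ = _ := by rw [← Finset.sum_mul, sum_wt, one_mul]

/-- Edges of the complete `(r+1)`-graph meeting `S` in exactly `r` vertices. -/
def outE {V : Type*} [Fintype V] [DecidableEq V] (r : ℕ) (S : Finset V) : Finset (Finset V) :=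
  ((univ : Finset V).powersetCard (r + 1)).filter (fun e => #(e ∩ S) = r)

/-- The `r`-subsets of `S` contained in at least `d` edges of `U`. -/
def satE {V : Type*} [DecidableEq V] (r d : ℕ) (S : Finset V) (U : Finset (Finset V)) :
    Finset (Finset V) :=
  (S.powersetCard r).filter (fun X => d ≤ #(U.filter (fun e => X ⊆ e)))

/-- The `(r+1)`-subsets of `S` without saturated `r`-subset. -/
def openE {V : Type*} [DecidableEq V] (r d : ℕ) (S : Finset V) (U : Finset (Finset V)) :
    Finset (Finset V) :=
  (S.powersetCard (r + 1)).filter (fun e => ∀ X ∈ e.powersetCard r, X ∉ satE r d S U)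

lemma openE_subset {V : Type*} [DecidableEq V] {r d : ℕ} {S : Finset V}
    {U : Finset (Finset V)} : openE r d S U ⊆ S.powersetCard (r + 1) := by
  intro e he
  rw [openE, Finset.mem_filter] at he
  exact he.1

lemma exists_max_sub {V : Type*} [DecidableEq V] (r d : ℕ) (H : Finset (Finset V)) :
    ∃ H' ⊆ H, maxDegLe r H' d ∧ ∀ e ∈ H, e ∉ H' → ¬ maxDegLe r (insert e H') d := by
  have hne : (H.powerset.filter (fun K => maxDegLe r K d)).Nonempty :=
    ⟨∅, by
      rw [Finset.mem_filter]
      exact ⟨by simp, fun S _ => by simp⟩⟩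
  obtain ⟨H', h1, h2⟩ := Finset.exists_max_image _ Finset.card hne
  rw [Finset.mem_filter, Finset.mem_powerset] at h1
  refine ⟨H', h1.1, h1.2, fun e he hn hm => ?_⟩
  have := h2 (insert e H') (by
    rw [Finset.mem_filter, Finset.mem_powerset]
    exact ⟨Finset.insert_subset he h1.1, hm⟩)
  rw [Finset.card_insert_of_notMem hn] at this
  omega

lemma bad_disjoint {V : Type*} [DecidableEq V] {r d : ℕ} {H H' : Finset (Finset V)}
    {S : Finset V} (hs : H' ⊆ H) (hd : maxDegLe r H' d)
    (hm : ∀ e ∈ H, e ∉ H' → ¬ maxDegLe r (insert e H') d) (hi : IsIndep H' S) :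
    Disjoint H (openE r d S (H \ S.powersetCard (r + 1))) := by
  rw [Finset.disjoint_left]
  intro e he ho
  rw [openE, Finset.mem_filter, Finset.mem_powersetCard] at ho
  obtain ⟨⟨heS, hec⟩, ho⟩ := ho
  have hn : e ∉ H' := fun h => hi e h heS
  have := hm e he hn
  unfold maxDegLe at this
  push Not at this
  obtain ⟨X, hX, hlt⟩ := this
  rw [Finset.filter_insert] at hlt
  have hdX := hd X hX
  split_ifs at hlt with hXe
  · apply ho X (Finset.mem_powersetCard.2 ⟨hXe, hX⟩)
    rw [satE, Finset.mem_filter, Finset.mem_powersetCard]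
    refine ⟨⟨hXe.trans heS, hX⟩, ?_⟩
    have h1 := Finset.card_insert_le e (H'.filter (fun e => X ⊆ e))
    have h2 : H'.filter (fun e => X ⊆ e) ⊆
        (H \ S.powersetCard (r + 1)).filter (fun e => X ⊆ e) := by
      intro f hf
      rw [Finset.mem_filter] at hf ⊢
      refine ⟨Finset.mem_sdiff.2 ⟨hs hf.1, fun h => ?_⟩, hf.2⟩
      exact hi f hf.1 (Finset.mem_powersetCard.1 h).1
    have h3 := Finset.card_le_card h2
    omega
  · omega

lemma sat_count {V : Type*} [Fintype V] [DecidableEq V] {r d : ℕ} {S : Finset V}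
    {H : Finset (Finset V)} (hH : H ⊆ (univ : Finset V).powersetCard (r + 1)) :
    d * #(satE r d S (H \ S.powersetCard (r + 1))) ≤ #(H ∩ outE r S) := by
  set U := H \ S.powersetCard (r + 1) with hU
  calc d * #(satE r d S U) = ∑ X ∈ satE r d S U, d := by simp [mul_comm]
    _ ≤ ∑ X ∈ satE r d S U, #((H ∩ outE r S).filter (fun f => f ∩ S = X)) := by
        refine Finset.sum_le_sum fun X hX => ?_
        rw [satE, Finset.mem_filter, Finset.mem_powersetCard] at hX
        refine hX.2.trans (Finset.card_le_card ?_)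
        intro f hf
        rw [Finset.mem_filter, hU, Finset.mem_sdiff] at hf
        obtain ⟨⟨hfH, hfS⟩, hXf⟩ := hf
        have hfc := (Finset.mem_powersetCard.1 (hH hfH)).2
        have hsub : X ⊆ f ∩ S := Finset.subset_inter hXf hX.1.1
        have hcard : #(f ∩ S) ≤ r := by
          by_contra hc
          push Not at hc
          have : f ∩ S = f := Finset.eq_of_subset_of_card_le Finset.inter_subset_left (by omega)
          exact hfS (Finset.mem_powersetCard.2 ⟨Finset.inter_eq_left.1 this, hfc⟩)
        have heq : X = f ∩ S := Finset.eq_of_subset_of_card_le hsub (by omega)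
        rw [Finset.mem_filter, Finset.mem_inter, outE, Finset.mem_filter]
        refine ⟨⟨hfH, hH hfH, ?_⟩, heq.symm⟩
        rw [← heq, hX.1.2]
    _ ≤ #(H ∩ outE r S) := by
        rw [← Finset.card_biUnion]
        · apply Finset.card_le_card
          intro f hf
          rw [Finset.mem_biUnion] at hf
          obtain ⟨X, _, h⟩ := hf
          exact (Finset.mem_filter.1 h).1
        · intro X _ Y _ hne
          rw [Function.onFun, Finset.disjoint_left]
          intro f h1 h2
          exact hne ((Finset.mem_filter.1 h1).2.symm.trans (Finset.mem_filter.1 h2).2)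

lemma out_count {V : Type*} [Fintype V] [DecidableEq V] {r : ℕ} {S : Finset V} :
    #(outE r S) ≤ (#S).choose r * Fintype.card V := by
  have : outE r S ⊆ (S.powersetCard r ×ˢ (univ : Finset V)).image (fun q => insert q.2 q.1) := by
    intro f hf
    rw [outE, Finset.mem_filter, Finset.mem_powersetCard] at hf
    obtain ⟨⟨_, h1⟩, h2⟩ := hf
    have h3 : #(f \ S) = 1 := by
      have := Finset.card_sdiff_add_card_inter f S
      omega
    obtain ⟨v, hv⟩ := Finset.card_eq_one.1 h3
    rw [Finset.mem_image]
    refine ⟨(f ∩ S, v), ?_, ?_⟩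
    · simp [Finset.mem_powersetCard, h2]
    · simp only
      rw [Finset.insert_eq, ← hv, Finset.sdiff_union_inter]
  refine (Finset.card_le_card this).trans (Finset.card_image_le.trans ?_)
  rw [Finset.card_product, Finset.card_powersetCard, Finset.card_univ]

lemma open_count {V : Type*} [DecidableEq V] {r d : ℕ} {S : Finset V}
    {U : Finset (Finset V)} :
    (#S).choose (r + 1) ≤ #(openE r d S U) + #(satE r d S U) * #S := by
  have : S.powersetCard (r + 1) ⊆
      openE r d S U ∪ (satE r d S U ×ˢ S).image (fun q => insert q.2 q.1) := by
    intro e he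
    rw [Finset.mem_union]
    by_cases ho : e ∈ openE r d S U
    · exact Or.inl ho
    right
    rw [openE, Finset.mem_filter] at ho
    push Not at ho
    obtain ⟨X, hX, hs⟩ := ho he
    rw [Finset.mem_powersetCard] at hX he
    have h3 : #(e \ X) = 1 := by
      have := Finset.card_sdiff_add_card_eq_card hX.1
      omega
    obtain ⟨v, hv⟩ := Finset.card_eq_one.1 h3
    rw [Finset.mem_image]
    refine ⟨(X, v), ?_, ?_⟩
    · rw [Finset.mem_product]
      refine ⟨hs, he.1 ?_⟩
      have : v ∈ e \ X := by rw [hv]; simp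
      exact (Finset.mem_sdiff.1 this).1
    · simp only
      rw [Finset.insert_eq, ← hv, Finset.sdiff_union_of_subset hX.1]
  have h1 := (Finset.card_le_card this).trans (Finset.card_union_le _ _)
  rw [Finset.card_powersetCard] at h1
  have h2 : #((satE r d S U ×ˢ S).image (fun q => insert q.2 q.1)) ≤ #(satE r d S U) * #S :=
    Finset.card_image_le.trans (by rw [Finset.card_product])
  omega

/-- The probabilistic heart: a numerical condition ensuring a good hypergraph. -/
lemma exists_good (n r d t l a : ℕ) (p : ℝ) (h0 : 0 ≤ p) (h1 : p ≤ 1) (hd : 1 ≤ d)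
    (ha : a + (l - 1) * t ≤ t.choose (r + 1))
    (hl : 1 ≤ l)
    (B : ℕ) (hB : B = t.choose r * n)
    (hlt : (n : ℝ) ^ t * ((B.choose (d * l) : ℝ) * p ^ (d * l) + (1 - p) ^ a) < 1) :
    ∃ H : Finset (Finset (Fin n)), (∀ e ∈ H, e.card = r + 1) ∧ maxDegLe r H d ∧
      indepNum H < t := by
  by_contra hcon
  push Not at hcon
  set E : Finset (Finset (Fin n)) := (univ : Finset (Fin n)).powersetCard (r + 1) with hE
  set F : Finset (Fin n) → Finset (Finset (Fin n)) → ℝ := fun S H =>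
    wt p E H * (if d * l ≤ #(H ∩ outE r S) then 1 else 0) +
    wt p E H * (if a ≤ #(openE r d S (H \ S.powersetCard (r + 1))) ∧
      Disjoint H (openE r d S (H \ S.powersetCard (r + 1))) then 1 else 0) with hF
  have hFn : ∀ S H, 0 ≤ F S H := by
    intro S H
    have := wt_nonneg h0 h1 E H
    simp only [hF]
    positivity
  have hp : 0 ≤ 1 - p := by linarith
  have step1 : ∀ H ∈ E.powerset, wt p E H ≤ ∑ S ∈ (univ : Finset (Fin n)).powersetCard t, F S H := by
    intro H hH
    rw [Finset.mem_powerset] at hH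
    obtain ⟨H', hs, hdeg, hmax⟩ := exists_max_sub r d H
    have hc := hcon H' (fun e he => (Finset.mem_powersetCard.1 (hH (hs he))).2) hdeg
    have hS : ∃ S : Finset (Fin n), #S = t ∧ IsIndep H' S := by
      have hne : ((Finset.univ : Finset (Fin n)).powerset.filter
          (fun Z => IsIndep H' Z)).Nonempty := by
        refine ⟨∅, ?_⟩
        simp only [Finset.mem_filter, Finset.mem_powerset, Finset.empty_subset, true_and]
        intro e he hsub
        have := (Finset.mem_powersetCard.1 (hH (hs he))).2
        rw [Finset.subset_empty.1 hsub] at this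
        simp at this
      obtain ⟨Z, hZ, hZc⟩ := Finset.exists_mem_eq_sup _ hne Finset.card
      rw [indepNum, hZc] at hc
      obtain ⟨S, hSZ, hSc⟩ := Finset.exists_subset_card_eq hc
      exact ⟨S, hSc, fun e he hes => (Finset.mem_filter.1 hZ).2 e he (hes.trans hSZ)⟩
    obtain ⟨S, hSc, hSi⟩ := hS
    have hbad := bad_disjoint hs hdeg hmax hSi
    have hle : wt p E H ≤ F S H := by
      have hw := wt_nonneg h0 h1 E H
      simp only [hF]
      by_cases hb : d * l ≤ #(H ∩ outE r S)
      · rw [if_pos hb, mul_one]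
        have : 0 ≤ wt p E H * (if a ≤ #(openE r d S (H \ S.powersetCard (r + 1))) ∧
          Disjoint H (openE r d S (H \ S.powersetCard (r + 1))) then (1:ℝ) else 0) := by positivity
        linarith
      · have hsat := sat_count (d := d) (S := S) hH
        have hop := open_count (r := r) (d := d) (S := S) (U := H \ S.powersetCard (r + 1))
        have h3 : #(satE r d S (H \ S.powersetCard (r + 1))) ≤ l - 1 := by
          have : d * #(satE r d S (H \ S.powersetCard (r + 1))) < d * l := by omega
          have := lt_of_mul_lt_mul_left this (Nat.zero_le d)
          omega
        have h4 := Nat.mul_le_mul_right t h3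
        rw [hSc] at hop
        have h5 : a ≤ #(openE r d S (H \ S.powersetCard (r + 1))) := by omega
        rw [if_neg hb, if_pos ⟨h5, hbad⟩]
        simp
    exact hle.trans (Finset.single_le_sum (f := fun S => F S H) (fun S _ => hFn S H)
      (Finset.mem_powersetCard.2 ⟨Finset.subset_univ S, hSc⟩))
  have step2 : ∀ S ∈ (univ : Finset (Fin n)).powersetCard t, ∑ H ∈ E.powerset, F S H ≤
      (B.choose (d * l) : ℝ) * p ^ (d * l) + (1 - p) ^ a := by
    intro S hS
    have hSc := (Finset.mem_powersetCard.1 hS).2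
    simp only [hF]
    rw [Finset.sum_add_distrib]
    apply add_le_add
    · refine (P_big (Finset.filter_subset _ _) h0 h1 (d * l)).trans ?_
      have h6 : #(outE r S) ≤ B := by
        have := out_count (r := r) (S := S)
        rw [hSc, Fintype.card_fin] at this
        rw [hB]; exact this
      have h7 : ((#(outE r S)).choose (d * l) : ℝ) ≤ B.choose (d * l) := by
        exact_mod_cast Nat.choose_le_choose _ h6
      exact mul_le_mul_of_nonneg_right h7 (by positivity)
    · exact P_cond (I := S.powersetCard (r + 1))
        (Finset.powersetCard_mono (Finset.subset_univ S)) h0 h1 a (openE r d S)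
        (fun U => openE_subset)
  have : (1 : ℝ) ≤ (n : ℝ) ^ t * ((B.choose (d * l) : ℝ) * p ^ (d * l) + (1 - p) ^ a) := by
    calc (1:ℝ) = ∑ H ∈ E.powerset, wt p E H := (sum_wt p E).symm
      _ ≤ ∑ H ∈ E.powerset, ∑ S ∈ (univ : Finset (Fin n)).powersetCard t, F S H :=
          Finset.sum_le_sum step1
      _ = ∑ S ∈ (univ : Finset (Fin n)).powersetCard t, ∑ H ∈ E.powerset, F S H :=
          Finset.sum_comm
      _ ≤ ∑ S ∈ (univ : Finset (Fin n)).powersetCard t,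
          ((B.choose (d * l) : ℝ) * p ^ (d * l) + (1 - p) ^ a) := Finset.sum_le_sum step2
      _ = (n.choose t : ℝ) * ((B.choose (d * l) : ℝ) * p ^ (d * l) + (1 - p) ^ a) := by
          rw [Finset.sum_const, Finset.card_powersetCard, nsmul_eq_mul, Finset.card_univ,
            Fintype.card_fin]
      _ ≤ _ := by
          refine mul_le_mul_of_nonneg_right ?_ (by positivity)
          exact_mod_cast Nat.choose_le_pow n t
  linarith

lemma tail_one (B L : ℕ) (p : ℝ) (h0 : 0 ≤ p) (h : (B : ℝ) * p ≤ L / 8) :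
    (B.choose L : ℝ) * p ^ L ≤ Real.exp (-L) := by
  have h1 : (B.choose L : ℝ) ≤ (B : ℝ) ^ L / (L.factorial : ℝ) := Nat.choose_le_pow_div L B
  have h2 : (L : ℝ) ^ L / (L.factorial : ℝ) ≤ Real.exp L :=
    Real.pow_div_factorial_le_exp _ (by positivity) L
  have h3 : Real.exp 2 ≤ 8 := by
    have := Real.exp_one_lt_d9
    have h4 : Real.exp 2 = Real.exp 1 * Real.exp 1 := by rw [← Real.exp_add]; norm_num
    rw [h4]
    nlinarith [Real.exp_pos 1]
  have h5 : (1 / 8 : ℝ) ≤ Real.exp (-2) := by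
    rw [Real.exp_neg, one_div]
    exact inv_anti₀ (Real.exp_pos 2) h3
  calc (B.choose L : ℝ) * p ^ L ≤ (B : ℝ) ^ L / (L.factorial : ℝ) * p ^ L :=
        mul_le_mul_of_nonneg_right h1 (by positivity)
    _ = ((B : ℝ) * p) ^ L / (L.factorial : ℝ) := by rw [mul_pow]; ring
    _ ≤ ((L : ℝ) / 8) ^ L / (L.factorial : ℝ) := by gcongr
    _ = (1 / 8 : ℝ) ^ L * ((L : ℝ) ^ L / (L.factorial : ℝ)) := by
        rw [div_pow, div_pow]; ring
    _ ≤ (Real.exp (-2)) ^ L * Real.exp L := by gcongr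
    _ = Real.exp (-L) := by
        rw [← Real.exp_nat_mul, ← Real.exp_add]
        congr 1
        ring

lemma good_of_bounds (r d t N : ℕ) (hd : 1 ≤ d) (hN : 3 ≤ N) (hdN : d ≤ N)
    (ht : 2 * r ≤ t) (ht1 : 1 ≤ t)
    (H1 : 12 * ((r : ℝ) + 1) * t * Real.log N ≤ t.choose r)
    (H2 : 384 * ((r : ℝ) + 1) ^ 2 * N * Real.log N ≤ t.choose r) :
    ∃ H : Finset (Finset (Fin (d * N))), (∀ e ∈ H, e.card = r + 1) ∧ maxDegLe r H d ∧
      indepNum H < t := by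
  set T := t.choose r with hT
  set C := t.choose (r + 1) with hC
  set l := T / (4 * (r + 1)) + 1 with hl
  have hNpos : (0 : ℝ) < N := by positivity
  have hlog : 1 ≤ Real.log N := by
    rw [Real.le_log_iff_exp_le hNpos]
    have := Real.exp_one_lt_d9
    have h3 : (3 : ℝ) ≤ N := by exact_mod_cast hN
    linarith
  have hCT : C * (r + 1) = T * (t - r) := Nat.choose_succ_right_eq t r
  have hTt : T * t ≤ 2 * (C * (r + 1)) := by
    rw [hCT]
    have : t ≤ 2 * (t - r) := by omega
    calc T * t ≤ T * (2 * (t - r)) := Nat.mul_le_mul_left _ this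
      _ = _ := by ring
  have hl1 : (l - 1) * (4 * (r + 1)) ≤ T := by
    rw [hl, Nat.add_sub_cancel]
    exact Nat.div_mul_le_self _ _
  have hl2 : T < l * (4 * (r + 1)) := by
    rw [hl, mul_comm]
    exact Nat.lt_mul_div_succ T (by omega)
  have hlC : 2 * ((l - 1) * t) ≤ C := by
    have h1 := Nat.mul_le_mul_right t hl1
    have h2 : (2 * (r + 1)) * (2 * ((l - 1) * t)) ≤ (2 * (r + 1)) * C := by
      calc _ = (l - 1) * (4 * (r + 1)) * t := by ring
        _ ≤ T * t := h1
        _ ≤ _ := hTt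
        _ = _ := by ring
    exact le_of_mul_le_mul_left h2 (by omega)
  set a := C - (l - 1) * t with ha
  have haC : C ≤ 2 * a := by omega
  set p : ℝ := 1 / (32 * ((r : ℝ) + 1) * N) with hp
  have hN1 : (1 : ℝ) ≤ N := by exact_mod_cast (by omega : 1 ≤ N)
  have hr0 : (0 : ℝ) ≤ r := by positivity
  have hp0 : 0 ≤ p := by positivity
  have hp1 : p ≤ 1 := by
    rw [hp, div_le_one (by positivity)]
    nlinarith
  have hl2' : (T : ℝ) ≤ l * (4 * ((r : ℝ) + 1)) := by exact_mod_cast hl2.le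
  have htl : (0 : ℝ) ≤ t * Real.log N := by positivity
  have hd1 : (1 : ℝ) ≤ d := by exact_mod_cast hd
  refine exists_good (d * N) r d t l a p hp0 hp1 hd (by omega) (Nat.le_add_left 1 _)
    (T * (d * N)) rfl ?_
  -- first tail
  have e1 : ((T * (d * N)).choose (d * l) : ℝ) * p ^ (d * l) ≤
      Real.exp (-(3 * (t * Real.log N))) := by
    refine (tail_one _ _ p hp0 ?_).trans ?_
    · have : ((T * (d * N) : ℕ) : ℝ) * p = T * d / (32 * ((r : ℝ) + 1)) := by
        rw [hp]; push_cast; field_simp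
      rw [this, div_le_div_iff₀ (by positivity) (by norm_num)]
      push_cast
      have := mul_le_mul_of_nonneg_left hl2' (by positivity : (0:ℝ) ≤ d)
      nlinarith
    · apply Real.exp_le_exp.2
      push_cast
      have h1 : 3 * (t * Real.log N) ≤ (l : ℝ) := by
        have : (4 * ((r : ℝ) + 1)) * (3 * (t * Real.log N)) ≤ (4 * ((r : ℝ) + 1)) * l := by
          linarith
        exact le_of_mul_le_mul_left this (by positivity)
      have h2 : (l : ℝ) ≤ d * l := by
        have : (0 : ℝ) ≤ l := by positivity
        nlinarith
      linarith
  have e2 : (1 - p) ^ a ≤ Real.exp (-(3 * (t * Real.log N))) := by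
    have h1 : 1 - p ≤ Real.exp (-p) := by
      have := Real.add_one_le_exp (-p)
      linarith
    calc (1 - p) ^ a ≤ (Real.exp (-p)) ^ a := by
          have : 0 ≤ 1 - p := by linarith
          gcongr
      _ = Real.exp (-(a * p)) := by rw [← Real.exp_nat_mul]; congr 1; ring
      _ ≤ _ := by
          apply Real.exp_le_exp.2
          apply neg_le_neg
          rw [hp, mul_one_div, le_div_iff₀ (by positivity)]
          have h3 : (T : ℝ) * t ≤ 4 * (a * ((r : ℝ) + 1)) := by
            have : T * t ≤ 4 * (a * (r + 1)) := by
              have := Nat.mul_le_mul_right (r + 1) haC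
              nlinarith
            exact_mod_cast this
          have h4 := mul_le_mul_of_nonneg_right H2 (by positivity : (0:ℝ) ≤ t)
          have h5 : (4 * ((r : ℝ) + 1)) * (3 * (t * Real.log N) * (32 * ((r : ℝ) + 1) * N))
              ≤ (4 * ((r : ℝ) + 1)) * a := by
            calc _ = 384 * ((r : ℝ) + 1) ^ 2 * N * Real.log N * t := by ring
              _ ≤ _ := h4
              _ ≤ _ := h3
              _ = _ := by ring
          exact le_of_mul_le_mul_left h5 (by positivity)
  have e3 : ((d * N : ℕ) : ℝ) ^ t ≤ Real.exp (2 * (t * Real.log N)) := by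
    have : ((d * N : ℕ) : ℝ) ≤ Real.exp (2 * Real.log N) := by
      have h : Real.exp (2 * Real.log N) = N * N := by
        rw [two_mul, Real.exp_add, Real.exp_log hNpos]
      rw [h]
      exact_mod_cast Nat.mul_le_mul_right N hdN
    calc ((d * N : ℕ) : ℝ) ^ t ≤ (Real.exp (2 * Real.log N)) ^ t := by gcongr
      _ = _ := by rw [← Real.exp_nat_mul]; congr 1; ring
  calc _ ≤ Real.exp (2 * (t * Real.log N)) *
        (Real.exp (-(3 * (t * Real.log N))) + Real.exp (-(3 * (t * Real.log N)))) := by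
        have : 0 ≤ 1 - p := by linarith
        gcongr
    _ = 2 * Real.exp (-(t * Real.log N)) := by
        rw [← two_mul, mul_left_comm, ← Real.exp_add]
        congr 2
        ring
    _ < 1 := by
        have h1 : (1 : ℝ) ≤ t * Real.log N := by
          have : (1 : ℝ) ≤ t := by exact_mod_cast ht1
          nlinarith
        have h2 : Real.exp (-(t * Real.log N)) ≤ Real.exp (-1) := Real.exp_le_exp.2 (by linarith)
        have h3 : Real.exp (-1) < 1 / 2 := by
          rw [Real.exp_neg, one_div]
          apply inv_strictAnti₀ (by norm_num)
          have := Real.exp_one_gt_d9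
          linarith
        linarith

lemma choose_lower (r t : ℕ) (ht : 2 * r ≤ t) :
    (t : ℝ) ^ r ≤ 2 ^ r * r.factorial * t.choose r := by
  have h := Nat.pow_le_choose (α := ℝ) r t
  rw [div_le_iff₀ (by positivity)] at h
  have h1 : (t : ℝ) ≤ 2 * ((t + 1 - r : ℕ) : ℝ) := by
    exact_mod_cast (by omega : t ≤ 2 * (t + 1 - r))
  calc (t : ℝ) ^ r ≤ (2 * ((t + 1 - r : ℕ) : ℝ)) ^ r := by gcongr
    _ = 2 ^ r * ((t + 1 - r : ℕ) : ℝ) ^ r := by rw [mul_pow]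
    _ ≤ 2 ^ r * (t.choose r * r.factorial) := by gcongr
    _ = _ := by ring

/-- For every `r ≥ 2` there is `b_r > 0` such that for every `d ≥ 1`
there are infinitely many `n` admitting an `(r+1)`-graph on `n` vertices with maximum
`r`-degree at most `d` and `α(H) ≤ b_r·((n/d)·log(n/d))^(1/r)`. -/
theorem stmt3 (r : ℕ) (hr : 2 ≤ r) :
    ∃ b : ℝ, 0 < b ∧ ∀ d : ℕ, 1 ≤ d → ∀ m : ℕ, ∃ n : ℕ, m ≤ n ∧
      ∃ H : Finset (Finset (Fin n)),
        (∀ e ∈ H, e.card = r + 1) ∧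
        maxDegLe r H d ∧
        (indepNum H : ℝ) ≤ b * (((n : ℝ) / d) * Real.log ((n : ℝ) / d)) ^ ((1 : ℝ) / r) := by
  have hr0 : (0 : ℝ) < r := by positivity
  set Q : ℝ := 2 ^ r * r.factorial with hQ
  have hQ1 : 1 ≤ Q := by
    have h1 : (1 : ℝ) ≤ 2 ^ r := one_le_pow₀ (by norm_num)
    have h2 : (1 : ℝ) ≤ r.factorial := by exact_mod_cast Nat.factorial_pos r
    rw [hQ]
    nlinarith
  set b : ℝ := 384 * ((r : ℝ) + 1) ^ 2 * Q with hb
  have hb1 : 1 ≤ b := by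
    rw [hb]
    have : 1 ≤ 384 * ((r : ℝ) + 1) ^ 2 := by nlinarith
    nlinarith
  refine ⟨b, by linarith, fun d hd m => ?_⟩
  -- choose N large
  have hinv : (0 : ℝ) < 1 / r := by positivity
  set c : ℝ := 12 * ((r : ℝ) + 1) * Q with hc
  have hc0 : 0 < c := by positivity
  have ev1 : ∀ᶠ N : ℕ in Filter.atTop, Real.log N * c ≤ (N : ℝ) ^ ((1 : ℝ) / r) := by
    have := ((isLittleO_log_rpow_atTop hinv).comp_tendsto
      (tendsto_natCast_atTop_atTop (R := ℝ))).bound (by positivity : 0 < c⁻¹)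
    filter_upwards [this] with N hN
    simp only [Function.comp, Real.norm_eq_abs] at hN
    have h1 := (le_abs_self _).trans hN
    rw [abs_of_nonneg (by positivity)] at h1
    rw [← le_div_iff₀ hc0, div_eq_inv_mul]
    exact h1
  have ev2 : ∀ᶠ N : ℕ in Filter.atTop, (2 * r : ℝ) ≤ (N : ℝ) ^ ((1 : ℝ) / r) :=
    ((tendsto_rpow_atTop hinv).comp (tendsto_natCast_atTop_atTop (R := ℝ))).eventually_ge_atTop _
  obtain ⟨N, hN1, hN2, hN3, hNd, hNm⟩ := (ev1.and (ev2.and ((Filter.eventually_ge_atTop 3).and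
    ((Filter.eventually_ge_atTop d).and (Filter.eventually_ge_atTop m))))).exists
  have hNpos : (0 : ℝ) < N := by positivity
  have hlog : 1 ≤ Real.log N := by
    rw [Real.le_log_iff_exp_le hNpos]
    have := Real.exp_one_lt_d9
    have h3 : (3 : ℝ) ≤ N := by exact_mod_cast hN3
    linarith
  set x : ℝ := ((N : ℝ) * Real.log N) ^ ((1 : ℝ) / r) with hx
  have hx0 : 0 ≤ x := by positivity
  have hxN : (N : ℝ) ^ ((1 : ℝ) / r) ≤ x := by
    rw [hx]
    apply Real.rpow_le_rpow hNpos.le _ hinv.le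
    nlinarith
  have hxr : x ^ r = N * Real.log N := by
    rw [hx, one_div]
    exact Real.rpow_inv_natCast_pow (by positivity) (by omega)
  set t : ℕ := ⌊b * x⌋₊ + 1 with ht
  have htx : b * x ≤ t := by
    rw [ht]; push_cast
    exact (Nat.lt_floor_add_one _).le
  have htx' : x ≤ t := by nlinarith
  have ht2r : 2 * r ≤ t := by
    have : (2 * r : ℝ) ≤ t := by linarith
    exact_mod_cast this
  have hch := choose_lower r t ht2r
  have hQ0 : 0 < Q := by linarith
  obtain ⟨H, hH1, hH2, hH3⟩ := good_of_bounds r d t N hd hN3 hNd ht2r (by omega) (by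
      have h1 : c * Real.log N ≤ t := by linarith
      have ht1 : (1 : ℝ) ≤ t := by rw [ht]; push_cast; linarith [Nat.cast_nonneg (α := ℝ) ⌊b * x⌋₊]
      have h2 : (t : ℝ) ^ 2 ≤ t ^ r := pow_le_pow_right₀ ht1 hr
      have h3 : Q * (12 * ((r : ℝ) + 1) * t * Real.log N) ≤ Q * t.choose r := by
        calc _ = t * (c * Real.log N) := by rw [hc]; ring
          _ ≤ t * t := by gcongr
          _ = (t : ℝ) ^ 2 := by ring
          _ ≤ _ := h2
          _ ≤ _ := hch
      exact le_of_mul_le_mul_left h3 hQ0) (by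
      have h3 : Q * (384 * ((r : ℝ) + 1) ^ 2 * N * Real.log N) ≤ Q * t.choose r := by
        calc _ = b * (N * Real.log N) := by rw [hb]; ring
          _ ≤ b ^ r * (N * Real.log N) := by
              have : b ≤ b ^ r := le_self_pow₀ hb1 (by omega)
              gcongr
          _ = (b * x) ^ r := by rw [mul_pow b x r, hxr]
          _ ≤ (t : ℝ) ^ r := by gcongr
          _ ≤ _ := hch
      exact le_of_mul_le_mul_left h3 hQ0)
  refine ⟨d * N, ?_, H, hH1, hH2, ?_⟩
  · nlinarith
  · have hd0 : (d : ℝ) ≠ 0 := by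
      have : (1 : ℝ) ≤ d := by exact_mod_cast hd
      positivity
    have : ((d * N : ℕ) : ℝ) / d = N := by
      push_cast
      field_simp
    rw [this]
    have h4 : indepNum H ≤ ⌊b * x⌋₊ := by omega
    calc (indepNum H : ℝ) ≤ (⌊b * x⌋₊ : ℝ) := by exact_mod_cast h4
      _ ≤ b * x := Nat.floor_le (by positivity)
end

section
/- For every integer r ≥ 2 and every real ε > 0 there exist constants C and n₀ such that for all integers n ≥ n₀ and all integers d with C·log n ≤ d ≤ n/2, there exists an (r+1)-graph H on n vertices whose maximum r-degree is at most (1+ε)·d and which satisfies α(H) ≤ (1+ε)·((r+1)!)^{1/r}·((n/d)·log n)^{1/r}. -/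
open Finset
open scoped Classical

theorem weight_sum {α : Type*} [DecidableEq α] (E A : Finset α) (hA : A ⊆ E) (p t : ℝ) :
    ∑ H ∈ E.powerset, p ^ H.card * (1 - p) ^ (E \ H).card * t ^ (H ∩ A).card
      = (1 - p + p * t) ^ A.card := by
  have h := Finset.prod_add (fun e => p * (if e ∈ A then t else 1)) (fun _ => 1 - p) E
  have h1 : ∏ e ∈ E, (p * (if e ∈ A then t else 1) + (1 - p)) = (1 - p + p * t) ^ A.card := by
    rw [← Finset.prod_subset hA]
    · rw [Finset.prod_congr rfl (g := fun _ => 1 - p + p * t), Finset.prod_const]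
      intro x hx
      simp [hx]; ring
    · intro x _ hx
      simp [hx]
  rw [← h1, h]
  refine Finset.sum_congr rfl fun H _ => ?_
  rw [Finset.prod_mul_distrib, Finset.prod_const, Finset.prod_const, Finset.prod_ite,
    Finset.prod_const, Finset.prod_const_one, mul_one, Finset.filter_mem_eq_inter]
  ring

theorem exists_good_s6 {α ι κ : Type*} [DecidableEq α] (E : Finset α) (p t L : ℝ)
    (hp0 : 0 ≤ p) (hp1 : p ≤ 1) (ht : 1 ≤ t) (𝒮 : Finset ι) (𝒵 : Finset κ)
    (B : ι → Finset α) (A : κ → Finset α) (hB : ∀ S ∈ 𝒮, B S ⊆ E) (hA : ∀ Z ∈ 𝒵, A Z ⊆ E)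
    (hsum : ∑ S ∈ 𝒮, (1 - p + p * t) ^ (B S).card * Real.exp (-(L * Real.log t))
      + ∑ Z ∈ 𝒵, (1 - p) ^ (A Z).card < 1) :
    ∃ H ⊆ E, (∀ S ∈ 𝒮, ((H ∩ B S).card : ℝ) ≤ L) ∧ ∀ Z ∈ 𝒵, (H ∩ A Z).Nonempty := by
  by_contra hcon
  push Not at hcon
  have key : ∀ H ∈ E.powerset, (1 : ℝ) ≤
      ∑ S ∈ 𝒮, t ^ (H ∩ B S).card * Real.exp (-(L * Real.log t))
        + ∑ Z ∈ 𝒵, (0 : ℝ) ^ (H ∩ A Z).card := by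
    intro H hH
    have n1 : ∀ S ∈ 𝒮, 0 ≤ t ^ (H ∩ B S).card * Real.exp (-(L * Real.log t)) :=
      fun S _ => by positivity
    have n2 : ∀ Z ∈ 𝒵, 0 ≤ (0 : ℝ) ^ (H ∩ A Z).card := fun Z _ => by positivity
    by_cases h : ∀ S ∈ 𝒮, ((H ∩ B S).card : ℝ) ≤ L
    · obtain ⟨Z, hZ, hZe⟩ := hcon H (Finset.mem_powerset.1 hH) h
      have h2 := Finset.single_le_sum n2 hZ
      have h1 := Finset.sum_nonneg n1
      rw [hZe, Finset.card_empty, pow_zero] at h2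
      linarith
    · push Not at h
      obtain ⟨S, hS, hlt⟩ := h
      have h1 := Finset.single_le_sum n1 hS
      have h2 := Finset.sum_nonneg n2
      have : 1 ≤ t ^ (H ∩ B S).card * Real.exp (-(L * Real.log t)) := by
        have ht0 : 0 < t := by linarith
        rw [← Real.exp_log (pow_pos ht0 _), Real.log_pow, ← Real.exp_add]
        apply Real.one_le_exp
        nlinarith [Real.log_nonneg ht]
      linarith
  have hw : ∀ H ∈ E.powerset, 0 ≤ p ^ H.card * (1 - p) ^ (E \ H).card := by
    intro H _
    have : 0 ≤ 1 - p := by linarith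
    positivity
  have tot := weight_sum E ∅ (Finset.empty_subset _) p 1
  simp only [Finset.inter_empty, Finset.card_empty, pow_zero, mul_one] at tot
  have h3 := Finset.sum_le_sum fun H hH => mul_le_mul_of_nonneg_left (key H hH) (hw H hH)
  simp only [mul_one, tot, mul_add, Finset.mul_sum, Finset.sum_add_distrib] at h3
  rw [Finset.sum_comm, Finset.sum_comm (t := 𝒵)] at h3
  refine absurd hsum (not_lt.2 (h3.trans (le_of_eq ?_)))
  congr 1
  · refine Finset.sum_congr rfl fun S hS => ?_
    rw [← weight_sum E (B S) (hB S hS) p t, Finset.sum_mul]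
    exact Finset.sum_congr rfl fun _ _ => by ring
  · refine Finset.sum_congr rfl fun Z hZ => ?_
    rw [weight_sum E (A Z) (hA Z hZ) p 0]
    simp

theorem card_link_le {n r : ℕ} (S : Finset (Fin n)) (hS : S.card = r) :
    (((univ : Finset (Fin n)).powersetCard (r + 1)).filter (fun e => S ⊆ e)).card ≤ n := by
  have : ((univ : Finset (Fin n)).powersetCard (r + 1)).filter (fun e => S ⊆ e)
      ⊆ (univ : Finset (Fin n)).image (fun v => insert v S) := by
    intro e he
    rw [Finset.mem_filter, Finset.mem_powersetCard] at he
    obtain ⟨⟨_, hc⟩, hs⟩ := he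
    have h1 : (e \ S).card = 1 := by
      rw [Finset.card_sdiff_of_subset hs]; omega
    obtain ⟨v, hv⟩ := Finset.card_eq_one.1 h1
    refine Finset.mem_image.2 ⟨v, Finset.mem_univ _, ?_⟩
    rw [Finset.insert_eq, ← hv, Finset.sdiff_union_of_subset hs]
  refine (Finset.card_le_card this).trans (Finset.card_image_le.trans ?_)
  simp

theorem indep_num_bound (r k : ℕ) (hr : 2 ≤ r) (ε M p l : ℝ) (hε : 0 < ε) (hp : 0 ≤ p) (hl : 0 ≤ l)
    (hM : 2 / ε * (1 + r + r * ε / 2) ≤ M) (hk : (1 + ε) * M ≤ k)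
    (hMp : p * M ^ r = (Nat.factorial (r + 1) : ℝ) * l) :
    (k + 1) * l ≤ p * (k.choose (r + 1) : ℝ) := by
  have hr0 : (0 : ℝ) < r := by exact_mod_cast (by omega : 0 < r)
  have hM' : (1 + r + r * ε / 2) ≤ M * (ε / 2) := by
    have := mul_le_mul_of_nonneg_right hM (by positivity : 0 ≤ ε / 2)
    have e : 2 / ε * (1 + r + r * ε / 2) * (ε / 2) = 1 + r + r * ε / 2 := by field_simp
    linarith
  have hM0 : 0 < M := lt_of_lt_of_le (by positivity) hM
  have hrε : 0 < r * ε := by positivity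
  have hεM : 0 < ε * M := by positivity
  have h1 : (1 + ε / 2) * M ≤ k - r := by nlinarith
  have h2 : (k : ℝ) + 1 ≤ (1 + ε / 2) * (k - r) := by nlinarith
  have hkr : r ≤ k := by
    have : (r : ℝ) ≤ k := by nlinarith
    exact_mod_cast this
  have hd := Nat.pow_sub_le_descFactorial k (r + 1)
  rw [Nat.descFactorial_eq_factorial_mul_choose, Nat.add_sub_add_right] at hd
  have hd' : ((k : ℝ) - r) ^ (r + 1) ≤ (Nat.factorial (r + 1) : ℝ) * (k.choose (r + 1) : ℝ) := by
    rw [← Nat.cast_sub hkr]; exact_mod_cast hd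
  have h3 : (1 + ε / 2) * M ^ r ≤ ((k : ℝ) - r) ^ r := by
    calc (1 + ε / 2) * M ^ r ≤ (1 + ε / 2) ^ r * M ^ r := by
          gcongr
          exact le_self_pow₀ (by linarith) (by omega)
      _ = ((1 + ε / 2) * M) ^ r := by rw [mul_pow]
      _ ≤ _ := by gcongr
  have hkr0 : 0 ≤ (k : ℝ) - r := le_trans (by positivity) h1
  have h4 : ((k : ℝ) + 1) * M ^ r ≤ ((k : ℝ) - r) ^ (r + 1) := by
    calc ((k : ℝ) + 1) * M ^ r ≤ (1 + ε / 2) * (k - r) * M ^ r := by gcongr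
      _ = ((1 + ε / 2) * M ^ r) * (k - r) := by ring
      _ ≤ ((k : ℝ) - r) ^ r * (k - r) := by gcongr
      _ = _ := by ring
  have hF : (0 : ℝ) < Nat.factorial (r + 1) := by exact_mod_cast Nat.factorial_pos _
  have h5 := mul_le_mul_of_nonneg_left (h4.trans hd') hp
  refine le_of_mul_le_mul_left ?_ hF
  calc (Nat.factorial (r + 1) : ℝ) * ((k + 1) * l) = p * ((k + 1) * M ^ r) := by
        linear_combination (-(k + 1 : ℝ)) * hMp
    _ ≤ _ := h5
    _ = _ := by ring

/-- For every `r ≥ 2` and `ε > 0` there exist `C` and `n₀` such that for all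
`n ≥ n₀` and integers `d` with `C·log n ≤ d ≤ n/2` there is an `(r+1)`-graph on `n`
vertices with maximum `r`-degree at most `(1+ε)·d` and
`α(H) ≤ (1+ε)·((r+1)!)^(1/r)·((n/d)·log n)^(1/r)`. -/
theorem stmt6 (r : ℕ) (hr : 2 ≤ r) (ε : ℝ) (hε : 0 < ε) :
    ∃ C : ℝ, ∃ n₀ : ℕ, ∀ n : ℕ, n₀ ≤ n → ∀ d : ℕ,
      C * Real.log n ≤ (d : ℝ) → (d : ℝ) ≤ (n : ℝ) / 2 →
      ∃ H : Finset (Finset (Fin n)),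
        (∀ e ∈ H, e.card = r + 1) ∧
        (∀ S : Finset (Fin n), S.card = r →
          ((H.filter (fun e => S ⊆ e)).card : ℝ) ≤ (1 + ε) * d) ∧
        (indepNum H : ℝ) ≤ (1 + ε) * (Nat.factorial (r + 1) : ℝ) ^ ((1 : ℝ) / r) *
          (((n : ℝ) / d) * Real.log n) ^ ((1 : ℝ) / r) := by
  have hε1 : (0 : ℝ) < 1 + ε := by linarith
  obtain ⟨δ, hδ, hδe⟩ : ∃ δ : ℝ, 0 < δ ∧ ε - (1 + ε) * Real.log (1 + ε) = -δ := by
    refine ⟨(1 + ε) * Real.log (1 + ε) - ε, ?_, by ring⟩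
    have h := Real.log_lt_sub_one_of_pos (inv_pos.2 hε1) (by
      intro h
      rw [inv_eq_one] at h
      linarith)
    rw [Real.log_inv] at h
    have h2 := mul_lt_mul_of_pos_left h hε1
    have h3 : (1 + ε) * ((1 + ε)⁻¹ - 1) = -ε := by field_simp; ring
    linarith
  set M₀ : ℝ := 2 / ε * (1 + r + r * ε / 2) with hM₀
  have hM₀0 : 0 < M₀ := by positivity
  obtain ⟨n₁, hn₁⟩ := Filter.eventually_atTop.1
    ((Real.tendsto_log_atTop.comp tendsto_natCast_atTop_atTop).eventually_ge_atTop (M₀ ^ r))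
  refine ⟨(r + 1) / δ, max n₁ 3, fun n hn d hCd hdn => ?_⟩
  have hn3 : 3 ≤ n := le_trans (le_max_right _ _) hn
  have hlog : M₀ ^ r ≤ Real.log n := hn₁ n (le_trans (le_max_left _ _) hn)
  have hn3' : (3 : ℝ) ≤ n := by exact_mod_cast hn3
  have hn0 : (0 : ℝ) < n := by linarith
  have hl0 : 0 < Real.log n := Real.log_pos (by linarith)
  have hd0 : (0 : ℝ) < d := lt_of_lt_of_le (by positivity) hCd
  have hδd : (r + 1) * Real.log n ≤ δ * d := by
    have := mul_le_mul_of_nonneg_left hCd hδ.le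
    have e : δ * ((r + 1) / δ * Real.log n) = (r + 1) * Real.log n := by field_simp
    linarith
  set p : ℝ := d / n with hp
  have hp0 : 0 < p := by positivity
  have hp1 : p ≤ 1 := by
    rw [hp, div_le_one hn0]; linarith
  have hpn : p * n = d := by rw [hp]; field_simp
  have hr0 : (r : ℝ) ≠ 0 := by exact_mod_cast (by omega : r ≠ 0)
  set M : ℝ := (Nat.factorial (r + 1) : ℝ) ^ ((1 : ℝ) / r) *
          (((n : ℝ) / d) * Real.log n) ^ ((1 : ℝ) / r) with hM
  have hM0 : 0 ≤ M := by positivity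
  have hMr : M ^ r = (Nat.factorial (r + 1) : ℝ) * ((n : ℝ) / d * Real.log n) := by
    rw [hM, mul_pow, one_div, Real.rpow_inv_natCast_pow (by positivity) (by omega),
      Real.rpow_inv_natCast_pow (by positivity) (by omega)]
  have hF1 : (1 : ℝ) ≤ Nat.factorial (r + 1) := by exact_mod_cast Nat.factorial_pos _
  have hMM : M₀ ≤ M := by
    refine le_of_pow_le_pow_left₀ (by omega : r ≠ 0) hM0 (hlog.trans ?_)
    rw [hMr]
    have hnd : 1 ≤ (n : ℝ) / d := by rw [one_le_div hd0]; linarith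
    have : Real.log n ≤ (n : ℝ) / d * Real.log n := le_mul_of_one_le_left hl0.le hnd
    exact this.trans (le_mul_of_one_le_left (by positivity) hF1)
  set k : ℕ := ⌊(1 + ε) * M⌋₊ + 1 with hk
  have hkM : (1 + ε) * M < k := by
    rw [hk]; push_cast; exact Nat.lt_floor_add_one _
  have hch := indep_num_bound r k hr ε M p (Real.log n) hε hp0.le hl0.le hMM hkM.le (by
    rw [hMr, hp]; field_simp)
  have hnexp : ∀ m : ℕ, (n : ℝ) ^ m = Real.exp (m * Real.log n) := by
    intro m
    rw [← Real.log_pow, Real.exp_log (by positivity)]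
  have hcard : ∀ m : ℕ, (((univ : Finset (Fin n)).powersetCard m).card : ℝ)
      ≤ Real.exp (m * Real.log n) := by
    intro m
    rw [← hnexp, Finset.card_powersetCard, Finset.card_univ, Fintype.card_fin]
    exact_mod_cast Nat.choose_le_pow n m
  have hinv : Real.exp (-Real.log n) ≤ 1 / 3 := by
    rw [Real.exp_neg, Real.exp_log hn0, ← one_div]
    exact one_div_le_one_div_of_le (by norm_num) hn3'
  obtain ⟨H, hHE, hHS, hHZ⟩ := exists_good_s6 ((univ : Finset (Fin n)).powersetCard (r + 1)) p (1 + ε)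
    ((1 + ε) * d) hp0.le hp1 (by linarith) ((univ : Finset (Fin n)).powersetCard r)
    ((univ : Finset (Fin n)).powersetCard k)
    (fun S => ((univ : Finset (Fin n)).powersetCard (r + 1)).filter (fun e => S ⊆ e))
    (fun Z => Z.powersetCard (r + 1))
    (fun S _ => Finset.filter_subset _ _)
    (fun Z _ => Finset.powersetCard_mono (Finset.subset_univ _)) (by
      have b1 : ∀ S ∈ (univ : Finset (Fin n)).powersetCard r,
          (1 - p + p * (1 + ε)) ^
            (((univ : Finset (Fin n)).powersetCard (r + 1)).filter (fun e => S ⊆ e)).card *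
            Real.exp (-((1 + ε) * d * Real.log (1 + ε))) ≤ Real.exp (-((r + 1) * Real.log n)) := by
        intro S hS
        have hSc := card_link_le S (Finset.mem_powersetCard.1 hS).2
        have hpe : 0 < p * ε := by positivity
        calc _ ≤ (1 - p + p * (1 + ε)) ^ n * Real.exp (-((1 + ε) * d * Real.log (1 + ε))) := by
              gcongr
              · linarith
          _ ≤ (Real.exp (p * ε)) ^ n * Real.exp (-((1 + ε) * d * Real.log (1 + ε))) := by
              have := Real.add_one_le_exp (p * ε)
              gcongr
              · linarith
          _ = Real.exp (-(δ * d)) := by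
              rw [← Real.exp_nat_mul, ← Real.exp_add]
              congr 1
              linear_combination ε * hpn + d * hδe
          _ ≤ _ := Real.exp_le_exp.2 (by linarith)
      have b2 : ∀ Z ∈ (univ : Finset (Fin n)).powersetCard k,
          (1 - p) ^ (Z.powersetCard (r + 1)).card ≤ Real.exp (-((k + 1) * Real.log n)) := by
        intro Z hZ
        rw [Finset.card_powersetCard, (Finset.mem_powersetCard.1 hZ).2]
        calc _ ≤ (Real.exp (-p)) ^ (k.choose (r + 1)) := by
              have := Real.add_one_le_exp (-p)
              gcongr
              · linarith
          _ = Real.exp (-(p * (k.choose (r + 1) : ℝ))) := by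
              rw [← Real.exp_nat_mul]; congr 1; ring
          _ ≤ _ := Real.exp_le_exp.2 (by linarith)
      have s1 := Finset.sum_le_sum b1
      have s2 := Finset.sum_le_sum b2
      rw [Finset.sum_const, nsmul_eq_mul] at s1 s2
      have c1 := mul_le_mul_of_nonneg_right (hcard r)
        (Real.exp_nonneg (-((r + 1) * Real.log n)))
      have c2 := mul_le_mul_of_nonneg_right (hcard k)
        (Real.exp_nonneg (-((k + 1) * Real.log n)))
      rw [← Real.exp_add] at c1 c2
      have e1 : (r : ℝ) * Real.log n + -((r + 1) * Real.log n) = -Real.log n := by ring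
      have e2 : (k : ℝ) * Real.log n + -((k + 1) * Real.log n) = -Real.log n := by ring
      rw [e1] at c1
      rw [e2] at c2
      linarith)
  refine ⟨H, fun e he => (Finset.mem_powersetCard.1 (hHE he)).2, fun S hS => ?_, ?_⟩
  · have h := hHS S (Finset.mem_powersetCard.2 ⟨Finset.subset_univ _, hS⟩)
    refine le_trans ?_ h
    have : H.filter (fun e => S ⊆ e) ⊆
        H ∩ ((univ : Finset (Fin n)).powersetCard (r + 1)).filter (fun e => S ⊆ e) := by
      intro e he
      rw [Finset.mem_filter] at he
      exact Finset.mem_inter.2 ⟨he.1, Finset.mem_filter.2 ⟨hHE he.1, he.2⟩⟩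
    exact_mod_cast Finset.card_le_card this
  · rw [mul_assoc, ← hM]
    have : indepNum H ≤ ⌊(1 + ε) * M⌋₊ := by
      unfold indepNum
      refine Finset.sup_le fun Z hZ => ?_
      by_contra hlt
      have hkZ : k ≤ Z.card := by omega
      obtain ⟨Y, hYZ, hYc⟩ := Finset.exists_subset_card_eq hkZ
      obtain ⟨e, he⟩ := hHZ Y (Finset.mem_powersetCard.2 ⟨Finset.subset_univ _, hYc⟩)
      rw [Finset.mem_inter, Finset.mem_powersetCard] at he
      exact (Finset.mem_filter.1 hZ).2 e he.1 (he.2.1.trans hYZ)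
    exact (Nat.le_floor_iff (by positivity)).1 this
end
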